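/- Let K ⊆ L be number fields with L a finite extension of K, let f ∈ L[x] be a polynomial, and let a ∈ L. Then the sequence (deg_K f^{(n)}(a))_{n≥0} is virtually periodic, where f^{(n)} denotes the n-th iterate of f (so f^{(0)}(a) = a and f^{(n+1)}(a) = f(f^{(n)}(a))) and deg_K(b) = [K(b) : K]. -/

import Mathlib

/-!
The degree `[K(xₙ) : K]` of a point `xₙ` of the orbit depends only on the set of automorphisms `σ` of a
Galois closure `N` over `ℚ` that fix `xₙ`. So it suffices to show, for an infinite orbit, that the set
`S_σ` of times `n` with `σ xₙ = xₙ` is eventually periodic. If `S_σ` is infinite, it is enough to find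
`k > 0` with `n` and `n + k` both in `S_σ` for infinitely many `n`: then the `k`-th iterates of `f` and of
its conjugate `f^σ` agree at infinitely many points, hence are equal, and `S_σ + k ⊆ S_σ`
(`fixed_times_eventually_periodic`).

Such a `k` is found by working at a well-chosen finite place.

* Étale case (`PadicLike.etale_case`). If `f'` and `(f^σ)'` are eventually units along the orbit and its
  conjugate, both are `p`-adic analytic along arithmetic progressions, and the Skolem–Mahler–Lech
  argument applies. This settles degree one.
* Local dichotomy (`PadicLike.local_dichotomy`). At a place stabilized by `σ` modulo which the orbit
  avoids the periodic critical points of `f`, either such a `k` exists, or some iterates `f^r` and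
  `(f^σ)^r` have a common fixed point `z` with nonzero multipliers.
* Common fixed point (`common_fixed_case`). Heights show that the orbit approaches `z` at some finite
  place outside any given finite set (`exists_place_near_fixed`): otherwise the whole height of
  `1 / (xₙ - z)`, which at least doubles at each step, would be carried by finitely many places, at each
  of which a fixed point with nonzero multiplier allows only bounded change. Near `z` the multipliers are
  units, so the étale case applies.

It remains to find a place as in the second item (`exists_avoiding_place`). It comes from the theorem of
Frobenius that every automorphism is a power of a Frobenius element at infinitely many places
(`exists_frobenius_generator`), which is deduced from the pole of the Dedekind zeta functions at `1`
through counting primes of degree one. The theorem is used twice. In a field containing sufficiently many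
iterated preimages of the critical cycles, it gives a place `Q` with a Frobenius element `τ`, a power of
which extends `σ`, and then a second place `P` stabilized by `τ`. An encounter of the orbit with a
critical cycle modulo `P` would lift to an iterated preimage fixed by a power of `τ`, hence with small
residue field at `Q`; the pigeonhole principle at `Q` excludes this (`avoid_of_frobenius`).
-/

open Polynomial NumberField IsDedekindDomain

set_option linter.unusedSectionVars false

/-! ### p-adic interpolation and the étale case -/

/-- An infinite set of natural numbers meets some progression `m' + r ℕ`, `m' ≥ m`, infinitely often. -/
lemma exists_infinite_class {S : Set ℕ} (hS : S.Infinite) (r : ℕ) (hr : 0 < r) (m : ℕ) :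
    ∃ m' ≥ m, {j | m' + r * j ∈ S}.Infinite := by
  by_contra! hcon
  apply hS
  refine ((Set.finite_Iio m).union ((Set.finite_Iio r).biUnion fun i _ =>
    (hcon (m + i) (by omega)).image fun j => m + i + r * j)).subset fun n hn => ?_
  by_cases hnm : n < m
  · exact Or.inl hnm
  · have h1 : m + (n - m) % r + r * ((n - m) / r) = n := by
      have := Nat.mod_add_div (n - m) r
      omega
    right
    simp only [Set.mem_iUnion]
    exact ⟨(n - m) % r, Nat.mod_lt _ hr, (n - m) / r, by simpa [h1] using hn, h1⟩

section PadicInterpolation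

variable {R : Type*} [CommRing R] [IsDomain R] [CharZero R] {p : ℕ}

/-- The properties of a ring of integers of a `p`-adic field that the interpolation argument uses: the
quotients by powers of `p` are finite, the ring is `p`-adically separated, and integers prime to `p`
are invertible. Completeness is not required, so that a localization of a ring of integers
qualifies. -/
structure PadicLike (R : Type*) [CommRing R] (p : ℕ) : Prop where
  prime : p.Prime
  finite_quot : ∀ n : ℕ, Finite (R ⧸ Ideal.span {(p : R) ^ n})
  sep : ∀ x : R, (∀ n : ℕ, (p : R) ^ n ∣ x) → x = 0
  isUnit : ∀ m : ℕ, ¬ p ∣ m → IsUnit (m : R)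

lemma PadicLike.exists_eq_pow_mul_unit (h : PadicLike R p) (d : ℕ) (hd : d ≠ 0) :
    ∃ u : R, IsUnit u ∧ (d : R) = (p : R) ^ (padicValNat p d) * u := by
  have := Fact.mk h.prime
  obtain ⟨m, hm⟩ := pow_padicValNat_dvd (p := p) (n := d)
  refine ⟨(m : R), h.isUnit m ?_, ?_⟩
  · rintro ⟨c, rfl⟩
    apply pow_succ_padicValNat_not_dvd (p := p) hd
    exact ⟨c, by rw [pow_succ]; rw [mul_assoc]; exact hm⟩
  · conv_lhs => rw [hm]
    push_cast; rfl

lemma PadicLike.factorial_dvd (h : PadicLike R p) (i : ℕ) :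
    ((i.factorial : ℕ) : R) ∣ (p : R) ^ i := by
  have := Fact.mk h.prime
  obtain ⟨u, hu, e⟩ := h.exists_eq_pow_mul_unit i.factorial (Nat.factorial_ne_zero i)
  rw [e]
  rw [hu.mul_right_dvd]
  apply pow_dvd_pow
  have h1 := sub_one_mul_padicValNat_factorial (p := p) i
  have h2 := h.prime.two_le
  have : 1 * padicValNat p i.factorial ≤ (p - 1) * padicValNat p i.factorial :=
    Nat.mul_le_mul_right _ (by omega)
  omega

/-- Newton interpolation: a sequence whose `i`-th differences at `0` are divisible by `p ^ (2 * i)` is,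
modulo `p ^ T`, a polynomial in `p * n` with coefficients in `R`. One factor `p ^ i` absorbs `i!`, the
other one turns `n` into `p * n`. -/
lemma PadicLike.exists_poly_approx (h : PadicLike R p) (w : ℕ → R)
    (hw : ∀ i : ℕ, (p : R) ^ (2 * i) ∣ (fwdDiff 1)^[i] w 0) (T : ℕ) :
    ∃ U : R[X], ∀ n : ℕ, (p : R) ^ T ∣ w n - U.eval ((p : R) * n) := by
  choose c hc using hw
  choose q hq using h.factorial_dvd
  refine ⟨∑ i ∈ Finset.range T, C (c i * q i) * ∏ l ∈ Finset.range i, (X - C ((p : R) * l)), ?_⟩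
  have key : ∀ n i : ℕ, (n.choose i : R) * (fwdDiff 1)^[i] w 0 =
      c i * q i * ∏ l ∈ Finset.range i, ((p : R) * n - p * l) := by
    intro n i
    have hf : ((i.factorial : ℕ) : R) ≠ 0 := by exact_mod_cast Nat.factorial_ne_zero i
    apply mul_left_cancel₀ hf
    have h1 : ((i.factorial : ℕ) : R) * (n.choose i : R) = ∏ l ∈ Finset.range i, ((n : R) - l) := by
      rw [← Nat.cast_mul, ← Nat.descFactorial_eq_factorial_mul_choose]
      rw [← descPochhammer_eval_eq_descFactorial, descPochhammer_eval_eq_prod_range]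
    have h2 : ∏ l ∈ Finset.range i, ((p : R) * n - p * l) =
        (p : R) ^ i * ∏ l ∈ Finset.range i, ((n : R) - l) := by
      simp_rw [← mul_sub]
      rw [Finset.prod_mul_distrib]; simp
    rw [← mul_assoc, h1, h2, hc, two_mul, pow_add]
    conv_lhs => rw [hq i]
    ring_nf
    rw [hq i]; ring
  intro n
  have hs := shift_eq_sum_fwdDiff_iter (1 : ℕ) w n 0
  simp only [zero_add, smul_eq_mul, mul_one, nsmul_eq_mul] at hs
  have hs' : w n = ∑ i ∈ Finset.range (T + (n + 1)), (n.choose i : R) * (fwdDiff 1)^[i] w 0 := by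
    rw [hs]
    apply Finset.sum_subset
    · intro x; simp; omega
    · intro x _ hx
      rw [Nat.choose_eq_zero_of_lt (by simpa using hx)]; simp
  rw [hs', eval_finsetSum, Finset.sum_range_add, add_sub_right_comm, ← Finset.sum_sub_distrib]
  rw [Finset.sum_eq_zero, zero_add]
  · refine Finset.dvd_sum fun i _ => Dvd.dvd.mul_left ?_ _
    rw [hc]
    exact Dvd.dvd.mul_right (pow_dvd_pow _ (by omega)) _
  · intro i _
    rw [key]
    simp [eval_prod]

/-- Approximate zeros of a polynomial in `p * n` can be divided out, at the cost of a power `p ^ A` of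
precision depending only on the set of zeros. -/
lemma PadicLike.exists_factor (h : PadicLike R p) (Z : Finset ℕ) :
    ∃ A : ℕ, ∀ (T : ℕ) (U : R[X]), (∀ z ∈ Z, (p : R) ^ (T + A) ∣ U.eval ((p : R) * z)) →
      ∃ Q : R[X], ∀ n : ℕ, (p : R) ^ T ∣
        U.eval ((p : R) * n) - (p : R) ^ Z.card * (∏ z ∈ Z, ((n : R) - z)) * Q.eval ((p : R) * n) := by
  classical
  induction Z using Finset.induction with
  | empty => exact ⟨0, fun T U _ => ⟨U, fun n => by simp⟩⟩
  | insert z0 Z hz0 ih =>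
    obtain ⟨A, hA⟩ := ih
    have hp0 : (p : R) ≠ 0 := by exact_mod_cast h.prime.ne_zero
    set D : ℤ := ∏ z ∈ Z, ((z0 : ℤ) - z) with hD
    have hD0 : D ≠ 0 := by
      rw [hD, Finset.prod_ne_zero_iff]
      intro z hz h0
      apply hz0
      have : z0 = z := by omega
      rwa [this]
    obtain ⟨u, hu, hDu⟩ := h.exists_eq_pow_mul_unit D.natAbs (Int.natAbs_ne_zero.mpr hD0)
    set e := padicValNat p D.natAbs
    have hDR : ∃ u' : R, IsUnit u' ∧ ∏ z ∈ Z, ((z0 : R) - z) = (p : R) ^ e * u' := by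
      have : (∏ z ∈ Z, ((z0 : R) - z)) = (D : R) := by rw [hD]; push_cast; rfl
      rw [this]
      rcases Int.natAbs_eq D with h1 | h1
      · exact ⟨u, hu, by rw [h1, Int.cast_natCast, hDu]⟩
      · exact ⟨-u, hu.neg, by rw [h1, Int.cast_neg, Int.cast_natCast, hDu]; ring⟩
    obtain ⟨u', hu', hDu'⟩ := hDR
    refine ⟨A + (Z.card + e), fun T U hU => ?_⟩
    obtain ⟨Q, hQ⟩ := hA (T + (Z.card + e)) U fun z hz => by
      have := hU z (Finset.mem_insert_of_mem hz)
      rwa [add_assoc, add_comm (Z.card + e) A]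
    have h1 := hQ z0
    have h2 := hU z0 (Finset.mem_insert_self _ _)
    have h3 : (p : R) ^ T ∣ Q.eval ((p : R) * z0) := by
      have h4 := (dvd_sub_right ((pow_dvd_pow _ (by omega)).trans h2)).mp h1
      rw [hDu', pow_add, pow_add] at h4
      have h5 : (p : R) ^ Z.card * (p : R) ^ e * (p : R) ^ T ∣
          (p : R) ^ Z.card * (p : R) ^ e * (u' * Q.eval ((p : R) * z0)) := by
        convert h4 using 1 <;> ring
      have h6 := (mul_dvd_mul_iff_left (mul_ne_zero (pow_ne_zero _ hp0) (pow_ne_zero _ hp0))).mp h5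
      exact (hu'.dvd_mul_left).mp h6
    refine ⟨Q /ₘ (X - C ((p : R) * z0)), fun n => ?_⟩
    have h7 : Q.eval ((p : R) * n) = Q.eval ((p : R) * z0) +
        ((p : R) * n - p * z0) * (Q /ₘ (X - C ((p : R) * z0))).eval ((p : R) * n) := by
      conv_lhs => rw [← modByMonic_add_div Q (X - C ((p : R) * z0)), modByMonic_X_sub_C_eq_C_eval]
      simp
    have h8 := ((pow_dvd_pow (p : R) (Nat.le_add_right T (Z.card + e))).trans (hQ n))
    rw [h7] at h8
    rw [Finset.card_insert_of_notMem hz0, Finset.prod_insert hz0]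
    have h9 := dvd_add h8 (Dvd.dvd.mul_left h3 ((p : R) ^ Z.card * (∏ z ∈ Z, ((n : R) - z))))
    convert h9 using 1
    ring

/-- The Skolem–Mahler–Lech principle: a sequence with rapidly divisible differences and infinitely
many zeros vanishes identically. Each zero that is divided out contributes a factor `p`. -/
lemma PadicLike.eq_zero_of_infinite_zeros (h : PadicLike R p) (w : ℕ → R)
    (hw : ∀ i : ℕ, (p : R) ^ (2 * i) ∣ (fwdDiff 1)^[i] w 0)
    (hinf : {n | w n = 0}.Infinite) (n : ℕ) : w n = 0 := by
  apply h.sep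
  intro k
  obtain ⟨Z, hZ, hcard⟩ := hinf.exists_subset_card_eq k
  obtain ⟨A, hA⟩ := h.exists_factor Z
  obtain ⟨U, hU⟩ := h.exists_poly_approx w hw (k + A)
  obtain ⟨Q, hQ⟩ := hA k U fun z hz => by
    have h0 : w z = 0 := hZ hz
    have := hU z
    rwa [h0, zero_sub, dvd_neg] at this
  have h1 := hQ n
  rw [hcard, mul_assoc] at h1
  have h2 := (dvd_sub_left (Dvd.intro _ rfl)).mp h1
  have h3 := (pow_dvd_pow (p : R) (Nat.le_add_right k A)).trans (hU n)
  exact (dvd_sub_left h2).mp h3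

/-- If `F` is congruent to the identity modulo `p ^ 4` to first order at `s 0`, the orbit of `s 0` has
`i`-th differences divisible by `p ^ (2 * i)`: in the coordinate `u` with `s = s 0 + p ^ 2 * u`, the map
becomes `u ↦ u + p ^ 2 * ψ u`. -/
lemma fwdDiff_orbit_dvd {p : ℕ} (F : R[X]) (s : ℕ → R) (hs : ∀ j, s (j + 1) = F.eval (s j))
    (h0 : (p : R) ^ 4 ∣ F.eval (s 0) - s 0) (h1 : (p : R) ^ 4 ∣ F.derivative.eval (s 0) - 1) (i : ℕ) :
    (p : R) ^ (2 * i) ∣ (fwdDiff 1)^[i] s 0 := by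
  obtain ⟨a, ha⟩ := h0
  obtain ⟨b, hb⟩ := h1
  obtain ⟨k, hk⟩ := Polynomial.binomExpansion (F.map C) (C (s 0)) (C ((p : R) ^ 2) * X)
  set ψ : R[X] := C a + C (p : R) ^ 2 * C b * X + k * X ^ 2 with hψ
  have hcomp : ∀ u : R, F.eval (s 0 + (p : R) ^ 2 * u) =
      s 0 + (p : R) ^ 2 * (u + (p : R) ^ 2 * ψ.eval u) := by
    intro u
    have := congrArg (eval u) hk
    rw [eval_map, eval_map, derivative_map, eval_map, ← comp, ← comp, ← comp] at this
    simp only [eval_comp, eval_add, eval_C, eval_mul, eval_X, eval_pow, comp_C] at this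
    rw [this, hψ]
    simp only [eval_add, eval_mul, eval_C, eval_X, eval_pow]
    linear_combination ha + ((p : R) ^ 2 * u) * hb
  obtain ⟨u, hu0, hu⟩ : ∃ u : ℕ → R, u 0 = 0 ∧ ∀ j, u (j + 1) = u j + (p : R) ^ 2 * ψ.eval (u j) :=
    ⟨fun j => (fun v => v + (p : R) ^ 2 * ψ.eval v)^[j] 0, rfl,
      fun j => Function.iterate_succ_apply' _ _ _⟩
  have hsu : ∀ j, s j = s 0 + (p : R) ^ 2 * u j := by
    intro j
    induction j with
    | zero => simp [hu0]
    | succ j ih => rw [hs, ih, hcomp, hu]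
  have key : ∀ i, ∃ h : R[X], ∀ j, (fwdDiff 1)^[i] s j = (p : R) ^ (2 * i) * h.eval (u j) := by
    intro i
    induction i with
    | zero => exact ⟨C (s 0) + C ((p : R) ^ 2) * X, fun j => by simpa using hsu j⟩
    | succ i ih =>
      obtain ⟨h, hh⟩ := ih
      obtain ⟨h', hh'⟩ := Polynomial.sub_dvd_eval_sub (X + C ((p : R) ^ 2) * ψ) X (h.map C)
      refine ⟨ψ * h', fun j => ?_⟩
      have := congrArg (eval (u j)) hh'
      rw [eval_map, eval_map, ← comp, ← comp] at this
      simp only [eval_sub, eval_comp, eval_add, eval_C, eval_mul, eval_X, ← hu] at this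
      rw [Function.iterate_succ_apply', fwdDiff, hh, hh, ← mul_sub, this, hu]
      simp only [eval_mul]
      ring
  obtain ⟨h, hh⟩ := key i
  rw [hh 0]
  exact Dvd.intro _ rfl

/-- Values and, by the chain rule, multipliers of the `r`-th iterate along an orbit. -/
lemma iterate_comp_orbit (f : R[X]) (x : ℕ → R) (hx : ∀ n, x (n + 1) = f.eval (x n)) (r m : ℕ) :
    (f.comp^[r] X).eval (x m) = x (m + r) ∧
    (derivative (f.comp^[r] X)).eval (x m) = ∏ i ∈ Finset.range r, f.derivative.eval (x (m + i)) := by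
  induction r with
  | zero => simp
  | succ r ih =>
    rw [Function.iterate_succ_apply', derivative_comp, eval_comp, eval_mul, eval_comp,
      Finset.prod_range_succ, ih.1, ih.2, ← add_assoc, hx]
    exact ⟨rfl, rfl⟩

/-- An orbit is eventually periodic modulo an ideal of finite index. -/
lemma orbit_recurrence (I : Ideal R) [Finite (R ⧸ I)] (f : R[X]) (x : ℕ → R)
    (hx : ∀ n, x (n + 1) = f.eval (x n)) :
    ∃ r > 0, ∃ m₀, ∀ m ≥ m₀, x (m + r) - x m ∈ I := by
  obtain ⟨i, j, hij, h⟩ := Finite.exists_ne_map_eq_of_infinite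
    (fun n => Ideal.Quotient.mk I (x n))
  wlog hlt : i < j generalizing i j
  · exact this j i hij.symm h.symm (by omega)
  refine ⟨j - i, by omega, i, fun m hm => ?_⟩
  induction m, hm using Nat.le_induction with
  | base =>
    rw [← Ideal.Quotient.eq, show i + (j - i) = j by omega]; exact h.symm
  | succ m hm ih =>
    rw [show m + 1 + (j - i) = m + (j - i) + 1 by omega, hx, hx]
    exact Ideal.mem_of_dvd _ (Polynomial.sub_dvd_eval_sub _ _ f) ih

lemma orbit_recurrence_mul (I : Ideal R) (x : ℕ → R) (r m₀ : ℕ)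
    (h : ∀ m ≥ m₀, x (m + r) - x m ∈ I) (k m : ℕ) (hm : m₀ ≤ m) : x (m + r * k) - x m ∈ I := by
  induction k with
  | zero => simp
  | succ k ih =>
    have := I.add_mem (h (m + r * k) (by omega)) ih
    rw [mul_add, mul_one, ← add_assoc]
    simpa using this

/-- If the derivative is eventually invertible along the orbit, a period modulo `I` can be chosen for
which the multiplier is congruent to `1` as well. -/
lemma orbit_recurrence_unit (I : Ideal R) [Finite (R ⧸ I)] (f : R[X]) (x : ℕ → R)
    (hx : ∀ n, x (n + 1) = f.eval (x n)) (n₀ : ℕ) (hu : ∀ n ≥ n₀, IsUnit (f.derivative.eval (x n))) :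
    ∃ r > 0, ∃ m₀, ∀ k, ∀ m ≥ m₀, x (m + r * k) - x m ∈ I ∧
      (∏ i ∈ Finset.range (r * k), f.derivative.eval (x (m + i))) - 1 ∈ I := by
  obtain ⟨r, hr, m₀, h⟩ := orbit_recurrence I f x hx
  have hper := orbit_recurrence_mul I x r m₀ h
  let q := Ideal.Quotient.mk I
  have hprod : ∀ m ≥ m₀, ∀ k, q (∏ i ∈ Finset.range (r * k), f.derivative.eval (x (m + i))) =
      q (∏ i ∈ Finset.range r, f.derivative.eval (x (m + i))) ^ k := by
    intro m hm k
    induction k with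
    | zero => simp
    | succ k ih =>
      rw [mul_add, mul_one, Finset.prod_range_add, map_mul, ih, pow_succ]
      congr 1
      rw [map_prod, map_prod]
      refine Finset.prod_congr rfl fun i _ => ?_
      rw [Ideal.Quotient.eq]
      refine Ideal.mem_of_dvd _ (Polynomial.sub_dvd_eval_sub _ _ _) ?_
      have := hper k (m + i) (by omega)
      rwa [show m + (r * k + i) = m + i + r * k by omega]
  set N := Nat.card (R ⧸ I)ˣ with hN
  have hNpos : 0 < N := Nat.card_pos
  refine ⟨r * N, Nat.mul_pos hr hNpos, max m₀ n₀, fun k m hm => ⟨?_, ?_⟩⟩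
  · rw [mul_assoc]; exact hper _ _ (le_of_max_le_left hm)
  · rw [← Ideal.Quotient.eq, mul_assoc, map_one]
    refine (hprod m (le_of_max_le_left hm) _).trans ?_
    have hun : IsUnit (q (∏ i ∈ Finset.range r, f.derivative.eval (x (m + i)))) := by
      apply IsUnit.map
      rw [IsUnit.prod_iff]
      intro i _
      exact hu _ (by have := le_of_max_le_right hm; omega)
    obtain ⟨v, hv⟩ := hun
    rw [← hv, pow_mul, ← Units.val_pow_eq_pow_val, hN, pow_card_eq_one']
    simp

/-- The étale case: if the derivatives are eventually units along two orbits that agree infinitely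
often, the agreement recurs at a fixed distance. On a suitable arithmetic progression both orbits are
`p`-adically interpolated, so infinitely many coincidences force all of them. -/
theorem PadicLike.etale_case (h : PadicLike R p) (f g : R[X]) (x y : ℕ → R)
    (hx : ∀ n, x (n + 1) = f.eval (x n)) (hy : ∀ n, y (n + 1) = g.eval (y n)) (n₀ : ℕ)
    (hf : ∀ n ≥ n₀, IsUnit (f.derivative.eval (x n)))
    (hg : ∀ n ≥ n₀, IsUnit (g.derivative.eval (y n)))
    (hS : {n | x n = y n}.Infinite) :
    ∃ k > 0, {n | x n = y n ∧ x (n + k) = y (n + k)}.Infinite := by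
  let I : Ideal R := Ideal.span {(p : R) ^ 4}
  have := h.finite_quot 4
  obtain ⟨r₁, hr₁, m₁, h₁⟩ := orbit_recurrence_unit I f x hx n₀ hf
  obtain ⟨r₂, hr₂, m₂, h₂⟩ := orbit_recurrence_unit I g y hy n₀ hg
  set r := r₁ * r₂ with hr
  have hrpos : 0 < r := Nat.mul_pos hr₁ hr₂
  obtain ⟨m, hm, hinf⟩ := exists_infinite_class hS r hrpos (max m₁ m₂)
  have hm₁ : m₁ ≤ m := le_of_max_le_left hm
  have hm₂ : m₂ ≤ m := le_of_max_le_right hm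
  have hfx := iterate_comp_orbit f x hx r
  have hgy := iterate_comp_orbit g y hy r
  have hdx := fwdDiff_orbit_dvd (p := p) (f.comp^[r] X) (fun j => x (m + r * j))
    (fun j => by rw [(hfx _).1]; congr 1; ring)
    (by
      rw [(hfx _).1, mul_zero, add_zero, ← Ideal.mem_span_singleton]
      exact (h₁ r₂ m hm₁).1)
    (by
      rw [(hfx _).2, mul_zero, add_zero, ← Ideal.mem_span_singleton]
      exact (h₁ r₂ m hm₁).2)
  have hdy := fwdDiff_orbit_dvd (p := p) (g.comp^[r] X) (fun j => y (m + r * j))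
    (fun j => by rw [(hgy _).1]; congr 1; ring)
    (by
      rw [(hgy _).1, mul_zero, add_zero, ← Ideal.mem_span_singleton, hr, mul_comm r₁]
      exact (h₂ r₁ m hm₂).1)
    (by
      rw [(hgy _).2, mul_zero, add_zero, ← Ideal.mem_span_singleton, hr, mul_comm r₁]
      exact (h₂ r₁ m hm₂).2)
  have hzero := h.eq_zero_of_infinite_zeros
    ((fun j => x (m + r * j)) - fun j => y (m + r * j))
    (fun i => by
      rw [← fwdDiff_aux.coe_fwdDiffₗ_pow, map_sub, fwdDiff_aux.coe_fwdDiffₗ_pow]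
      exact dvd_sub (hdx i) (hdy i))
    (hinf.mono fun j hj => by
      have : x (m + r * j) = y (m + r * j) := hj
      simp [this])
  have hall : ∀ j, x (m + r * j) = y (m + r * j) := fun j => sub_eq_zero.mp (hzero j)
  refine ⟨r, hrpos, ?_⟩
  refine Set.infinite_of_injective_forall_mem (f := fun j => m + r * j) ?_ fun j => ?_
  · intro a b hab
    have : r * a = r * b := by simpa using hab
    exact Nat.eq_of_mul_eq_mul_left hrpos this
  · exact ⟨hall j, by have := hall (j + 1); rwa [mul_add, mul_one, ← add_assoc] at this⟩

end PadicInterpolation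

/-! ### Local analysis at a place meeting the critical locus -/

section LocalAnalysis

/-- The Nullstellensatz in one variable with denominators cleared: if `D` vanishes at the common zeros
of `P` and `Q`, then a multiple `q * D ^ M` with `q ≠ 0` lies in the ideal `(P, Q)`. -/
lemma exists_pow_mem_span_of_roots {R K A : Type*} [CommRing R] [IsDomain R] [Field K] [Algebra R K]
    [IsFractionRing R K] [Field A] [Algebra K A] [IsAlgClosed A] (P Q D : R[X]) (hP : P ≠ 0)
    (h : ∀ z : A, (P.map (algebraMap R K)).aeval z = 0 → (Q.map (algebraMap R K)).aeval z = 0 →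
      (D.map (algebraMap R K)).aeval z = 0) :
    ∃ (q : R) (M : ℕ) (U V : R[X]), q ≠ 0 ∧ C q * D ^ M = U * P + V * Q := by
  classical
  set φ := algebraMap R K
  have hφ : Function.Injective φ := IsFractionRing.injective R K
  have hP' : P.map φ ≠ 0 := (Polynomial.map_ne_zero_iff hφ).mpr hP
  set g := EuclideanDomain.gcd (P.map φ) (Q.map φ) with hg
  have hg0 : g ≠ 0 := by
    rw [hg, Ne, EuclideanDomain.gcd_eq_zero_iff]; tauto
  have hroots : ∀ z : A, g.aeval z = 0 → (D.map φ).aeval z = 0 := by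
    intro z hz
    apply h z
    · obtain ⟨c, hc⟩ := EuclideanDomain.gcd_dvd_left (P.map φ) (Q.map φ)
      rw [hc, map_mul, ← hg, hz, zero_mul]
    · obtain ⟨c, hc⟩ := EuclideanDomain.gcd_dvd_right (P.map φ) (Q.map φ)
      rw [hc, map_mul, ← hg, hz, zero_mul]
  obtain ⟨M, hM⟩ : ∃ M, g ∣ (D.map φ) ^ M := by
    by_cases hD : D = 0
    · exact ⟨1, by simp [hD]⟩
    have hD' : D.map φ ≠ 0 := (Polynomial.map_ne_zero_iff hφ).mpr hD
    refine ⟨g.natDegree, ?_⟩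
    rw [← Polynomial.map_dvd_map' (algebraMap K A), Polynomial.map_pow]
    have hgA : g.map (algebraMap K A) ≠ 0 :=
      (Polynomial.map_ne_zero_iff (algebraMap K A).injective).mpr hg0
    have hDA : (D.map φ).map (algebraMap K A) ≠ 0 :=
      (Polynomial.map_ne_zero_iff (algebraMap K A).injective).mpr hD'
    rw [IsAlgClosed.dvd_iff_roots_le_roots hgA (pow_ne_zero _ hDA), Multiset.le_iff_count]
    intro z
    by_cases hz : z ∈ (g.map (algebraMap K A)).roots
    · have hz' : z ∈ ((D.map φ).map (algebraMap K A)).roots := by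
        rw [mem_roots hDA, IsRoot, eval_map_algebraMap]
        rw [mem_roots hgA, IsRoot, eval_map_algebraMap] at hz
        exact hroots z hz
      rw [roots_pow, Multiset.count_nsmul]
      calc _ ≤ (g.map (algebraMap K A)).roots.card := Multiset.count_le_card _ _
        _ ≤ g.natDegree := by
          simpa using card_roots' (g.map (algebraMap K A))
        _ ≤ _ := Nat.le_mul_of_pos_right _ (Multiset.count_pos.mpr hz')
    · rw [Multiset.count_eq_zero_of_notMem hz]
      exact Nat.zero_le _
  obtain ⟨W, hW⟩ := hM
  have hbez := EuclideanDomain.gcd_eq_gcd_ab (P.map φ) (Q.map φ)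
  rw [← hg] at hbez
  set a := EuclideanDomain.gcdA (P.map φ) (Q.map φ)
  set b := EuclideanDomain.gcdB (P.map φ) (Q.map φ)
  obtain ⟨q₁, hq₁, h1⟩ := IsLocalization.integerNormalization_spec (nonZeroDivisors R) (a * W)
  obtain ⟨q₂, hq₂, h2⟩ := IsLocalization.integerNormalization_spec (nonZeroDivisors R) (b * W)
  refine ⟨q₁ * q₂, M, C q₂ * IsLocalization.integerNormalization (nonZeroDivisors R) (a * W),
    C q₁ * IsLocalization.integerNormalization (nonZeroDivisors R) (b * W),
    mul_ne_zero (nonZeroDivisors.ne_zero hq₁) (nonZeroDivisors.ne_zero hq₂), ?_⟩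
  apply Polynomial.map_injective φ hφ
  simp only [Polynomial.map_mul, Polynomial.map_add, Polynomial.map_pow, Polynomial.map_C, hW]
  rw [h1, h2, hbez, Algebra.smul_def, Algebra.smul_def]
  simp only [Polynomial.algebraMap_apply, ← show φ = algebraMap R K from rfl, map_mul]
  ring

/-- Eventual boundedness of the `ϖ`-adic valuation along a sequence. -/
def BddVal {R : Type*} [CommRing R] (ϖ : R) (s : ℕ → R) : Prop :=
  ∃ B M : ℕ, ∀ m ≥ M, ¬ ϖ ^ B ∣ s m

section BddVal

variable {R : Type*} [CommRing R] [IsDomain R] {ϖ : R}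

lemma BddVal.mul (hϖ : Prime ϖ) {s t : ℕ → R} (hs : BddVal ϖ s) (ht : BddVal ϖ t) :
    BddVal ϖ (fun m => s m * t m) := by
  obtain ⟨B, M, h⟩ := hs
  obtain ⟨B', M', h'⟩ := ht
  refine ⟨B + B', M + M', fun m hm => ?_⟩
  have h1 := emultiplicity_lt_iff_not_dvd.mpr (h m (by omega))
  have h2 := emultiplicity_lt_iff_not_dvd.mpr (h' m (by omega))
  rw [← emultiplicity_lt_iff_not_dvd, emultiplicity_mul hϖ]
  push_cast
  exact ENat.add_lt_add h1 h2

lemma BddVal.const (hsep : ∀ x : R, x ≠ 0 → ∃ T, ¬ ϖ ^ T ∣ x) {c : R} (hc : c ≠ 0) :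
    BddVal ϖ (fun _ => c) := by
  obtain ⟨T, hT⟩ := hsep c hc
  exact ⟨T, 0, fun _ _ => hT⟩

lemma BddVal.pow (hϖ : Prime ϖ) {s : ℕ → R} (hs : BddVal ϖ s) (k : ℕ) :
    BddVal ϖ (fun m => s m ^ k) := by
  induction k with
  | zero => exact ⟨1, 0, fun m _ h => hϖ.not_isUnit (isUnit_of_dvd_one (by simpa using h))⟩
  | succ k ih => simpa only [pow_succ] using ih.mul hϖ hs

lemma BddVal.multiset_prod (hϖ : Prime ϖ) {x : ℕ → R} (Cr : Multiset R)
    (h : ∀ c ∈ Cr, BddVal ϖ (fun m => x m - c)) :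
    BddVal ϖ (fun m => (Cr.map fun c => x m - c).prod) := by
  induction Cr using Multiset.induction_on with
  | empty => exact ⟨1, 0, fun m _ h => hϖ.not_isUnit (isUnit_of_dvd_one (by simpa using h))⟩
  | cons a s ih =>
    simp only [Multiset.map_cons, Multiset.prod_cons]
    exact (h a (Multiset.mem_cons_self a s)).mul hϖ
      (ih fun c hc => h c (Multiset.mem_cons_of_mem hc))

lemma BddVal.prod_range (hϖ : Prime ϖ) {s : ℕ → R} (hs : BddVal ϖ s) (r : ℕ) :
    BddVal ϖ (fun m => ∏ i ∈ Finset.range r, s (m + i)) := by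
  induction r with
  | zero => simpa using BddVal.pow hϖ hs 0
  | succ r ih =>
    simp only [Finset.prod_range_succ]
    refine ih.mul hϖ ?_
    obtain ⟨B, M, h⟩ := hs
    exact ⟨B, M, fun m hm => h _ (by omega)⟩

lemma BddVal.map (σ : R ≃+* R) (hσ : ∀ k, ∀ x : R, ϖ ^ k ∣ σ x → ϖ ^ k ∣ x) {s : ℕ → R}
    (hs : BddVal ϖ s) : BddVal ϖ (fun m => σ (s m)) := by
  obtain ⟨B, M, h⟩ := hs
  exact ⟨B, M, fun m hm hd => h m hm (hσ _ _ hd)⟩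

end BddVal

/-- The differences `x (m + r) - x m` tend to zero `ϖ`-adically when the orbit is eventually
`r`-periodic modulo `ϖ` and meets the critical locus modulo `ϖ` infinitely often. -/
lemma shift_sub_tendsto {R : Type*} [CommRing R] {ϖ : R} (f : R[X]) (x : ℕ → R)
    (hx : ∀ n, x (n + 1) = f.eval (x n)) (r m₀ : ℕ) (hrec : ∀ m ≥ m₀, ϖ ∣ x (m + r) - x m)
    (hcrit : ∀ N, ∃ n ≥ N, ϖ ∣ f.derivative.eval (x n)) (T : ℕ) :
    ∃ M, ∀ m ≥ M, ϖ ^ T ∣ x (m + r) - x m := by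
  have step : ∀ m, ∃ k, x (m + 1 + r) - x (m + 1) =
      (x (m + r) - x m) * (f.derivative.eval (x m) + k * (x (m + r) - x m)) := by
    intro m
    obtain ⟨k, hk⟩ := Polynomial.binomExpansion f (x m) (x (m + r) - x m)
    refine ⟨k, ?_⟩
    rw [show m + 1 + r = m + r + 1 by ring, hx, hx]
    rw [add_sub_cancel] at hk
    rw [hk]; ring
  induction T with
  | zero => exact ⟨0, by simp⟩
  | succ T ih =>
    obtain ⟨M, hM⟩ := ih
    obtain ⟨n, hn, hd⟩ := hcrit (M + m₀)
    refine ⟨n + 1, fun m hm => ?_⟩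
    induction m, hm using Nat.le_induction with
    | base =>
      obtain ⟨k, hk⟩ := step n
      rw [hk, pow_succ]
      exact mul_dvd_mul (hM n (by omega))
        (dvd_add hd (Dvd.dvd.mul_left (hrec n (by omega)) _))
    | succ m hm ih =>
      obtain ⟨k, hk⟩ := step m
      rw [hk]
      exact Dvd.dvd.mul_right ih _

lemma iterate_comp_X_eval {R : Type*} [CommRing R] (f : R[X]) (r : ℕ) (t : R) :
    (f.comp^[r] X).eval t = (fun b => f.eval b)^[r] t := by
  induction r with
  | zero => simp
  | succ r ih => rw [Function.iterate_succ_apply', Function.iterate_succ_apply', eval_comp, ih]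

lemma map_iterate_comp_X {R R' : Type*} [CommRing R] [CommRing R'] (φ : R →+* R') (f : R[X])
    (r : ℕ) : (f.comp^[r] X).map φ = (f.map φ).comp^[r] X := by
  induction r with
  | zero => simp
  | succ r ih =>
    rw [Function.iterate_succ_apply', Function.iterate_succ_apply', Polynomial.map_comp, ih]

/-- Let an orbit avoid the periodic critical points modulo `ϖ` and agree infinitely often with its
conjugate under `σ`. Either the agreement recurs at a fixed distance, or an iterate `F = f^r` and its
conjugate `G` have a common fixed point with nonzero multipliers.

If the derivative is eventually a unit along the orbit, the étale case applies. Otherwise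
`x (n + r) - x n` tends to zero, while the valuation of the derivative stays bounded: periodic critical
points are avoided by assumption, and critical points that are not periodic are not limits of
`r`-shifted pairs. If there were no common fixed point of the required kind, the Nullstellensatz would
put some `q * (F' * G') ^ M` in the ideal `(F - X, G - X)`, which is impossible at `x n` for a large `n`
with `σ (x n) = x n`. -/
theorem PadicLike.local_dichotomy {R A : Type*} [CommRing R] [IsDomain R] [CharZero R] {p : ℕ}
    (h : PadicLike R p) [Field A] [IsAlgClosed A] [Algebra R A] [FaithfulSMul R A]
    {ϖ : R} (hϖ : Prime ϖ) (hunit : ∀ x : R, ¬ ϖ ∣ x → IsUnit x)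
    (hsep : ∀ x : R, x ≠ 0 → ∃ T, ¬ ϖ ^ T ∣ x) (hfin : Finite (R ⧸ Ideal.span {ϖ}))
    (f : R[X]) (hdeg : 2 ≤ f.natDegree) (x : ℕ → R) (hx : ∀ n, x (n + 1) = f.eval (x n))
    (σ : R ≃+* R) (hS : {n | x n = σ (x n)}.Infinite)
    (Cr : Multiset R) (u : R) (hu : u ≠ 0)
    (hder : derivative f = C u * (Cr.map fun c => X - C c).prod)
    (havoid : ∀ c ∈ Cr, (∃ k > 0, (fun t => f.eval t)^[k] c = c) → ∀ n, ¬ ϖ ∣ x n - c) :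
    (∃ k > 0, {n | x n = σ (x n) ∧ x (n + k) = σ (x (n + k))}.Infinite) ∨
    ∃ r > 0, ∃ z : A, (f.comp^[r] X).aeval z = z ∧
      ((f.map (σ : R →+* R)).comp^[r] X).aeval z = z ∧
      (derivative (f.comp^[r] X)).aeval z ≠ 0 ∧
      (derivative ((f.map (σ : R →+* R)).comp^[r] X)).aeval z ≠ 0 := by
  set g := f.map (σ : R →+* R) with hg
  have hy : ∀ n, σ (x (n + 1)) = g.eval (σ (x n)) := by
    intro n
    rw [hx, hg]
    exact (Polynomial.eval_map_apply (σ : R →+* R) (x n)).symm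
  have hgder : ∀ n, g.derivative.eval (σ (x n)) = σ (f.derivative.eval (x n)) := by
    intro n
    rw [hg, derivative_map]
    exact (Polynomial.eval_map_apply (σ : R →+* R) (x n))
  by_cases hcase : ∃ n₀, ∀ n ≥ n₀, IsUnit (f.derivative.eval (x n))
  · obtain ⟨n₀, hn₀⟩ := hcase
    left
    exact h.etale_case f g x (fun n => σ (x n)) hx hy n₀ hn₀
      (fun n hn => by rw [hgder]; exact (hn₀ n hn).map σ) hS
  have hcrit : ∀ N, ∃ n ≥ N, ϖ ∣ f.derivative.eval (x n) := by
    intro N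
    by_contra! hcon
    exact hcase ⟨N, fun n hn => hunit _ (hcon n hn)⟩
  right
  obtain ⟨r, hr, m₀, hrec⟩ := orbit_recurrence (Ideal.span {ϖ}) f x hx
  simp only [Ideal.mem_span_singleton] at hrec
  have hd := shift_sub_tendsto f x hx r m₀ hrec hcrit
  have hσ1 : ∀ τ : R ≃+* R, ϖ ∣ τ ϖ := by
    intro τ
    by_contra hcon
    apply hϖ.not_isUnit
    exact (MulEquiv.isUnit_map τ).mp (hunit _ hcon)
  have hσ : ∀ τ : R ≃+* R, ∀ k, ∀ x : R, ϖ ^ k ∣ x → ϖ ^ k ∣ τ x := by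
    intro τ k x hd
    have := map_dvd τ hd
    rw [map_pow] at this
    exact (pow_dvd_pow_of_dvd (hσ1 τ) k).trans this
  have hσ' : ∀ k, ∀ x : R, ϖ ^ k ∣ σ x → ϖ ^ k ∣ x := by
    intro k x hd
    simpa using hσ σ.symm k _ hd
  refine ⟨r, hr, ?_⟩
  set F := f.comp^[r] X with hF
  set G := g.comp^[r] X with hG
  have hb1 : BddVal ϖ (fun m => f.derivative.eval (x m)) := by
    have : BddVal ϖ (fun m => (Cr.map fun c => x m - c).prod) := by
      apply BddVal.multiset_prod hϖ
      intro c hc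
      by_cases hper : ∃ k > 0, (fun t => f.eval t)^[k] c = c
      · exact ⟨1, 0, fun m _ => by simpa using havoid c hc hper m⟩
      · push Not at hper
        obtain ⟨T, hT⟩ := hsep (F.eval c - c) (by
          rw [hF, iterate_comp_X_eval]; exact sub_ne_zero.mpr (hper r hr))
        obtain ⟨M, hM⟩ := hd T
        refine ⟨T, M, fun m hm hdvd => hT ?_⟩
        have h1 : ϖ ^ T ∣ F.eval (x m) - F.eval c := hdvd.trans (sub_dvd_eval_sub _ _ _)
        rw [hF, (iterate_comp_orbit f x hx r m).1, ← hF] at h1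
        have := (dvd_sub (hM m hm) h1)
        have := dvd_add this hdvd
        convert this using 1
        ring
    have := (BddVal.const hsep hu).mul hϖ this
    convert this using 2 with m
    rw [hder, eval_mul, eval_C, eval_multiset_prod, Multiset.map_map]
    simp
  have hb2 : BddVal ϖ (fun m => F.derivative.eval (x m)) := by
    have := hb1.prod_range hϖ r
    convert this using 2 with m
    exact (iterate_comp_orbit f x hx r m).2
  have hb3 := BddVal.map σ hσ' hb2
  have hGσ : G = F.map (σ : R →+* R) := (map_iterate_comp_X _ f r).symm
  by_contra! hcon
  let _ : Algebra (FractionRing R) A := FractionRing.liftAlgebra R A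
  have : IsScalarTower R (FractionRing R) A := FractionRing.isScalarTower_liftAlgebra R A
  obtain ⟨q, M, U, V, hq, hUV⟩ := exists_pow_mem_span_of_roots (K := FractionRing R) (A := A)
    (F - X) (G - X) (derivative F * derivative G) (by
      intro h0
      have h1 : F = X := sub_eq_zero.mp h0
      have h2 := congrArg natDegree h1
      rw [hF, natDegree_iterate_comp, natDegree_X, mul_one] at h2
      have := Nat.one_lt_pow hr.ne' hdeg
      omega) (by
      intro z h1 h2
      simp only [aeval_map_algebraMap, map_sub, aeval_X, sub_eq_zero, map_mul,
        mul_eq_zero] at h1 h2 ⊢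
      by_cases h3 : (derivative F).aeval z = 0
      · exact Or.inl h3
      · exact Or.inr (hcon z h1 h2 h3))
  obtain ⟨B, M1, hB⟩ := (BddVal.const hsep hq).mul hϖ ((hb2.mul hϖ hb3).pow hϖ M)
  obtain ⟨M2, hM2⟩ := hd B
  obtain ⟨n, hn, hnM⟩ := hS.exists_gt (M1 + M2)
  apply hB n (by omega)
  have key := congrArg (fun P => P.eval (x n)) hUV
  have hn' : x n = σ (x n) := hn
  have e1 : F.eval (x n) = x (n + r) := (iterate_comp_orbit f x hx r n).1
  have e2 : G.eval (x n) = σ (x (n + r)) := by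
    rw [hn', hGσ, ← e1]
    exact (Polynomial.eval_map_apply (σ : R →+* R) (x n))
  have e3 : (derivative G).eval (x n) = σ ((derivative F).eval (x n)) := by
    conv_lhs => rw [hn', hGσ, derivative_map]
    exact (Polynomial.eval_map_apply (σ : R →+* R) (x n))
  simp only [eval_mul, eval_C, eval_pow, eval_add, eval_sub, eval_X, e1, e2, e3] at key
  beta_reduce
  rw [key]
  refine dvd_add (Dvd.dvd.mul_left (hM2 n (by omega)) _) (Dvd.dvd.mul_left ?_ _)
  have := hσ σ B _ (hM2 n (by omega))
  rwa [map_sub, ← hn'] at this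

end LocalAnalysis

/-! ### Transfer to the places of a number field -/

section LocalRing

variable {E : Type*} [Field E] [NumberField E] (v : HeightOneSpectrum (𝓞 E))

/-- The localization of `𝓞 E` at `v`, realized as the valuation ring inside `E`. -/
noncomputable abbrev LocRing : ValuationSubring E := (v.valuation E).valuationSubring

lemma LocRing.mem_iff {x : E} : x ∈ LocRing v ↔ v.valuation E x ≤ 1 := Iff.rfl

lemma LocRing.dvd_iff (a b : LocRing v) :
    a ∣ b ↔ v.valuation E (b : E) ≤ v.valuation E (a : E) := by
  constructor
  · rintro ⟨c, rfl⟩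
    have : v.valuation E (c : E) ≤ 1 := c.2
    simpa using mul_le_mul' (le_refl (v.valuation E (a : E))) this
  · intro h
    by_cases ha : (a : E) = 0
    · rw [ha, map_zero, le_zero_iff, map_eq_zero] at h
      exact ⟨0, by ext; simp [h]⟩
    · refine ⟨⟨(b : E) / a, ?_⟩, ?_⟩
      · rw [LocRing.mem_iff, map_div₀]
        exact div_le_one_of_le₀ h zero_le
      · ext
        exact (mul_div_cancel₀ (b : E) ha).symm

lemma LocRing.isUnit_iff (a : LocRing v) : IsUnit a ↔ v.valuation E (a : E) = 1 := by
  rw [isUnit_iff_dvd_one, LocRing.dvd_iff]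
  have : v.valuation E (a : E) ≤ 1 := a.2
  rw [OneMemClass.coe_one, map_one]
  exact ⟨fun h => le_antisymm this h, fun h => h.ge⟩

lemma LocRing.exists_uniformizer : ∃ ϖ : LocRing v, Prime ϖ ∧
    (∀ x : LocRing v, ϖ ∣ x ↔ v.valuation E (x : E) < 1) ∧
    (∀ x : LocRing v, x ≠ 0 → ∃ T, ¬ ϖ ^ T ∣ x) := by
  obtain ⟨π, hπ⟩ := v.valuation_exists_uniformizer E
  have hlt : v.valuation E π < 1 := by
    rw [hπ, ← WithZero.exp_zero, WithZero.exp_lt_exp]; simp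
  have hdvd : ∀ x : LocRing v, (⟨π, hlt.le⟩ : LocRing v) ∣ x ↔ v.valuation E (x : E) < 1 := by
    intro x
    rw [LocRing.dvd_iff]
    simp only [hπ]
    by_cases hx : v.valuation E (x : E) = 0
    · simp [hx]
    · rw [← WithZero.exp_log hx, ← WithZero.exp_zero, WithZero.exp_lt_exp, WithZero.exp_le_exp]
      omega
  refine ⟨⟨π, hlt.le⟩, ⟨?_, ?_, ?_⟩, hdvd, ?_⟩
  · intro h
    have h1 : π = 0 := congrArg Subtype.val h
    rw [h1, map_zero] at hπ
    exact WithZero.exp_ne_zero hπ.symm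
  · rw [LocRing.isUnit_iff]; exact hlt.ne
  · intro a b
    simp only [hdvd]
    intro hab
    by_contra! hcon
    have := one_le_mul hcon.1 hcon.2
    rw [← map_mul] at this
    exact absurd hab (not_lt.mpr this)
  · intro x hx
    have hx0 : v.valuation E (x : E) ≠ 0 := by simpa using hx
    refine ⟨(-WithZero.log (v.valuation E (x : E)) + 1).toNat, ?_⟩
    rw [LocRing.dvd_iff, not_le]
    change v.valuation E (π ^ _) < _
    rw [map_pow, hπ]
    conv_rhs => rw [← WithZero.exp_log hx0]
    rw [← WithZero.exp_nsmul, WithZero.exp_lt_exp]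
    simp only [nsmul_eq_mul]
    omega

lemma LocRing.padicLike : ∃ p : ℕ, PadicLike (LocRing v) p ∧ v.valuation E (p : E) < 1 := by
  obtain ⟨ϖ, hϖ, hdvd, hsep⟩ := LocRing.exists_uniformizer v
  obtain ⟨p, hp, hpv⟩ : ∃ p : ℕ, p.Prime ∧ (p : 𝓞 E) ∈ v.asIdeal := by
    have : Finite (𝓞 E ⧸ v.asIdeal) := Ideal.finiteQuotientOfFreeOfNeBot _ v.ne_bot
    have hpr := v.isPrime
    obtain ⟨p, hp⟩ := CharP.exists (𝓞 E ⧸ v.asIdeal)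
    refine ⟨p, CharP.char_is_prime (𝓞 E ⧸ v.asIdeal) p, ?_⟩
    rw [← Ideal.Quotient.eq_zero_iff_mem, map_natCast]
    exact CharP.cast_eq_zero _ p
  have hpv' : v.valuation E (p : E) < 1 := by
    have := (v.valuation_lt_one_iff_mem (K := E) (p : 𝓞 E)).mpr hpv
    simpa using this
  have hϖp : ϖ ∣ (p : LocRing v) := by
    rw [hdvd]; simpa using hpv'
  refine ⟨p, ⟨hp, fun n => ?_, fun x hx => ?_, fun m hm => ?_⟩, hpv'⟩
  · let φ : 𝓞 E →+* LocRing v := (algebraMap (𝓞 E) E).codRestrict (LocRing v).toSubring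
      (fun x => v.valuation_le_one x)
    have hp0 : (p : 𝓞 E) ^ n ≠ 0 := pow_ne_zero _ (by exact_mod_cast hp.ne_zero)
    have : Finite (𝓞 E ⧸ Ideal.span {(p : 𝓞 E) ^ n}) :=
      Ideal.finiteQuotientOfFreeOfNeBot _ (by simpa using fun h => absurd h hp.ne_zero)
    let ψ : (𝓞 E ⧸ Ideal.span {(p : 𝓞 E) ^ n}) →+* (LocRing v ⧸ Ideal.span {(p : LocRing v) ^ n}) :=
      Ideal.quotientMap _ φ (by
        rw [Ideal.span_singleton_le_iff_mem, Ideal.mem_comap, map_pow, map_natCast]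
        exact Ideal.mem_span_singleton_self _)
    apply Finite.of_surjective ψ
    intro y
    obtain ⟨y, rfl⟩ := Ideal.Quotient.mk_surjective y
    have hu : v.valuation E ((p : E) ^ n) ≠ 0 := by
      simpa using fun h => absurd h hp.ne_zero
    obtain ⟨a, ha⟩ := v.exists_valuation_sub_lt_of_integer (K := E) (x := (y : E)) y.2
      (Units.mk0 _ hu)
    refine ⟨Ideal.Quotient.mk _ a, ?_⟩
    rw [Ideal.quotientMap_mk, Ideal.Quotient.eq, Ideal.mem_span_singleton, LocRing.dvd_iff]
    refine ha.le.trans ?_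
    simp
  · by_contra hx0
    obtain ⟨T, hT⟩ := hsep x hx0
    exact hT ((pow_dvd_pow_of_dvd hϖp T).trans (hx T))
  · by_contra hcon
    rw [LocRing.isUnit_iff] at hcon
    have h1 : ϖ ∣ (m : LocRing v) := by
      rw [hdvd]; exact lt_of_le_of_ne (m : LocRing v).2 hcon
    have h2 : ϖ ∣ ((1 : ℕ) : LocRing v) := by
      have := (Nat.isCoprime_iff_coprime.mpr ((Nat.Prime.coprime_iff_not_dvd hp).mpr hm))
      obtain ⟨a, b, hab⟩ := this
      have h3 := congrArg (Int.cast : ℤ → LocRing v) hab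
      push_cast at h3 ⊢
      rw [← h3]
      exact dvd_add (Dvd.dvd.mul_left hϖp _) (Dvd.dvd.mul_left h1 _)
    exact hϖ.not_isUnit (isUnit_of_dvd_one (by simpa using h2))

/-- All coefficients of `f` are integral at `v`. -/
def IntegralAt (f : E[X]) : Prop := ∀ i, v.valuation E (f.coeff i) ≤ 1

variable {v} in
lemma IntegralAt.lift {f : E[X]} (h : IntegralAt v f) :
    ∃ f' : (LocRing v)[X], f'.map (algebraMap (LocRing v) E) = f := by
  have : f ∈ Polynomial.lifts (algebraMap (LocRing v) E) := by
    rw [Polynomial.lifts_iff_coeff_lifts]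
    exact fun n => ⟨⟨f.coeff n, h n⟩, rfl⟩
  obtain ⟨f', hf'⟩ := (Polynomial.mem_lifts _).mp this
  exact ⟨f', hf'⟩

lemma LocRing.coe_eval (f' : (LocRing v)[X]) (a : LocRing v) :
    ((f'.eval a : LocRing v) : E) = (f'.map (algebraMap (LocRing v) E)).eval (a : E) :=
  (Polynomial.eval_map_apply (algebraMap (LocRing v) E) a).symm

variable {v} in
lemma IntegralAt.eval {f : E[X]} (h : IntegralAt v f) {a : E} (ha : v.valuation E a ≤ 1) :
    v.valuation E (f.eval a) ≤ 1 := by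
  obtain ⟨f', rfl⟩ := h.lift
  rw [← LocRing.coe_eval v f' ⟨a, ha⟩]
  exact (f'.eval _).2

variable {v} in
lemma IntegralAt.derivative {f : E[X]} (h : IntegralAt v f) : IntegralAt v (derivative f) := by
  obtain ⟨f', rfl⟩ := h.lift
  intro i
  rw [derivative_map, coeff_map]
  exact (f'.derivative.coeff i).2

variable {v} in
lemma IntegralAt.orbit {f : E[X]} (h : IntegralAt v f) {x : ℕ → E}
    (hx : ∀ n, x (n + 1) = f.eval (x n)) (h0 : v.valuation E (x 0) ≤ 1) (n : ℕ) :
    v.valuation E (x n) ≤ 1 := by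
  induction n with
  | zero => exact h0
  | succ n ih => rw [hx]; exact h.eval ih

variable {v} in
lemma IntegralAt.sub_eval_lt {f : E[X]} (h : IntegralAt v f) {a b : E} (ha : v.valuation E a ≤ 1)
    (hb : v.valuation E b ≤ 1) (hab : v.valuation E (a - b) < 1) :
    v.valuation E (f.eval a - f.eval b) < 1 := by
  obtain ⟨f', rfl⟩ := h.lift
  have h1 : (⟨a, ha⟩ - ⟨b, hb⟩ : LocRing v) ∣ f'.eval ⟨a, ha⟩ - f'.eval ⟨b, hb⟩ :=
    sub_dvd_eval_sub _ _ _
  rw [LocRing.dvd_iff] at h1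
  refine lt_of_le_of_lt ?_ hab
  rw [← LocRing.coe_eval v f' ⟨a, ha⟩, ← LocRing.coe_eval v f' ⟨b, hb⟩]
  exact h1

/-- The étale case at a finite place of a number field. -/
theorem etale_case_field (f g : E[X]) (x y : ℕ → E)
    (hx : ∀ n, x (n + 1) = f.eval (x n)) (hy : ∀ n, y (n + 1) = g.eval (y n))
    (hfi : IntegralAt v f) (hgi : IntegralAt v g)
    (hx0 : v.valuation E (x 0) ≤ 1) (hy0 : v.valuation E (y 0) ≤ 1) (n₀ : ℕ)
    (hf : ∀ n ≥ n₀, v.valuation E (f.derivative.eval (x n)) = 1)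
    (hg : ∀ n ≥ n₀, v.valuation E (g.derivative.eval (y n)) = 1)
    (hS : {n | x n = y n}.Infinite) :
    ∃ k > 0, {n | x n = y n ∧ x (n + k) = y (n + k)}.Infinite := by
  have hxi := hfi.orbit hx hx0
  have hyi := hgi.orbit hy hy0
  obtain ⟨f', rfl⟩ := hfi.lift
  obtain ⟨g', rfl⟩ := hgi.lift
  obtain ⟨p, hp, hpv⟩ := LocRing.padicLike v
  have := hp.etale_case f' g' (fun n => ⟨x n, hxi n⟩) (fun n => ⟨y n, hyi n⟩)
    (fun n => Subtype.ext (by rw [LocRing.coe_eval]; exact hx n))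
    (fun n => Subtype.ext (by rw [LocRing.coe_eval]; exact hy n)) n₀
    (fun n hn => by
      rw [LocRing.isUnit_iff, LocRing.coe_eval, ← derivative_map]; exact hf n hn)
    (fun n hn => by
      rw [LocRing.isUnit_iff, LocRing.coe_eval, ← derivative_map]; exact hg n hn)
    (by simpa only [Subtype.ext_iff] using hS)
  simpa only [Subtype.ext_iff] using this

/-- `σ` stabilizes the place `v`. -/
def StabilizesPlace (σ : E ≃+* E) : Prop :=
  ∀ x, v.valuation E (σ x) ≤ 1 ↔ v.valuation E x ≤ 1

variable {v} in
lemma StabilizesPlace.lt_one_iff {σ : E ≃+* E} (h : StabilizesPlace v σ) (x : E) :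
    v.valuation E (σ x) < 1 ↔ v.valuation E x < 1 := by
  by_cases hx : x = 0
  · simp [hx]
  have h1 := h x⁻¹
  have h3 : ∀ y : E, y ≠ 0 → (v.valuation E y⁻¹ ≤ 1 ↔ ¬ v.valuation E y < 1) := by
    intro y hy
    rw [map_inv₀, inv_le_one₀ (by simpa [zero_lt_iff] using hy), not_lt]
  rw [map_inv₀, h3 _ hx, h3 _ (by simpa using hx), not_iff_not] at h1
  exact h1

/-- The local dichotomy at a finite place of a number field stabilized by `σ`. -/
theorem local_dichotomy_field (f : E[X]) (hdeg : 2 ≤ f.natDegree) (x : ℕ → E)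
    (hx : ∀ n, x (n + 1) = f.eval (x n)) (hfi : IntegralAt v f) (hx0 : v.valuation E (x 0) ≤ 1)
    (σ : E ≃+* E) (hσ : StabilizesPlace v σ) (hS : {n | x n = σ (x n)}.Infinite)
    (hsplit : (derivative f).Splits) (hCr : ∀ c ∈ (derivative f).roots, v.valuation E c ≤ 1)
    (havoid : ∀ c ∈ (derivative f).roots, (∃ k > 0, (fun t => f.eval t)^[k] c = c) →
      ∀ n, ¬ v.valuation E (x n - c) < 1) :
    (∃ k > 0, {n | x n = σ (x n) ∧ x (n + k) = σ (x (n + k))}.Infinite) ∨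
    ∃ r > 0, ∃ z : AlgebraicClosure E, (f.comp^[r] X).aeval z = z ∧
      ((f.map (σ : E →+* E)).comp^[r] X).aeval z = z ∧
      (derivative (f.comp^[r] X)).aeval z ≠ 0 ∧
      (derivative ((f.map (σ : E →+* E)).comp^[r] X)).aeval z ≠ 0 := by
  have hxi := hfi.orbit hx hx0
  have hfd := hfi.derivative
  obtain ⟨f', hf'⟩ := hfi.lift
  obtain ⟨p, hp, hpv⟩ := LocRing.padicLike v
  obtain ⟨ϖ, hϖ, hdvd, hsep⟩ := LocRing.exists_uniformizer v
  have hinj : Function.Injective (algebraMap (LocRing v) E) := Subtype.val_injective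
  let τ : LocRing v ≃+* LocRing v :=
    { toFun := fun a => ⟨σ a, (hσ a).mpr a.2⟩
      invFun := fun a => ⟨σ.symm a, (hσ _).mp (by rw [RingEquiv.apply_symm_apply]; exact a.2)⟩
      left_inv := fun a => by ext; simp
      right_inv := fun a => by ext; simp
      map_mul' := fun a b => by ext; simp
      map_add' := fun a b => by ext; simp }
  have hτ : ∀ a, ((τ a : LocRing v) : E) = σ a := fun _ => rfl
  have hCr' : ∀ c ∈ (derivative f).roots, c ∈ LocRing v := hCr
  let Cr : Multiset (LocRing v) := (derivative f).roots.pmap (fun c h => ⟨c, h⟩) hCr'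
  have hu0 : (derivative f).leadingCoeff ≠ 0 := by
    rw [Ne, leadingCoeff_eq_zero]
    exact fun h0 => by
      have := Polynomial.derivative_eq_zero.mp h0
      omega
  have hfin : Finite (LocRing v ⧸ Ideal.span {ϖ}) := by
    have hϖp : ϖ ∣ (p : LocRing v) ^ 1 := by
      rw [pow_one, hdvd]; simpa using hpv
    have := hp.finite_quot 1
    exact Finite.of_surjective _ (Ideal.Quotient.factor_surjective
      (Ideal.span_singleton_le_span_singleton.mpr hϖp))
  have key := hp.local_dichotomy (A := AlgebraicClosure E) hϖ
    (fun a ha => by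
      rw [LocRing.isUnit_iff]
      rw [hdvd, not_lt] at ha
      exact le_antisymm a.2 ha) hsep hfin f'
    (by rwa [← hf', natDegree_map_eq_of_injective hinj] at hdeg) (fun n => ⟨x n, hxi n⟩)
    (fun n => Subtype.ext (by rw [LocRing.coe_eval, hf']; exact hx n)) τ
    (by simpa only [Subtype.ext_iff, hτ] using hS) Cr ⟨_, hfd _⟩
    (fun h => hu0 (congrArg Subtype.val h))
    (by
      apply Polynomial.map_injective _ hinj
      rw [← derivative_map, hf', Polynomial.map_mul, Polynomial.map_C, Polynomial.map_multiset_prod,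
        Multiset.map_map]
      conv_lhs => rw [hsplit.eq_prod_roots]
      congr 2
      simp only [Function.comp_def, Polynomial.map_sub, Polynomial.map_X, Polynomial.map_C]
      have hCrm : Cr.map (algebraMap (LocRing v) E) = (derivative f).roots := by
        change Multiset.map _ (Multiset.pmap _ _ _) = _
        rw [Multiset.map_pmap]
        exact (Multiset.pmap_eq_map _ _ _ _).trans (Multiset.map_id' _)
      conv_lhs => rw [← hCrm, Multiset.map_map]
      rfl)
    (by
      intro c hc hper n hdv
      obtain ⟨c', hc', rfl⟩ := Multiset.mem_pmap.mp hc
      rw [hdvd] at hdv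
      refine havoid c' hc' ?_ n hdv
      obtain ⟨k, hk, hkc⟩ := hper
      refine ⟨k, hk, ?_⟩
      have := congrArg Subtype.val hkc
      rw [← iterate_comp_X_eval, LocRing.coe_eval, map_iterate_comp_X, hf',
        iterate_comp_X_eval] at this
      exact this)
  have hσf : (f'.map (τ : LocRing v →+* LocRing v)).map (algebraMap (LocRing v) E) =
      f.map (σ : E →+* E) := by
    rw [← hf', Polynomial.map_map, Polynomial.map_map]
    rfl
  rcases key with key | ⟨r, hr, z, h1, h2, h3, h4⟩
  · left
    simpa only [Subtype.ext_iff, hτ] using key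
  · right
    refine ⟨r, hr, z, ?_, ?_, ?_, ?_⟩
    · rwa [← hf', ← map_iterate_comp_X, aeval_map_algebraMap]
    · rwa [← hσf, ← map_iterate_comp_X, aeval_map_algebraMap]
    · rwa [← hf', ← map_iterate_comp_X, derivative_map, aeval_map_algebraMap]
    · rwa [← hσf, ← map_iterate_comp_X, derivative_map, aeval_map_algebraMap]

end LocalRing

/-! ### Almost all places, and Frobenius elements -/

section Places

variable {E : Type*} [Field E] [NumberField E]

lemma eventually_le_one (x : E) :
    ∀ᶠ v : HeightOneSpectrum (𝓞 E) in Filter.cofinite, v.valuation E x ≤ 1 := by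
  rw [Filter.eventually_cofinite]
  simp only [not_le]
  exact HeightOneSpectrum.Support.finite (𝓞 E) x

lemma eventually_eq_one {x : E} (hx : x ≠ 0) :
    ∀ᶠ v : HeightOneSpectrum (𝓞 E) in Filter.cofinite, v.valuation E x = 1 := by
  filter_upwards [eventually_le_one x, eventually_le_one x⁻¹] with v h1 h2
  rw [map_inv₀] at h2
  refine le_antisymm h1 ?_
  exact (inv_le_one₀ (zero_lt_iff.mpr (by simpa using hx))).mp h2

lemma eventually_integralAt (f : E[X]) :
    ∀ᶠ v : HeightOneSpectrum (𝓞 E) in Filter.cofinite, IntegralAt v f := by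
  have : ∀ᶠ v : HeightOneSpectrum (𝓞 E) in Filter.cofinite,
      ∀ i ∈ f.support, v.valuation E (f.coeff i) ≤ 1 := by
    rw [Filter.eventually_all_finset]
    exact fun i _ => eventually_le_one _
  filter_upwards [this] with v hv i
  by_cases hi : i ∈ f.support
  · exact hv i hi
  · rw [notMem_support_iff.mp hi]; simp

/-- `φ` acts as the `p`-power map on the residue field of `v`. -/
def FrobAt (v : HeightOneSpectrum (𝓞 E)) (φ : E ≃ₐ[ℚ] E) (p : ℕ) : Prop :=
  0 < p ∧ ∀ x : E, v.valuation E x ≤ 1 → v.valuation E (φ x - x ^ p) < 1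

variable {v : HeightOneSpectrum (𝓞 E)}

lemma FrobAt.of_integers {φ : E ≃ₐ[ℚ] E} {p : ℕ} (hp : 0 < p)
    (h : ∀ x : 𝓞 E, v.valuation E (φ x - (x : E) ^ p) < 1) : FrobAt v φ p := by
  refine ⟨hp, fun x hx => ?_⟩
  obtain ⟨n, ⟨d, hd⟩, hnd⟩ := v.exists_primeCompl_mul_eq_of_integer (K := E) x hx
  have hd1 : v.valuation E (d : E) = 1 := v.valuation_eq_one_iff_notMem.mpr hd
  have hφd : v.valuation E (φ (d : E)) = 1 := by
    have h1 := h d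
    have h2 : v.valuation E ((d : E) ^ p) = 1 := by rw [map_pow, hd1, one_pow]
    have := (v.valuation E).map_add_eq_of_lt_right (x := φ d - (d : E) ^ p) (y := (d : E) ^ p)
      (by rw [h2]; exact h1)
    rwa [sub_add_cancel, h2] at this
  have hnd' : x * (d : E) = n := hnd
  have key : (φ x - x ^ p) * φ (d : E) =
      (φ (n : E) - (n : E) ^ p) + x ^ p * -(φ (d : E) - (d : E) ^ p) := by
    rw [← hnd', map_mul]; ring
  have hlt : v.valuation E ((φ x - x ^ p) * φ (d : E)) < 1 := by
    rw [key]
    refine (v.valuation E).map_add_lt (h n) ?_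
    rw [map_mul, Valuation.map_neg, map_pow]
    exact mul_lt_one_of_nonneg_of_lt_one_right (pow_le_one₀ zero_le hx) zero_le (h d)
  rwa [map_mul, hφd, mul_one] at hlt

lemma FrobAt.le_one {φ : E ≃ₐ[ℚ] E} {p : ℕ} (h : FrobAt v φ p) {x : E}
    (hx : v.valuation E x ≤ 1) : v.valuation E (φ x) ≤ 1 := by
  have := (v.valuation E).map_add_le (h.2 x hx).le
    (show v.valuation E (x ^ p) ≤ 1 by rw [map_pow]; exact pow_le_one₀ zero_le hx)
  rwa [sub_add_cancel] at this

lemma FrobAt.lt_one {φ : E ≃ₐ[ℚ] E} {p : ℕ} (h : FrobAt v φ p) {x : E}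
    (hx : v.valuation E x < 1) : v.valuation E (φ x) < 1 := by
  have := (v.valuation E).map_add_lt (h.2 x hx.le)
    (show v.valuation E (x ^ p) < 1 by rw [map_pow]; exact pow_lt_one₀ zero_le hx h.1.ne')
  rwa [sub_add_cancel] at this

lemma FrobAt.stabilizes {φ : E ≃ₐ[ℚ] E} {p : ℕ} (h : FrobAt v φ p) :
    StabilizesPlace v φ.toRingEquiv := by
  intro x
  refine ⟨fun hx => ?_, fun hx => h.le_one hx⟩
  by_contra! hcon
  have h1 : v.valuation E x⁻¹ < 1 := by rw [map_inv₀]; exact inv_lt_one_of_one_lt₀ hcon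
  have h2 := h.lt_one h1
  rw [map_inv₀, map_inv₀] at h2
  have h0 : 0 < v.valuation E (φ x) := by
    rw [zero_lt_iff]
    simpa using fun h0 => by simp [h0] at hcon
  exact absurd hx (not_le.mpr ((inv_lt_one₀ h0).mp h2))

lemma StabilizesPlace.pow {φ : E ≃ₐ[ℚ] E} (h : StabilizesPlace v φ.toRingEquiv) (i : ℕ) :
    StabilizesPlace v (φ ^ i).toRingEquiv := by
  induction i with
  | zero => intro x; rfl
  | succ i ih =>
    intro x
    have h1 : (φ ^ (i + 1)).toRingEquiv x = φ ((φ ^ i) x) := by rw [pow_succ']; rfl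
    rw [h1]
    exact (h _).trans (ih x)

lemma FrobAt.pow {φ : E ≃ₐ[ℚ] E} {p : ℕ} (h : FrobAt v φ p) (i : ℕ) :
    FrobAt v (φ ^ i) (p ^ i) := by
  induction i with
  | zero => exact ⟨by simp, fun x _ => by simp⟩
  | succ i ih =>
    refine ⟨pow_pos h.1 _, fun x hx => ?_⟩
    have h1 := h.2 ((φ ^ i) x) (ih.le_one hx)
    have h2 : v.valuation E (((φ ^ i) x) ^ p - (x ^ p ^ i) ^ p) < 1 := by
      obtain ⟨c, hc⟩ := sub_dvd_pow_sub_pow (⟨(φ ^ i) x, ih.le_one hx⟩ : LocRing v)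
        (⟨x ^ p ^ i, by rw [LocRing.mem_iff, map_pow]; exact pow_le_one₀ zero_le hx⟩) p
      have hc' := congrArg (Subtype.val) hc
      push_cast at hc'
      rw [hc', map_mul]
      exact mul_lt_one_of_lt_of_le (ih.2 x hx) c.2
    have := (v.valuation E).map_add_lt h1 h2
    rw [sub_add_sub_cancel, ← pow_mul, ← pow_succ] at this
    rw [pow_succ' φ]
    exact this

end Places

/-! ### Growth of heights -/

section Heights

/-- If a sum of finitely many nonnegative sequences at least doubles (up to a constant) at each step,
while each sequence moves by a bounded amount as soon as it is large, then the sum stays bounded. -/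
lemma bounded_of_doubling {ι : Type*} [Fintype ι] (l : ℕ → ι → ℝ) (C B : ℝ) (hC : 0 ≤ C)
    (hB : 0 ≤ B) (h0 : ∀ i w, 0 ≤ l i w)
    (ha : ∀ i, 2 * (∑ w, l i w) - C ≤ ∑ w, l (i + 1) w)
    (hb : ∀ i w, B < l i w → |l (i + 1) w - l i w| ≤ B) :
    ∃ D, ∀ i, ∑ w, l i w ≤ D := by
  classical
  rcases isEmpty_or_nonempty ι with hι | hι
  · exact ⟨0, fun i => by simp⟩
  set c : ℝ := ((Fintype.card ι : ℕ) : ℝ) with hc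
  have hc1 : 1 ≤ c := by rw [hc]; exact_mod_cast Fintype.card_pos
  set h : ℕ → ℝ := fun i => ∑ w, l i w with hh
  obtain ⟨q, hq⟩ := pow_unbounded_of_one_lt (2 * c) (one_lt_two (α := ℝ))
  set Q : ℕ := q * Fintype.card ι with hQ
  have hQ0 : (0 : ℝ) ≤ Q * B := by positivity
  refine ⟨2 * C + c * (B + Q * B), fun i₀ => ?_⟩
  by_contra! hcon
  have hcon' : 2 * C + c * (B + Q * B) < h i₀ := hcon
  have hgrow : ∀ i s, 2 ^ s * (h i - C) ≤ h (i + s) - C := by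
    intro i s
    induction s with
    | zero => simp
    | succ s ih =>
      have := ha (i + s)
      have h2 : 2 * h (i + s) - C ≤ h (i + s + 1) := this
      rw [← add_assoc, pow_succ]
      nlinarith
  have hcB : 0 ≤ c * (B + Q * B) := by positivity
  have hlarge : ∀ s, h i₀ ≤ h (i₀ + s) := by
    intro s
    have h1 := hgrow i₀ s
    have h2 : (1 : ℝ) ≤ 2 ^ s := one_le_pow₀ one_le_two
    nlinarith
  have hdom : ∀ i, ∃ w, h i ≤ c * l i w := by
    intro i
    by_contra! hlt
    have : ∑ w, c * l i w < ∑ w : ι, h i := Finset.sum_lt_sum_of_nonempty Finset.univ_nonempty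
      (fun w _ => hlt w)
    rw [← Finset.mul_sum, Finset.sum_const, Finset.card_univ, nsmul_eq_mul] at this
    exact absurd this (lt_irrefl _)
  choose w hw using hdom
  obtain ⟨a, b, hab, heq⟩ := Fintype.exists_ne_map_eq_of_card_lt
    (fun a : Fin (Fintype.card ι + 1) => w (i₀ + q * a)) (by simp)
  wlog hlt : a < b generalizing a b
  · exact this b a hab.symm heq.symm (lt_of_le_of_ne (not_lt.mp hlt) hab.symm)
  change w (i₀ + q * (a : ℕ)) = w (i₀ + q * (b : ℕ)) at heq
  obtain ⟨e, he⟩ : ∃ e, (b : ℕ) = a + (e + 1) := ⟨b - a - 1, by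
    have : (a : ℕ) < b := hlt
    omega⟩
  set i := i₀ + q * (a : ℕ) with hi
  have hib : i₀ + q * (b : ℕ) = i + q * (e + 1) := by rw [he, hi]; ring
  have hs : q * (e + 1) ≤ Q := by
    rw [hQ]
    refine Nat.mul_le_mul le_rfl ?_
    have := b.2
    omega
  rw [hib] at heq
  set W := w i with hW
  have h1 := hw i
  have h2 := hw (i + q * (e + 1))
  rw [← heq] at h2
  rw [← hW] at h1
  have hi_large : 2 * C + c * (B + Q * B) < h i := hcon'.trans_le (hlarge _)
  have hl1 : B + Q * B < l i W := by
    have : c * (B + Q * B) < c * l i W := by linarith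
    exact lt_of_mul_lt_mul_left this (by linarith)
  have hmove : ∀ t : ℕ, t ≤ Q → |l (i + t) W - l i W| ≤ t * B := by
    intro t
    induction t with
    | zero => intro _; simp
    | succ t ih =>
      intro ht
      have h3 := ih (by omega)
      have h4 : (t : ℝ) * B ≤ Q * B :=
        mul_le_mul_of_nonneg_right (by exact_mod_cast (by omega : t ≤ Q)) hB
      have h5 := hb (i + t) W (by
        have := (abs_le.mp h3).1
        linarith)
      rw [← add_assoc]
      push_cast
      calc |l (i + t + 1) W - l i W|
          = |(l (i + t + 1) W - l (i + t) W) + (l (i + t) W - l i W)| := by ring_nf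
        _ ≤ _ := abs_add_le _ _
        _ ≤ (t + 1) * B := by linarith
  have h6 := (abs_le.mp (hmove _ hs)).2
  have h7 : ((q * (e + 1) : ℕ) : ℝ) * B ≤ Q * B :=
    mul_le_mul_of_nonneg_right (by exact_mod_cast hs) hB
  have h8 : l i W ≤ h i := Finset.single_le_sum (fun w _ => h0 i w) (Finset.mem_univ W)
  have h9 := hgrow i (q * (e + 1))
  have h10 : (2 : ℝ) ^ q ≤ 2 ^ (q * (e + 1)) :=
    pow_le_pow_right₀ one_le_two (Nat.le_mul_of_pos_right _ (Nat.succ_pos _))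
  have h11 : 2 * c * (h i - C) ≤ h (i + q * (e + 1)) - C :=
    le_trans (mul_le_mul_of_nonneg_right (hq.le.trans h10) (by linarith)) h9
  have h12 : c * l (i + q * (e + 1)) W ≤ c * (h i + Q * B) :=
    mul_le_mul_of_nonneg_left (by linarith) (by linarith)
  have h13 : c * (2 * (h i - C)) ≤ c * (h i + Q * B) := by linarith
  have h14 := le_of_mul_le_mul_left h13 (by linarith)
  have h15 : Q * B ≤ c * (B + Q * B) := by nlinarith
  linarith

/-- A polynomial fixing `0` with nonzero multiplier moves small points by a bounded factor. -/
lemma posLog_inv_eval_near {E : Type*} [Field E] (v : AbsoluteValue E ℝ) (H : E[X])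
    (hH : H.eval 0 = 0) (hH' : H.derivative.eval 0 ≠ 0) :
    ∃ B, 0 ≤ B ∧ ∀ w : E, B < Real.posLog (v w⁻¹) →
      |Real.posLog (v (H.eval w)⁻¹) - Real.posLog (v w⁻¹)| ≤ B := by
  obtain ⟨H1, hH1⟩ : X ∣ H := by rw [X_dvd_iff, coeff_zero_eq_eval_zero, hH]
  obtain ⟨H2, hH2⟩ : X ∣ H1 - C (H1.eval 0) := by
    rw [X_dvd_iff, coeff_zero_eq_eval_zero]; simp
  have hc0 : H1.eval 0 ≠ 0 := by
    rw [hH1] at hH'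
    simpa [derivative_mul] using hH'
  set c := v (H1.eval 0) with hc
  have hcpos : 0 < c := v.pos hc0
  set M := ∑ i ∈ Finset.range (H2.natDegree + 1), v (H2.coeff i) with hM
  have hM0 : 0 ≤ M := Finset.sum_nonneg fun i _ => v.nonneg _
  have hbound : ∀ w, v w ≤ 1 → v (H2.eval w) ≤ M := by
    intro w hw
    rw [eval_eq_sum_range]
    refine (v.sum_le _ _).trans (Finset.sum_le_sum fun i _ => ?_)
    rw [map_mul, map_pow]
    exact mul_le_of_le_one_right (v.nonneg _) (pow_le_one₀ (v.nonneg _) hw)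
  have hev : ∀ w, H1.eval w = H1.eval 0 + w * H2.eval w := by
    intro w
    have := congrArg (eval w) hH2
    simp at this
    linear_combination this
  set δ := c / (2 * (M + 1)) with hδ
  have hδ0 : 0 < δ := by positivity
  set B := |Real.log δ| + |Real.log (c / 2)| + |Real.log (2 * c)| with hB
  refine ⟨B, by positivity, fun w hw => ?_⟩
  have hpos : 0 < Real.posLog (v w⁻¹) := lt_of_le_of_lt (by positivity) hw
  have hw0 : w ≠ 0 := by
    rintro rfl
    simp at hpos
  have hvw : 0 < v w := v.pos hw0
  have hlog : Real.posLog (v w⁻¹) = -Real.log (v w) := by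
    rw [Real.posLog, map_inv₀, Real.log_inv, max_eq_right]
    by_contra! hcon
    rw [Real.posLog, map_inv₀, Real.log_inv, max_eq_left hcon.le] at hpos
    exact lt_irrefl _ hpos
  have hlw : Real.log (v w) < -B := by rw [hlog] at hw; linarith
  have hw1 : v w ≤ 1 := by
    rw [← Real.log_nonpos_iff hvw.le]
    have : 0 ≤ B := by positivity
    linarith
  have hwδ : v w ≤ δ := by
    rw [← Real.log_le_log_iff hvw hδ0]
    have h1 := neg_abs_le (Real.log δ)
    have h2 := abs_nonneg (Real.log (c / 2))
    have h3 := abs_nonneg (Real.log (2 * c))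
    linarith
  have hsmall : v (w * H2.eval w) ≤ c / 2 := by
    rw [map_mul]
    calc v w * v (H2.eval w) ≤ δ * M :=
          mul_le_mul hwδ (hbound w hw1) (v.nonneg _) hδ0.le
      _ ≤ c / 2 := by
          rw [hδ, div_mul_eq_mul_div, div_le_div_iff₀ (by positivity) (by positivity)]
          nlinarith
  have hlow : c / 2 ≤ v (H1.eval w) := by
    have := v.le_add (H1.eval 0) (w * H2.eval w)
    rw [← hev w] at this
    linarith
  have hhigh : v (H1.eval w) ≤ 2 * c := by
    rw [hev w]
    refine (v.add_le _ _).trans ?_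
    linarith
  have hH1w : 0 < v (H1.eval w) := lt_of_lt_of_le (by positivity) hlow
  have hHw : Real.log (v (H.eval w)⁻¹) = -Real.log (v w) - Real.log (v (H1.eval w)) := by
    rw [hH1, eval_mul, eval_X, map_inv₀, Real.log_inv, map_mul, Real.log_mul hvw.ne' hH1w.ne']
    ring
  have hlow' : Real.log (c / 2) ≤ Real.log (v (H1.eval w)) :=
    Real.log_le_log (by positivity) hlow
  have hhigh' : Real.log (v (H1.eval w)) ≤ Real.log (2 * c) := Real.log_le_log hH1w hhigh
  have habs : |Real.log (v (H1.eval w))| ≤ B := by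
    rw [abs_le]
    have h1 := neg_abs_le (Real.log (c / 2))
    have h2 := le_abs_self (Real.log (2 * c))
    have h3 := abs_nonneg (Real.log δ)
    have h4 := abs_nonneg (Real.log (2 * c))
    have h5 := abs_nonneg (Real.log (c / 2))
    constructor <;> linarith
  rw [Real.posLog, Real.posLog, hHw, map_inv₀, Real.log_inv]
  calc |max 0 (-Real.log (v w) - Real.log (v (H1.eval w))) - max 0 (-Real.log (v w))|
      ≤ |(-Real.log (v w) - Real.log (v (H1.eval w))) - (-Real.log (v w))| := by
        simpa [max_comm] using abs_max_sub_max_le_abs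
          (-Real.log (v w) - Real.log (v (H1.eval w))) (-Real.log (v w)) 0
    _ = |Real.log (v (H1.eval w))| := by rw [← abs_neg]; ring_nf
    _ ≤ B := habs

open Height in
/-- A polynomial of degree at least two at least doubles heights, up to a constant. -/
lemma logHeight₁_eval_ge {E : Type*} [Field E] [NumberField E] (H : E[X])
    (hdeg : 2 ≤ H.natDegree) :
    ∃ C, 0 ≤ C ∧ ∀ w : E, 2 * logHeight₁ w - C ≤ logHeight₁ (H.eval w) := by
  set d := H.natDegree with hd
  have hH0 : H ≠ 0 := by rintro rfl; simp at hd; omega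
  set Q0 := (X : E[X]) ^ (d - 1 + d) / H
  set Q1 := (X : E[X]) ^ (d - 1 + d) % H
  have hdiv : H * Q0 + Q1 = X ^ (d - 1 + d) := EuclideanDomain.div_add_mod _ _
  have hdegmod : Q1.degree < H.degree := EuclideanDomain.mod_lt _ hH0
  have hQ1 : Q1.natDegree < d - 1 + 1 := by
    by_cases h : Q1 = 0
    · rw [h]; simp
    · have := natDegree_lt_natDegree h hdegmod
      omega
  have hQ0 : Q0.natDegree < d - 1 + 1 := by
    have h1 : (H * Q0).natDegree ≤ d - 1 + d := by
      rw [eq_sub_of_add_eq hdiv]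
      refine (natDegree_sub_le _ _).trans ?_
      rw [natDegree_X_pow]
      omega
    by_cases h : Q0 = 0
    · rw [h]; simp
    · rw [natDegree_mul hH0 h] at h1
      omega
  let hom : E[X] → MvPolynomial (Fin 2) E := fun Q => ∑ i ∈ Finset.range (d - 1 + 1),
    MvPolynomial.C (Q.coeff i) * (MvPolynomial.X 0 ^ i * MvPolynomial.X 1 ^ (d - 1 - i))
  have hhom : ∀ Q, (hom Q).IsHomogeneous (d - 1) := by
    intro Q
    refine MvPolynomial.IsHomogeneous.sum _ _ _ fun i hi => ?_
    have hi' : i ≤ d - 1 := by simpa [Nat.lt_succ_iff] using hi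
    have h1 := ((MvPolynomial.isHomogeneous_X_pow (R := E) (0 : Fin 2) i).mul
      (MvPolynomial.isHomogeneous_X_pow (R := E) (1 : Fin 2) (d - 1 - i))).C_mul (Q.coeff i)
    rwa [Nat.add_sub_cancel' hi'] at h1
  have heval : ∀ Q : E[X], Q.natDegree < d - 1 + 1 → ∀ w,
      MvPolynomial.eval ![w, 1] (hom Q) = Q.eval w := by
    intro Q hQ w
    rw [eval_eq_sum_range' hQ]
    simp [hom]
  have hq : ∀ a : Fin 2 × Fin 2,
      ((![![hom Q0, hom Q1], ![0, MvPolynomial.X 1 ^ (d - 1)]].uncurry a :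
        MvPolynomial (Fin 2) E)).IsHomogeneous (d - 1) := by
    rintro ⟨a, b⟩
    fin_cases a <;> fin_cases b
    · exact hhom _
    · exact hhom _
    · exact MvPolynomial.isHomogeneous_zero _ _ _
    · exact MvPolynomial.isHomogeneous_X_pow _ _
  obtain ⟨C, hC⟩ := logHeight_eval_ge' (N := d) hq
  refine ⟨|C|, abs_nonneg _, fun w => ?_⟩
  have key := hC ![MvPolynomial.C (H.eval w), MvPolynomial.C 1] (x := ![w, 1]) (by
    intro k
    fin_cases k
    · have := congrArg (eval w) hdiv
      simp [Fin.sum_univ_two, Function.uncurry, heval Q0 hQ0, heval Q1 hQ1] at this ⊢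
      linear_combination this
    · simp [Fin.sum_univ_two, Function.uncurry])
  have hfun : (fun j => MvPolynomial.eval ![w, 1]
      ((![MvPolynomial.C (H.eval w), MvPolynomial.C 1] : Fin 2 → MvPolynomial (Fin 2) E) j)) =
      ![H.eval w, 1] := by
    ext j; fin_cases j <;> simp
  rw [hfun, ← logHeight₁_eq_logHeight, ← logHeight₁_eq_logHeight] at key
  have h1 := neg_abs_le C
  have h2 := zero_le_logHeight₁ w
  have h3 : (2 : ℝ) ≤ d := by exact_mod_cast hdeg
  nlinarith

end Heights

/-! ### Orbits under maps with a common fixed point -/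

section FixedPoint

variable {E : Type*} [Field E] [NumberField E]

lemma finitePlace_le_one (u : FinitePlace E) {y : E}
    (hy : u.maximalIdeal.valuation E y ≤ 1) : u y ≤ 1 := by
  obtain ⟨n, ⟨d, hd⟩, hnd⟩ := u.maximalIdeal.exists_primeCompl_mul_eq_of_integer (K := E) y hy
  have hnd' : y * algebraMap (𝓞 E) E d = algebraMap (𝓞 E) E n := hnd
  have h1 : u (algebraMap (𝓞 E) E n) ≤ 1 := by
    rw [← FinitePlace.norm_embedding_eq]; exact FinitePlace.norm_le_one _ _ n
  have h2 : u (algebraMap (𝓞 E) E d) = 1 := by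
    rw [← FinitePlace.norm_embedding_eq]
    exact (FinitePlace.norm_eq_one_iff_notMem _ _ d).mpr hd
  rw [← hnd', map_mul, h2, mul_one] at h1
  exact h1

/-- An infinite orbit comes close to a fixed point with nonzero multiplier at infinitely many
finite places. -/
lemma exists_place_near_fixed (F : E[X]) (hdeg : 2 ≤ F.natDegree) (z : E) (hz : F.eval z = z)
    (hz' : F.derivative.eval z ≠ 0) (x : ℕ → E) (hx : ∀ n, x (n + 1) = F.eval (x n))
    (hinj : Function.Injective x) (P : HeightOneSpectrum (𝓞 E) → Prop)
    (hP : ∀ᶠ v in Filter.cofinite, P v) :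
    ∃ v, P v ∧ ∃ i, v.valuation E (x i - z) < 1 := by
  classical
  by_contra! hcon
  set W : ℕ → E := fun i => x i - z with hW
  set H : E[X] := F.comp (X + C z) - C z with hH
  have hHeval : ∀ w, H.eval w = F.eval (w + z) - z := by intro w; simp [hH]
  have hWH : ∀ i, W (i + 1) = H.eval (W i) := by
    intro i
    rw [hHeval, hW]
    simp [hx]
  have hHdeg : 2 ≤ H.natDegree := by
    rw [hH, natDegree_sub_C, natDegree_comp, natDegree_X_add_C, mul_one]
    exact hdeg
  have hH0 : H.eval 0 = 0 := by rw [hHeval]; simp [hz]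
  have hH0' : H.derivative.eval 0 ≠ 0 := by
    rw [hH]
    simpa [derivative_comp] using hz'
  have hxz : ∀ i, x i ≠ z := by
    intro i hi
    have : x (i + 1) = x i := by rw [hx, hi, hz]
    have := hinj this
    omega
  have hW0 : ∀ i, W i ≠ 0 := fun i => sub_ne_zero.mpr (hxz i)
  have hTfin : {u : FinitePlace E | ¬ P u.maximalIdeal}.Finite :=
    Set.Finite.preimage (FinitePlace.maximalIdeal_injective.injOn) (Filter.eventually_cofinite.mp hP)
  set T : Finset (FinitePlace E) := hTfin.toFinset with hT
  let l : ℕ → (InfinitePlace E ⊕ T) → ℝ := fun i => Sum.elim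
    (fun w => w.mult * Real.posLog (w (W i)⁻¹)) (fun u => Real.posLog (u.1 (W i)⁻¹))
  have hl : ∀ i, ∑ w, l i w = Height.logHeight₁ (W i) := by
    intro i
    rw [← Height.logHeight₁_inv, NumberField.logHeight₁_eq, Fintype.sum_sum_type]
    congr 1
    rw [finsum_eq_sum_of_support_subset (s := T)]
    · simp only [l, Sum.elim_inr]
      exact Finset.sum_coe_sort T (fun u => Real.posLog (u (W i)⁻¹))
    · intro u hu
      by_contra huT
      have hPu : P u.maximalIdeal := by
        by_contra hc
        exact huT (by simpa [hT] using hc)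
      apply hu
      have h1 := hcon _ hPu i
      have h2 : u (W i)⁻¹ ≤ 1 := finitePlace_le_one u (by
        rw [map_inv₀]; exact inv_le_one_of_one_le₀ h1)
      rw [Real.posLog_eq_zero_iff, abs_of_nonneg (apply_nonneg _ _)]
      exact h2
  obtain ⟨C₀, hC₀, hC⟩ := logHeight₁_eval_ge H hHdeg
  have hb : ∀ w : InfinitePlace E ⊕ T, ∃ B, 0 ≤ B ∧ ∀ i, B < l i w →
      |l (i + 1) w - l i w| ≤ B := by
    rintro (w | u)
    · obtain ⟨B, hB0, hB⟩ := posLog_inv_eval_near w.1 H hH0 hH0'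
      refine ⟨w.mult * B, by positivity, fun i hi => ?_⟩
      have hm : (0 : ℝ) < w.mult := by exact_mod_cast InfinitePlace.mult_pos
      simp only [l, Sum.elim_inl] at hi ⊢
      have := hB (W i) (lt_of_mul_lt_mul_left hi hm.le)
      rw [← hWH] at this
      rw [← mul_sub, abs_mul, abs_of_pos hm]
      exact mul_le_mul_of_nonneg_left this hm.le
    · obtain ⟨B, hB0, hB⟩ := posLog_inv_eval_near u.1.1 H hH0 hH0'
      refine ⟨B, hB0, fun i hi => ?_⟩
      have := hB (W i) hi
      rw [← hWH] at this
      exact this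
  choose B hB0 hB using hb
  have hBle : ∀ w, B w ≤ ∑ w, B w := fun w =>
    Finset.single_le_sum (fun w _ => hB0 w) (Finset.mem_univ w)
  obtain ⟨D, hD⟩ := bounded_of_doubling l C₀ (∑ w, B w) hC₀ (Finset.sum_nonneg fun w _ => hB0 w)
    (by
      rintro i (w | u)
      · exact mul_nonneg (by positivity) Real.posLog_nonneg
      · exact Real.posLog_nonneg)
    (fun i => by rw [hl, hl, hWH]; exact hC _)
    (fun i w hi => (hB w i ((hBle w).trans_lt hi)).trans (hBle w))
  have hWinj : Function.Injective W := fun i j hij => hinj (sub_left_injective hij)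
  refine Set.infinite_range_of_injective hWinj
    ((NumberField.finite_setOfPred_logHeight₁_le (K := E) D).subset ?_)
  rintro _ ⟨i, rfl⟩
  have := hD i
  rw [hl] at this
  exact this

/-- Two orbits agreeing infinitely often, under maps sharing a fixed point at which both have
nonzero multiplier: the coincidences recur at a fixed distance. -/
lemma common_fixed_case (F G : E[X]) (hdeg : 2 ≤ F.natDegree) (z : E) (hF : F.eval z = z)
    (hG : G.eval z = z) (hF' : F.derivative.eval z ≠ 0) (hG' : G.derivative.eval z ≠ 0)
    (x y : ℕ → E) (hx : ∀ n, x (n + 1) = F.eval (x n)) (hy : ∀ n, y (n + 1) = G.eval (y n))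
    (hinj : Function.Injective x) (hS : {n | x n = y n}.Infinite) :
    ∃ k > 0, {n | x n = y n ∧ x (n + k) = y (n + k)}.Infinite := by
  obtain ⟨v, ⟨hFi, hGi, hzi, hx0, hy0, hFu, hGu⟩, i, hi⟩ :=
    exists_place_near_fixed F hdeg z hF hF' x hx hinj
      (fun v => IntegralAt v F ∧ IntegralAt v G ∧ v.valuation E z ≤ 1 ∧ v.valuation E (x 0) ≤ 1 ∧
        v.valuation E (y 0) ≤ 1 ∧ v.valuation E (F.derivative.eval z) = 1 ∧
        v.valuation E (G.derivative.eval z) = 1)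
      ((eventually_integralAt F).and <| (eventually_integralAt G).and <|
        (eventually_le_one z).and <| (eventually_le_one _).and <| (eventually_le_one _).and <|
        (eventually_eq_one hF').and (eventually_eq_one hG'))
  have hnear : ∀ (F : E[X]) (x : ℕ → E), IntegralAt v F → F.eval z = z →
      (∀ n, x (n + 1) = F.eval (x n)) → v.valuation E (x 0) ≤ 1 → ∀ i,
      v.valuation E (x i - z) < 1 → ∀ n ≥ i, v.valuation E (x n - z) < 1 := by
    intro F x hFi hF hx hx0 i hi n hn
    induction n, hn using Nat.le_induction with
    | base => exact hi
    | succ n hn ih =>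
      have := hFi.sub_eval_lt (hFi.orbit hx hx0 n) hzi ih
      rwa [← hx, hF] at this
  have hunit : ∀ (F : E[X]), IntegralAt v F → v.valuation E (F.derivative.eval z) = 1 →
      ∀ t, v.valuation E t ≤ 1 → v.valuation E (t - z) < 1 →
      v.valuation E (F.derivative.eval t) = 1 := by
    intro F hFi hFu t ht htz
    have h1 := hFi.derivative.sub_eval_lt ht hzi htz
    have := (v.valuation E).map_add_eq_of_lt_right (x := F.derivative.eval t - F.derivative.eval z)
      (y := F.derivative.eval z) (by rw [hFu]; exact h1)
    rwa [sub_add_cancel, hFu] at this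
  obtain ⟨s, hs, his⟩ := hS.exists_gt i
  have hs' : x s = y s := hs
  have hxs := hnear F x hFi hF hx hx0 i hi
  have hys := hnear G y hGi hG hy hy0 s (by rw [← hs']; exact hxs s his.le)
  exact etale_case_field v F G x y hx hy hFi hGi hx0 hy0 s
    (fun n hn => hunit F hFi hFu _ (hFi.orbit hx hx0 n) (hxs n (his.le.trans hn)))
    (fun n hn => hunit G hGi hGu _ (hGi.orbit hy hy0 n) (hys n hn)) hS

end FixedPoint

/-! ### Euler products -/

section Analytic

open Filter Topology

/-- Euler products: for a multiplicative `a ≥ 0` with `a (p ^ e) ≤ (e + 1) ^ m`, the logarithm of the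
Dirichlet series of `a` is the sum over the primes up to a bounded error. -/
lemma log_dirichlet_sub_prime_sum (a : ℕ → ℝ) (m : ℕ) (h0 : ∀ n, 0 ≤ a n) (h1 : a 1 = 1)
    (hmul : ∀ {k n : ℕ}, k.Coprime n → a (k * n) = a k * a n)
    (hpow : ∀ (p e : ℕ), p.Prime → a (p ^ e) ≤ ((e + 1 : ℕ) : ℝ) ^ m)
    (hsum : ∀ s : ℝ, 1 < s → Summable fun n : ℕ => a n * (n : ℝ) ^ (-s)) :
    ∃ C, ∀ s : ℝ, 1 < s →
      |Real.log (∑' n : ℕ, a n * (n : ℝ) ^ (-s)) -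
        ∑' p : Nat.Primes, a p * ((p : ℕ) : ℝ) ^ (-s)| ≤ C := by
  -- the tail of an Euler factor is at most `K₁ / p ^ 2`
  set K₁ : ℝ := ∑' e : ℕ, ((e + 3 : ℕ) : ℝ) ^ m * (1 / 2) ^ e with hK₁
  have hK₁s : Summable fun e : ℕ => ((e + 3 : ℕ) : ℝ) ^ m * (1 / 2 : ℝ) ^ e := by
    have h := summable_pow_mul_geometric_of_norm_lt_one (R := ℝ) m (r := 1 / 2) (by norm_num)
    have h2 := ((summable_nat_add_iff 3).mpr h).mul_left (8 : ℝ)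
    refine h2.congr fun e => ?_
    rw [pow_add]
    push_cast
    ring
  have hK₁0 : 0 ≤ K₁ := tsum_nonneg fun e => by positivity
  set K : ℝ := K₁ + (2 ^ m + K₁) ^ 2 with hK
  have hinv : Summable fun p : Nat.Primes => (((p : ℕ) : ℝ) ^ 2)⁻¹ :=
    (Real.summable_nat_pow_inv.mpr one_lt_two).comp_injective (Subtype.val_injective)
  refine ⟨∑' p : Nat.Primes, K * (((p : ℕ) : ℝ) ^ 2)⁻¹, fun s hs => ?_⟩
  set f : ℕ → ℝ := fun n => a n * (n : ℝ) ^ (-s) with hf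
  have hf0 : ∀ n, 0 ≤ f n := fun n => mul_nonneg (h0 n) (Real.rpow_nonneg (Nat.cast_nonneg _) _)
  have hfs : Summable f := hsum s hs
  have hfz : f 0 = 0 := by
    simp only [hf, Nat.cast_zero]
    rw [Real.zero_rpow (by linarith), mul_zero]
  have hf1 : f 1 = 1 := by simp [hf, h1]
  have hprod := EulerProduct.eulerProduct_hasProd (f := f) hf1
    (by
      intro k n hkn
      simp only [hf]
      rw [hmul hkn, Nat.cast_mul, Real.mul_rpow (Nat.cast_nonneg _) (Nat.cast_nonneg _)]
      ring)
    (by simpa [Real.norm_of_nonneg (hf0 _)] using hfs) hfz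
  have hfp : ∀ p : Nat.Primes, Summable fun e => f ((p : ℕ) ^ e) := fun p =>
    hfs.comp_injective (Nat.pow_right_injective p.2.two_le)
  set t : Nat.Primes → ℝ := fun p => ∑' e, f ((p : ℕ) ^ (e + 1)) with ht
  set R : Nat.Primes → ℝ := fun p => ∑' e, f ((p : ℕ) ^ (e + 2)) with hR
  have ht0 : ∀ p, 0 ≤ t p := fun p => tsum_nonneg fun e => hf0 _
  have hR0 : ∀ p, 0 ≤ R p := fun p => tsum_nonneg fun e => hf0 _
  have hfac : ∀ p : Nat.Primes, ∑' e, f ((p : ℕ) ^ e) = 1 + t p := by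
    intro p
    rw [(hfp p).tsum_eq_zero_add, pow_zero, hf1]
  have htR : ∀ p : Nat.Primes, t p = f p + R p := by
    intro p
    have : Summable fun e => f ((p : ℕ) ^ (e + 1)) := (summable_nat_add_iff 1).mpr (hfp p)
    simp only [ht, hR]
    rw [this.tsum_eq_zero_add]
    simp
  have hfpe : ∀ (p : Nat.Primes) (e : ℕ),
      f ((p : ℕ) ^ e) ≤ ((e + 1 : ℕ) : ℝ) ^ m * ((((p : ℕ) : ℝ) ^ e)⁻¹) := by
    intro p e
    simp only [hf]
    refine mul_le_mul (hpow p e p.2) ?_ (Real.rpow_nonneg (Nat.cast_nonneg _) _) (by positivity)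
    rw [Nat.cast_pow, ← Real.rpow_neg_one]
    refine Real.rpow_le_rpow_of_exponent_le (one_le_pow₀ ?_) (by linarith)
    exact_mod_cast p.2.one_le
  have hRK : ∀ p : Nat.Primes, R p ≤ K₁ * (((p : ℕ) : ℝ) ^ 2)⁻¹ := by
    intro p
    rw [hK₁, ← tsum_mul_right]
    refine Summable.tsum_le_tsum (fun e => ?_) ((summable_nat_add_iff 2).mpr (hfp p))
      (hK₁s.mul_right _)
    refine (hfpe p (e + 2)).trans ?_
    rw [pow_add, mul_inv, ← mul_assoc]
    refine mul_le_mul_of_nonneg_right ?_ (by positivity)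
    refine mul_le_mul_of_nonneg_left ?_ (by positivity)
    rw [one_div, inv_pow]
    refine inv_anti₀ (by positivity) (pow_le_pow_left₀ (by norm_num) ?_ _)
    exact_mod_cast p.2.two_le
  have htK : ∀ p : Nat.Primes, t p ≤ (2 ^ m + K₁) * (((p : ℕ) : ℝ))⁻¹ := by
    intro p
    rw [htR, add_mul]
    refine add_le_add ?_ ((hRK p).trans ?_)
    · have := hfpe p 1
      simpa [one_add_one_eq_two] using this
    · refine mul_le_mul_of_nonneg_left ?_ hK₁0
      have hp1 : (1 : ℝ) ≤ (p : ℕ) := by exact_mod_cast p.2.one_le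
      exact inv_anti₀ (by positivity) (by nlinarith)
  have hkey : ∀ p : Nat.Primes, |Real.log (1 + t p) - f p| ≤ K * (((p : ℕ) : ℝ) ^ 2)⁻¹ := by
    intro p
    have hup : Real.log (1 + t p) ≤ t p := by
      have := Real.log_le_sub_one_of_pos (show 0 < 1 + t p by linarith [ht0 p])
      linarith
    have hlo : t p - t p ^ 2 ≤ Real.log (1 + t p) := by
      refine le_trans ?_ (Real.le_log_one_add_of_nonneg (ht0 p))
      rw [le_div_iff₀ (by linarith [ht0 p])]
      nlinarith [ht0 p, pow_nonneg (ht0 p) 2, pow_nonneg (ht0 p) 3]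
    have hsq : t p ^ 2 ≤ (2 ^ m + K₁) ^ 2 * (((p : ℕ) : ℝ) ^ 2)⁻¹ := by
      have := pow_le_pow_left₀ (ht0 p) (htK p) 2
      rwa [mul_pow, inv_pow] at this
    have h2 := hRK p
    have h3 := htR p
    have h4 := hR0 p
    rw [hK, add_mul, abs_le]
    have h5 : 0 ≤ K₁ * (((p : ℕ) : ℝ) ^ 2)⁻¹ := by positivity
    have h6 : 0 ≤ (2 ^ m + K₁) ^ 2 * (((p : ℕ) : ℝ) ^ 2)⁻¹ := by positivity
    constructor <;> linarith
  have hZ1 : 1 ≤ ∑' n, f n := by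
    rw [← hf1]
    exact hfs.le_tsum 1 fun n _ => hf0 n
  have hlog : HasSum (fun p => Real.log (1 + t p)) (Real.log (∑' n, f n)) := by
    have h2 : Tendsto (fun T : Finset Nat.Primes => Real.log (∏ p ∈ T, ∑' e, f ((p : ℕ) ^ e))) atTop
        (𝓝 (Real.log (∑' n, f n))) :=
      ((Real.continuousAt_log (by linarith)).tendsto).comp hprod
    refine h2.congr fun T => ?_
    rw [Real.log_prod]
    · exact Finset.sum_congr rfl fun p _ => by rw [hfac]
    · intro p _
      rw [hfac]
      linarith [ht0 p]
  have hfps : Summable fun p : Nat.Primes => f p := hfs.comp_injective Subtype.val_injective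
  have hdiff := hlog.sub hfps.hasSum
  rw [← hdiff.tsum_eq]
  have hKs : Summable fun p : Nat.Primes => K * (((p : ℕ) : ℝ) ^ 2)⁻¹ := hinv.mul_left K
  have := tsum_of_norm_bounded (f := fun p : Nat.Primes => Real.log (1 + t p) - f p) hKs.hasSum hkey
  simpa using this

end Analytic

/-! ### Counting ideals of given norm -/

section IdealCount

variable (F : Type*) [Field F] [NumberField F]

/-- The number of ideals of `𝓞 F` of norm `n`. -/
noncomputable def idealCount (n : ℕ) : ℕ := Nat.card {I : Ideal (𝓞 F) // Ideal.absNorm I = n}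

lemma idealCount_one : idealCount F 1 = 1 := by
  unfold idealCount
  simp only [Ideal.absNorm_eq_one_iff]
  simp

variable {F} in
lemma natCast_mem_of_absNorm {I : Ideal (𝓞 F)} {n : ℕ} (h : Ideal.absNorm I = n) :
    (n : 𝓞 F) ∈ I := h ▸ Ideal.absNorm_mem I

variable {F} in
lemma absNorm_dvd_pow {I : Ideal (𝓞 F)} {n : ℕ} (h : (n : 𝓞 F) ∈ I) :
    Ideal.absNorm I ∣ n ^ Module.finrank ℤ (𝓞 F) := by
  rw [← Ideal.absNorm_span_natCast]
  exact Ideal.absNorm_dvd_absNorm_of_le ((Ideal.span_singleton_le_iff_mem _).mpr h)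

variable {F} in
lemma sup_eq_top_of_coprime {I J : Ideal (𝓞 F)} {k n : ℕ} (hkn : k.Coprime n)
    (hI : (k : 𝓞 F) ∈ I) (hJ : (n : 𝓞 F) ∈ J) : I ⊔ J = ⊤ := by
  rw [Ideal.eq_top_iff_one]
  obtain ⟨a, b, hab⟩ := Nat.isCoprime_iff_coprime.mpr hkn
  have h : (1 : 𝓞 F) = a * k + b * n := by exact_mod_cast congrArg (Int.cast (R := 𝓞 F)) hab.symm
  rw [h]
  exact Ideal.add_mem _ (Ideal.mem_sup_left (Ideal.mul_mem_left _ _ hI))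
    (Ideal.mem_sup_right (Ideal.mul_mem_left _ _ hJ))

lemma idealCount_mul {k n : ℕ} (hkn : k.Coprime n) :
    idealCount F (k * n) = idealCount F k * idealCount F n := by
  by_cases hk0 : k = 0
  · subst hk0
    rw [Nat.coprime_zero_left] at hkn
    subst hkn
    simp [idealCount_one]
  by_cases hn0 : n = 0
  · subst hn0
    rw [Nat.coprime_zero_right] at hkn
    subst hkn
    simp [idealCount_one]
  unfold idealCount
  rw [← Nat.card_prod]
  symm
  refine Nat.card_eq_of_bijective
    (fun IJ : {I : Ideal (𝓞 F) // Ideal.absNorm I = k} × {I : Ideal (𝓞 F) // Ideal.absNorm I = n} =>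
      (⟨IJ.1.1 * IJ.2.1, by rw [map_mul, IJ.1.2, IJ.2.2]⟩ :
        {I : Ideal (𝓞 F) // Ideal.absNorm I = k * n})) ⟨?_, ?_⟩
  · rintro ⟨⟨I, hI⟩, ⟨J, hJ⟩⟩ ⟨⟨I', hI'⟩, ⟨J', hJ'⟩⟩ h
    have h' : I * J = I' * J' := congrArg Subtype.val h
    have key : ∀ {I J I' J' : Ideal (𝓞 F)} {k n : ℕ}, k.Coprime n → Ideal.absNorm I = k →
        Ideal.absNorm J' = n → I * J = I' * J' → I' ≤ I := by
      intro I J I' J' k n hkn hI hJ' h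
      have hcop : IsCoprime I J' := by
        rw [Ideal.isCoprime_iff_sup_eq]
        exact sup_eq_top_of_coprime hkn (natCast_mem_of_absNorm hI) (natCast_mem_of_absNorm hJ')
      exact Ideal.le_of_dvd (hcop.dvd_of_dvd_mul_right (h ▸ Dvd.intro _ rfl))
    have e1 : I = I' := le_antisymm (key hkn hI' hJ h'.symm) (key hkn hI hJ' h')
    have e2 : J = J' := le_antisymm
      (key hkn.symm hJ' hI (by rw [mul_comm, ← h', mul_comm]))
      (key hkn.symm hJ hI' (by rw [mul_comm, h', mul_comm]))
    simp [e1, e2]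
  · rintro ⟨M, hM⟩
    set I := M ⊔ Ideal.span {(k : 𝓞 F)} with hI
    set J := M ⊔ Ideal.span {(n : 𝓞 F)} with hJ
    have hkI : (k : 𝓞 F) ∈ I := Ideal.mem_sup_right (Ideal.mem_span_singleton_self _)
    have hnJ : (n : 𝓞 F) ∈ J := Ideal.mem_sup_right (Ideal.mem_span_singleton_self _)
    have hMI : M ≤ I := le_sup_left
    have hMJ : M ≤ J := le_sup_left
    have hprod : I * J = M := by
      apply le_antisymm
      · rw [hI, hJ, Ideal.sup_mul, Ideal.mul_sup, Ideal.mul_sup,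
          Ideal.span_singleton_mul_span_singleton]
        refine sup_le (sup_le Ideal.mul_le_left Ideal.mul_le_left)
          (sup_le Ideal.mul_le_right ?_)
        rw [Ideal.span_singleton_le_iff_mem]
        exact_mod_cast natCast_mem_of_absNorm hM
      · intro x hx
        obtain ⟨a, b, hab⟩ := Nat.isCoprime_iff_coprime.mpr hkn
        have h : (a : 𝓞 F) * k + b * n = 1 := by exact_mod_cast congrArg (Int.cast (R := 𝓞 F)) hab
        have hx' : x = (k : 𝓞 F) * (a * x) + (b * x) * n := by linear_combination -x * h
        rw [hx']
        exact Ideal.add_mem _ (Ideal.mul_mem_mul hkI (hMJ (Ideal.mul_mem_left _ _ hx)))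
          (Ideal.mul_mem_mul (hMI (Ideal.mul_mem_left _ _ hx)) hnJ)
    have hN : Ideal.absNorm I * Ideal.absNorm J = k * n := by rw [← map_mul, hprod, hM]
    have hIk : Ideal.absNorm I ∣ k := by
      have h1 : (Ideal.absNorm I).Coprime n :=
        Nat.Coprime.coprime_dvd_left (absNorm_dvd_pow hkI) (hkn.pow_left _)
      exact h1.dvd_of_dvd_mul_right (hN ▸ Dvd.intro _ rfl)
    have hJn : Ideal.absNorm J ∣ n := by
      have h1 : (Ideal.absNorm J).Coprime k :=
        Nat.Coprime.coprime_dvd_left (absNorm_dvd_pow hnJ) (hkn.symm.pow_left _)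
      exact h1.dvd_of_dvd_mul_left (hN ▸ Dvd.intro_left _ rfl)
    have hI1 : Ideal.absNorm I = k := by
      apply Nat.dvd_antisymm hIk
      have h2 : k * n ∣ Ideal.absNorm I * n := by
        rw [← hN]; exact Nat.mul_dvd_mul_left _ hJn
      exact Nat.dvd_of_mul_dvd_mul_right (Nat.pos_of_ne_zero hn0) h2
    have hJ1 : Ideal.absNorm J = n := by
      rw [hI1] at hN
      exact Nat.eq_of_mul_eq_mul_left (Nat.pos_of_ne_zero hk0) hN
    exact ⟨⟨⟨I, hI1⟩, ⟨J, hJ1⟩⟩, Subtype.ext hprod⟩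

open UniqueFactorizationMonoid in
lemma idealCount_prime_pow_le (p e : ℕ) (hp : p.Prime) :
    idealCount F (p ^ e) ≤ (e + 1) ^ Module.finrank ℤ (𝓞 F) := by
  classical
  set m := Module.finrank ℤ (𝓞 F)
  have hp0 : Ideal.span {(p : 𝓞 F)} ≠ ⊥ := by
    simpa using hp.ne_zero
  set T := (normalizedFactors (Ideal.span {(p : 𝓞 F)})).toFinset with hT
  have hTmem : ∀ P, P ∈ T ↔ Prime P ∧ (p : 𝓞 F) ∈ P := by
    intro P
    rw [hT, Multiset.mem_toFinset, Ideal.mem_normalizedFactors_iff hp0,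
      Ideal.span_singleton_le_iff_mem]
    constructor
    · rintro ⟨h1, h2⟩
      refine ⟨Ideal.prime_of_isPrime ?_ h1, h2⟩
      rintro rfl
      rw [Ideal.mem_bot] at h2
      exact hp.ne_zero (by exact_mod_cast h2)
    · rintro ⟨h1, h2⟩
      exact ⟨Ideal.isPrime_of_prime h1, h2⟩
  have hNp : ∀ P ∈ T, p ∣ Ideal.absNorm P := by
    intro P hP
    obtain ⟨h1, h2⟩ := (hTmem P).mp hP
    obtain ⟨f, -, hf⟩ := (Nat.dvd_prime_pow hp).mp (absNorm_dvd_pow h2)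
    rcases Nat.eq_zero_or_pos f with rfl | hf0
    · rw [pow_zero, Ideal.absNorm_eq_one_iff] at hf
      exact absurd hf (Ideal.isPrime_of_prime h1).ne_top
    · rw [hf]; exact dvd_pow_self p hf0.ne'
  have hcard : T.card ≤ m := by
    have h1 : ∏ P ∈ T, P ∣ Ideal.span {(p : 𝓞 F)} := by
      refine Finset.prod_primes_dvd _ (fun P hP => ((hTmem P).mp hP).1) fun P hP => ?_
      rw [Ideal.dvd_span_singleton]
      exact ((hTmem P).mp hP).2
    have h2 : ∏ P ∈ T, Ideal.absNorm P ∣ p ^ m := by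
      rw [← map_prod, ← Ideal.absNorm_span_natCast]
      exact map_dvd _ h1
    have h3 : p ^ T.card ∣ ∏ P ∈ T, Ideal.absNorm P := by
      rw [← Finset.prod_const]
      exact Finset.prod_dvd_prod_of_dvd _ _ hNp
    exact (Nat.pow_dvd_pow_iff_le_right hp.one_lt).mp (h3.trans h2)
  have hI0 : ∀ I : Ideal (𝓞 F), Ideal.absNorm I = p ^ e → I ≠ ⊥ := by
    rintro I hI rfl
    rw [Ideal.absNorm_bot] at hI
    exact (pow_pos hp.pos e).ne hI
  have hIT : ∀ I : Ideal (𝓞 F), Ideal.absNorm I = p ^ e →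
      ∀ P ∈ normalizedFactors I, P ∈ T := by
    intro I hI P hP
    rw [hTmem]
    have hprime := prime_of_normalized_factor P hP
    refine ⟨hprime, ?_⟩
    have h1 : I ≤ P := Ideal.le_of_dvd (dvd_of_mem_normalizedFactors hP)
    have h2 := h1 (natCast_mem_of_absNorm hI)
    rw [Nat.cast_pow] at h2
    exact (Ideal.isPrime_of_prime hprime).mem_of_pow_mem _ h2
  have hcount : ∀ I : Ideal (𝓞 F), Ideal.absNorm I = p ^ e → ∀ P ∈ T,
      (normalizedFactors I).count P < e + 1 := by
    intro I hI P hP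
    set c := (normalizedFactors I).count P
    have h1 : P ^ c ∣ I := by
      rw [← (prod_normalizedFactors (hI0 I hI)).dvd_iff_dvd_right]
      rw [← Multiset.prod_replicate]
      exact Multiset.prod_dvd_prod_of_le (Multiset.le_count_iff_replicate_le.mp le_rfl)
    have h2 : p ^ c ∣ p ^ e := by
      rw [← hI]
      refine (pow_dvd_pow_of_dvd (hNp P hP) c).trans ?_
      rw [← map_pow]
      exact map_dvd _ h1
    have := (Nat.pow_dvd_pow_iff_le_right hp.one_lt).mp h2
    omega
  have hinj : Function.Injective
      (fun (I : {I : Ideal (𝓞 F) // Ideal.absNorm I = p ^ e}) (P : T) =>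
        (⟨(normalizedFactors I.1).count P.1, hcount I.1 I.2 P.1 P.2⟩ : Fin (e + 1))) := by
    rintro ⟨I, hI⟩ ⟨J, hJ⟩ h
    have h1 : normalizedFactors I = normalizedFactors J := by
      ext P
      by_cases hP : P ∈ T
      · exact congrArg Fin.val (congrFun h ⟨P, hP⟩)
      · rw [Multiset.count_eq_zero_of_notMem fun h => hP (hIT I hI P h),
          Multiset.count_eq_zero_of_notMem fun h => hP (hIT J hJ P h)]
    have h2 : I = J := by
      rw [← associated_iff_eq]
      exact (associated_iff_normalizedFactors_eq_normalizedFactors (hI0 I hI) (hI0 J hJ)).mpr h1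
    exact Subtype.ext h2
  unfold idealCount
  refine (Nat.card_le_card_of_injective _ hinj).trans ?_
  rw [Nat.card_eq_fintype_card, Fintype.card_fun, Fintype.card_fin, Fintype.card_coe]
  exact Nat.pow_le_pow_right (Nat.succ_pos _) hcard

end IdealCount

/-! ### Prime ideals of degree one and the Dedekind zeta function -/

section ZetaAsymptotics

open Filter Topology

variable (F : Type*) [Field F] [NumberField F]

lemma tendsto_sum_idealCount_div :
    Tendsto (fun n : ℕ => (∑ k ∈ Finset.Icc 1 n, (idealCount F k : ℝ)) / n) atTop
      (𝓝 (dedekindZeta_residue F)) := by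
  refine ((Ideal.tendsto_norm_le_div_atTop₀ F).comp tendsto_natCast_atTop_atTop).congr fun n ↦ ?_
  simp only [Function.comp_apply, Nat.cast_le, ← Nat.cast_sum, idealCount]
  congr
  rw [← add_left_inj 1, ← Ideal.card_norm_le_eq_card_norm_le_add_one,
    show Finset.Icc 1 n = Finset.Ioc 0 n from Finset.Icc_succ_left_eq_Ioc _ _,
    show 1 = Nat.card {I : Ideal (𝓞 F) // Ideal.absNorm I = 0} by
      simp [Ideal.absNorm_eq_zero_iff],
    Finset.sum_Ioc_add_eq_sum_Icc (n.zero_le),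
    ← Finset.card_preimage_eq_sum_card_image_eq (fun k _ ↦ Ideal.finite_setOfPred_absNorm_eq k)]
  simp [Set.coe_eq_subtype]

lemma term_idealCount (s : ℝ) (hs : 1 < s) (n : ℕ) :
    LSeries.term (fun n => ((idealCount F n : ℝ) : ℂ)) s n =
      (((idealCount F n : ℝ) * (n : ℝ) ^ (-s) : ℝ) : ℂ) := by
  rcases eq_or_ne n 0 with rfl | hn
  · rw [LSeries.term_zero, Nat.cast_zero, Real.zero_rpow (by linarith)]
    simp
  · rw [LSeries.term_of_ne_zero hn, Real.rpow_neg (Nat.cast_nonneg _), ← div_eq_mul_inv]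
    push_cast
    rw [Complex.ofReal_cpow (Nat.cast_nonneg _)]
    simp

lemma summable_idealCount (s : ℝ) (hs : 1 < s) :
    Summable fun n : ℕ => (idealCount F n : ℝ) * (n : ℝ) ^ (-s) := by
  have h : LSeriesSummable (fun n => ((idealCount F n : ℝ) : ℂ)) s := by
    refine LSeriesSummable_of_sum_norm_bigO_and_nonneg ?_ (fun _ => Nat.cast_nonneg _)
      zero_le_one (by simpa using hs)
    exact Asymptotics.isBigO_atTop_natCast_rpow_of_tendsto_div_rpow (by simpa using tendsto_sum_idealCount_div F)
  unfold LSeriesSummable at h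
  rw [funext (term_idealCount F s hs)] at h
  exact_mod_cast h

lemma summable_idealCount_primes (s : ℝ) (hs : 1 < s) :
    Summable fun p : Nat.Primes => (idealCount F p : ℝ) * ((p : ℕ) : ℝ) ^ (-s) :=
  (summable_idealCount F s hs).comp_injective Subtype.val_injective

lemma dedekindZeta_eq_tsum (s : ℝ) (hs : 1 < s) :
    dedekindZeta F s = ((∑' n : ℕ, (idealCount F n : ℝ) * (n : ℝ) ^ (-s) : ℝ) : ℂ) := by
  rw [Complex.ofReal_tsum]
  exact tsum_congr fun n => term_idealCount F s hs n

/-- Prime ideals of degree one: `∑ a(p) p⁻ˢ = log (1 / (s - 1)) + O(1)` as `s → 1⁺`. -/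
lemma prime_ideal_sum_asymptotic :
    ∃ C, ∀ᶠ s : ℝ in 𝓝[>] 1,
      |∑' p : Nat.Primes, (idealCount F p : ℝ) * ((p : ℕ) : ℝ) ^ (-s) + Real.log (s - 1)| ≤ C := by
  obtain ⟨C, hC⟩ := log_dirichlet_sub_prime_sum (fun n => (idealCount F n : ℝ))
    (Module.finrank ℤ (𝓞 F)) (fun _ => Nat.cast_nonneg _) (by simp [idealCount_one])
    (fun hkn => by rw [idealCount_mul F hkn]; push_cast; ring)
    (fun p e hp => by exact_mod_cast idealCount_prime_pow_le F p e hp) (summable_idealCount F)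
  set ρ := dedekindZeta_residue F
  have hρ : 0 < ρ := dedekindZeta_residue_pos F
  set Z : ℝ → ℝ := fun s => ∑' n : ℕ, (idealCount F n : ℝ) * (n : ℝ) ^ (-s) with hZ
  have h1 : Tendsto (fun s : ℝ => (s - 1) * Z s) (𝓝[>] 1) (𝓝 ρ) := by
    have h := tendsto_sub_one_mul_dedekindZeta_nhdsGT F
    rw [← tendsto_ofReal_iff]
    refine h.congr' ?_
    filter_upwards [self_mem_nhdsWithin] with s hs
    rw [dedekindZeta_eq_tsum F s hs]
    rw [Complex.ofReal_mul, Complex.ofReal_sub, Complex.ofReal_one]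
  have h2 : Tendsto (fun s : ℝ => Real.log ((s - 1) * Z s)) (𝓝[>] 1) (𝓝 (Real.log ρ)) :=
    (Real.continuousAt_log hρ.ne').tendsto.comp h1
  have h3 : ∀ᶠ s : ℝ in 𝓝[>] 1, |Real.log ((s - 1) * Z s)| < |Real.log ρ| + 1 :=
    h2.abs.eventually_lt_const (lt_add_one _)
  have h4 : ∀ᶠ s : ℝ in 𝓝[>] 1, 0 < (s - 1) * Z s := h1.eventually_const_lt hρ
  refine ⟨C + (|Real.log ρ| + 1), ?_⟩
  filter_upwards [h3, h4, self_mem_nhdsWithin] with s hs3 hs4 hs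
  have hs1 : 0 < s - 1 := sub_pos.mpr hs
  have hZ0 : 0 < Z s := (pos_iff_pos_of_mul_pos hs4).mp hs1
  rw [Real.log_mul hs1.ne' hZ0.ne'] at hs3
  have h5 := hC s hs
  have h6 := abs_le.mp h5
  have h7 := abs_lt.mp hs3
  rw [abs_le]
  constructor <;> linarith [h6.1, h6.2, h7.1, h7.2]

end ZetaAsymptotics

/-! ### Primes of residue degree one -/

section ResidueDegreeOne

variable {F : Type*} [Field F] [NumberField F]

/-- An integral primitive element `θ`, with an integer `c ≠ 0` such that `c 𝓞_F ⊆ ℤ[θ]`. -/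
lemma exists_integral_generator (F : Type*) [Field F] [NumberField F] :
    ∃ θ : 𝓞 F, ∃ c : ℤ, c ≠ 0 ∧ ∀ x : 𝓞 F, ∃ q : ℤ[X], (c : 𝓞 F) * x = aeval θ q := by
  let B := Field.powerBasisOfFiniteOfSeparable ℚ F
  obtain ⟨y, hy, hInt⟩ := ((IsFractionRing.isAlgebraic_iff ℤ ℚ F).mpr
    (Algebra.IsAlgebraic.isAlgebraic B.gen)).exists_integral_multiple
  have hmem : B.gen ∈ Algebra.adjoin ℚ {y • B.gen} := by
    have h1 : B.gen = (y : ℚ)⁻¹ • (y • B.gen) := by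
      have : (y : ℚ) ≠ 0 := by exact_mod_cast hy
      rw [← Int.cast_smul_eq_zsmul ℚ y B.gen, smul_smul, inv_mul_cancel₀ this, one_smul]
    have h2 := Subalgebra.smul_mem (Algebra.adjoin ℚ {y • B.gen})
      (Algebra.subset_adjoin (Set.mem_singleton _)) (y : ℚ)⁻¹
    rwa [← h1] at h2
  have htop : Algebra.adjoin ℚ {y • B.gen} = ⊤ := by
    rw [eq_top_iff, ← B.adjoin_gen_eq_top]
    exact Algebra.adjoin_le (by simpa using hmem)
  let B' := PowerBasis.ofAdjoinEqTop (IsIntegral.tower_top (A := ℚ) hInt) htop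
  have hgen : B'.gen = y • B.gen := PowerBasis.ofAdjoinEqTop_gen _ _
  have hInt' : IsIntegral ℤ B'.gen := by rw [hgen]; exact hInt
  set D := Algebra.discr ℚ B'.basis with hD
  have hD0 : D ≠ 0 := Algebra.discr_not_zero_of_basis ℚ B'.basis
  obtain ⟨θ, hθ⟩ : ∃ θ : 𝓞 F, algebraMap (𝓞 F) F θ = B'.gen := ⟨⟨B'.gen, hInt'⟩, rfl⟩
  refine ⟨θ, D.num, by simpa using hD0, fun x => ?_⟩
  have h := Algebra.discr_mul_isIntegral_mem_adjoin (R := ℤ) ℚ hInt' x.2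
  have h2 : ((D.num : ℤ) : F) * (x : F) ∈ Algebra.adjoin ℤ {B'.gen} := by
    have : ((D.num : ℤ) : F) * (x : F) = (D.den : ℤ) • (D • (x : F)) := by
      rw [← Int.cast_smul_eq_zsmul ℚ, smul_smul]
      have : ((D.den : ℤ) : ℚ) * D = (D.num : ℚ) := by
        exact_mod_cast Rat.den_mul_eq_num D
      rw [this, Algebra.smul_def]
      simp
    rw [this]
    exact Subalgebra.smul_mem _ h _
  rw [Algebra.adjoin_singleton_eq_range_aeval] at h2
  obtain ⟨q, hq⟩ := h2
  refine ⟨q, ?_⟩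
  apply RingOfIntegers.coe_injective
  have h3 : algebraMap (𝓞 F) F (aeval θ q) = aeval B'.gen q := by
    rw [← hθ]; exact (aeval_algebraMap_apply F θ q).symm
  rw [h3, map_mul, map_intCast]
  exact hq.symm

lemma exists_int_of_absNorm_prime {p : ℕ} (hp : p.Prime) {P : Ideal (𝓞 F)}
    (h : Ideal.absNorm P = p) (x : 𝓞 F) : ∃ n : ℤ, x - n ∈ P := by
  have := Fact.mk hp
  have hpP : (p : 𝓞 F) ∈ P := h ▸ Ideal.absNorm_mem P
  have hcard : Nat.card (𝓞 F ⧸ P) = p := by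
    rw [← h, Ideal.absNorm_apply, Submodule.cardQuot_apply]
  have : Finite (𝓞 F ⧸ P) := Nat.finite_of_card_ne_zero (hcard ▸ hp.ne_zero)
  have : Nontrivial (𝓞 F ⧸ P) := by
    rw [← Finite.one_lt_card_iff_nontrivial, hcard]; exact hp.one_lt
  have hp0 : ((p : ℕ) : 𝓞 F ⧸ P) = 0 := by
    have := Ideal.Quotient.eq_zero_iff_mem.mpr hpP
    simpa using this
  have : CharP (𝓞 F ⧸ P) p := (CharP.charP_iff_prime_eq_zero hp).mpr hp0
  have hinj : Function.Injective (ZMod.castHom (dvd_refl p) (𝓞 F ⧸ P)) := RingHom.injective _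
  have hsurj : Function.Surjective (ZMod.castHom (dvd_refl p) (𝓞 F ⧸ P)) := by
    refine ((Nat.bijective_iff_injective_and_card _).mpr ⟨hinj, ?_⟩).2
    rw [hcard, Nat.card_zmod]
  obtain ⟨n, hn⟩ := hsurj (Ideal.Quotient.mk P x)
  obtain ⟨m, rfl⟩ := ZMod.intCast_surjective n
  refine ⟨m, ?_⟩
  rw [← Ideal.Quotient.eq_zero_iff_mem, map_sub, ← hn]
  simp

lemma absNorm_eq_prime {p : ℕ} (hp : p.Prime) {P : Ideal (𝓞 F)} (hP : P ≠ ⊤)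
    (hpP : (p : 𝓞 F) ∈ P) (h : ∀ x : 𝓞 F, ∃ n : ℤ, x - n ∈ P) : Ideal.absNorm P = p := by
  have := Fact.mk hp
  have : Nontrivial (𝓞 F ⧸ P) := Ideal.Quotient.nontrivial_iff.mpr hP
  have hp0 : ((p : ℕ) : 𝓞 F ⧸ P) = 0 := by
    have := Ideal.Quotient.eq_zero_iff_mem.mpr hpP
    simpa using this
  have : CharP (𝓞 F ⧸ P) p := (CharP.charP_iff_prime_eq_zero hp).mpr hp0
  have hinj : Function.Injective (ZMod.castHom (dvd_refl p) (𝓞 F ⧸ P)) := RingHom.injective _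
  have hsurj : Function.Surjective (ZMod.castHom (dvd_refl p) (𝓞 F ⧸ P)) := by
    intro y
    obtain ⟨x, rfl⟩ := Ideal.Quotient.mk_surjective y
    obtain ⟨n, hn⟩ := h x
    refine ⟨n, ?_⟩
    have := Ideal.Quotient.eq_zero_iff_mem.mpr hn
    rw [map_sub, sub_eq_zero] at this
    rw [this]; simp
  rw [Ideal.absNorm_apply, Submodule.cardQuot_apply,
    ← Nat.card_congr (Equiv.ofBijective _ ⟨hinj, hsurj⟩), Nat.card_zmod]

lemma int_dvd_of_mem {p : ℕ} (hp : p.Prime) {R : Type*} [CommRing R] {P : Ideal R} (hP : P ≠ ⊤)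
    (hpP : (p : R) ∈ P) {n : ℤ} (hn : (n : R) ∈ P) : (p : ℤ) ∣ n := by
  by_contra hcon
  have hc : IsCoprime (p : ℤ) n := (Nat.prime_iff_prime_int.mp hp).coprime_iff_not_dvd.mpr hcon
  obtain ⟨a, b, hab⟩ := hc
  apply hP
  rw [Ideal.eq_top_iff_one]
  have : (1 : R) = (a : R) * (p : R) + b * n := by
    exact_mod_cast (congrArg (Int.cast : ℤ → R) hab).symm
  rw [this]
  exact add_mem (P.mul_mem_left _ hpP) (P.mul_mem_left _ hn)

/-- Finitely many nonzero algebraic integers avoid every prime ideal above almost all rational primes. -/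
lemma exists_avoiding (T : Set (𝓞 F)) (hT : T.Finite) (h0 : (0 : 𝓞 F) ∉ T) :
    ∃ M : ℕ, M ≠ 0 ∧ ∀ p : ℕ, p.Prime → ¬ p ∣ M → ∀ Q : Ideal (𝓞 F), Q ≠ ⊤ → (p : 𝓞 F) ∈ Q →
      ∀ d ∈ T, d ∉ Q := by
  refine ⟨∏ d ∈ hT.toFinset, Ideal.absNorm (Ideal.span {d}), ?_, ?_⟩
  · rw [Finset.prod_ne_zero_iff]
    intro d hd
    rw [Ne, Ideal.absNorm_eq_zero_iff, Ideal.span_singleton_eq_bot]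
    rintro rfl
    exact h0 (by simpa using hd)
  · intro p hp hpM Q hQ hpQ d hd hdQ
    apply hpM
    refine dvd_trans ?_ (Finset.dvd_prod_of_mem _ (hT.mem_toFinset.mpr hd))
    have h1 : ((Ideal.absNorm (Ideal.span {d}) : ℕ) : 𝓞 F) ∈ Q :=
      (Ideal.span_singleton_le_iff_mem Q).mpr hdQ (Ideal.absNorm_mem _)
    have := int_dvd_of_mem hp hQ hpQ (n := (Ideal.absNorm (Ideal.span {d}) : ℕ)) (by simpa using h1)
    exact_mod_cast this

end ResidueDegreeOne

/-! ### Counting degree one primes through Frobenius elements -/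

section Counting

variable {E : Type*} [Field E] [NumberField E] [IsGalois ℚ E]

/-- Modulo a maximal ideal containing `p`, the solutions of `y ^ p = y` are the integers. -/
lemma exists_int_of_pow_sub_mem {R : Type*} [CommRing R] {p : ℕ} (hp : p.Prime) {Q : Ideal R}
    (hQ : Q.IsMaximal) (hpQ : (p : R) ∈ Q) {y : R} (hy : y - y ^ p ∈ Q) :
    ∃ n : ℤ, y - n ∈ Q := by
  have := Fact.mk hp
  let _ : Field (R ⧸ Q) := Ideal.Quotient.field Q
  have hp0 : ((p : ℕ) : R ⧸ Q) = 0 := by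
    have := Ideal.Quotient.eq_zero_iff_mem.mpr hpQ
    simpa using this
  have : CharP (R ⧸ Q) p := (CharP.charP_iff_prime_eq_zero hp).mpr hp0
  let _ : Algebra (ZMod p) (R ⧸ Q) := ZMod.algebra _ p
  have h1 : (Ideal.Quotient.mk Q y) ^ p = Ideal.Quotient.mk Q y := by
    have := Ideal.Quotient.eq_zero_iff_mem.mpr hy
    rw [map_sub, sub_eq_zero, map_pow] at this
    exact this.symm
  rw [← Subfield.mem_bot_iff_pow_eq_self (R ⧸ Q) p, Subfield.bot_eq_of_zMod_algebra p] at h1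
  obtain ⟨n, hn⟩ := h1
  obtain ⟨m, rfl⟩ := ZMod.intCast_surjective n
  refine ⟨m, ?_⟩
  rw [← Ideal.Quotient.eq_zero_iff_mem, map_sub, ← hn]
  simp

/-- An automorphism fixing an integral generator of the fixed field of `H` lies in `H`. -/
lemma mem_of_fix_generator {H : Subgroup (E ≃ₐ[ℚ] E)}
    {θ : 𝓞 (IntermediateField.fixedField H)} {c : ℤ} (hc : c ≠ 0)
    (hθ : ∀ x : 𝓞 (IntermediateField.fixedField H), ∃ q : ℤ[X],
      (c : 𝓞 (IntermediateField.fixedField H)) * x = aeval θ q)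
    {g : E ≃ₐ[ℚ] E} (hg : g (θ : IntermediateField.fixedField H) = (θ : IntermediateField.fixedField H)) :
    g ∈ H := by
  rw [← IntermediateField.fixingSubgroup_fixedField H, IntermediateField.mem_fixingSubgroup_iff]
  intro x hx
  -- It is enough to treat integral elements, of which the field consists of the quotients.
  have hInt : ∀ y : 𝓞 (IntermediateField.fixedField H),
      g ((y : IntermediateField.fixedField H) : E) = (y : IntermediateField.fixedField H) := by
    intro y
    obtain ⟨q, hq⟩ := hθ y
    have h1 : (c : E) * ((y : IntermediateField.fixedField H) : E) =
        aeval ((θ : IntermediateField.fixedField H) : E) q := by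
      have h2 := congrArg (algebraMap (𝓞 (IntermediateField.fixedField H)) E) hq
      rw [map_mul, map_intCast, ← aeval_algebraMap_apply] at h2
      exact h2
    have h3 : g ((c : E) * ((y : IntermediateField.fixedField H) : E)) =
        (c : E) * ((y : IntermediateField.fixedField H) : E) := by
      have h4 : (g.toAlgHom.restrictScalars ℤ)
          (aeval ((θ : IntermediateField.fixedField H) : E) q) =
          aeval (g ((θ : IntermediateField.fixedField H) : E)) q := (aeval_algHom_apply _ _ q).symm
      rw [h1]
      exact h4.trans (by rw [hg])
    rw [map_mul, map_intCast] at h3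
    exact mul_left_cancel₀ (by exact_mod_cast hc) h3
  obtain ⟨a, b, hb, hab⟩ := IsFractionRing.div_surjective (A := 𝓞 (IntermediateField.fixedField H))
    (⟨x, hx⟩ : IntermediateField.fixedField H)
  have hx' : x = ((a : IntermediateField.fixedField H) : E) / ((b : IntermediateField.fixedField H) : E) := by
    have := congrArg (fun t : IntermediateField.fixedField H => (t : E)) hab
    simpa using this.symm
  rw [hx', map_div₀, hInt, hInt]

/-- For a Frobenius `φ` at `Q ∣ p`, the degree one primes above `p` in the fixed field of `H`
correspond to the left cosets `g H` with `g⁻¹ φ g ∈ H`. -/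
lemma card_conj_mem_eq (H : Subgroup (E ≃ₐ[ℚ] E)) :
    ∃ M : ℕ, M ≠ 0 ∧ ∀ p : ℕ, p.Prime → ¬ p ∣ M → ∀ Q : Ideal (𝓞 E), Q.IsPrime → (p : 𝓞 E) ∈ Q →
      ∀ φ : E ≃ₐ[ℚ] E, (∀ x : 𝓞 E, φ • x - x ^ p ∈ Q) →
        Nat.card {g : E ≃ₐ[ℚ] E // g⁻¹ * φ * g ∈ H} =
          Nat.card H * idealCount (IntermediateField.fixedField H) p := by
  classical
  set F := IntermediateField.fixedField H with hF
  obtain ⟨θ, c, hc, hθ⟩ := exists_integral_generator F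
  let ι : 𝓞 F →+* 𝓞 E := algebraMap (𝓞 F) (𝓞 E)
  have hfix : ∀ (h : E ≃ₐ[ℚ] E), h ∈ H → ∀ x : 𝓞 F, h • ι x = ι x := by
    intro h hh x
    apply RingOfIntegers.coe_injective
    exact (IntermediateField.mem_fixedField_iff H _).mp (x : F).2 h hh
  have hmem : ∀ g : E ≃ₐ[ℚ] E, g • ι θ = ι θ → g ∈ H := by
    intro g hg
    exact mem_of_fix_generator hc hθ (congrArg (algebraMap (𝓞 E) E) hg)
  -- The exceptional primes: those below `c` or below a difference of distinct conjugates of `θ`.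
  obtain ⟨M, hM, hMQ⟩ := exists_avoiding (F := E)
    (({(c : 𝓞 E)} ∪ Set.range fun gg : (E ≃ₐ[ℚ] E) × (E ≃ₐ[ℚ] E) => gg.1 • ι θ - gg.2 • ι θ) \ {0})
    (((Set.finite_singleton _).union (Set.finite_range _)).sdiff) (by simp)
  refine ⟨M, hM, fun p hp hpM Q hQ hpQ φ hφ => ?_⟩
  have hQtop : Q ≠ ⊤ := hQ.ne_top
  have hQbot : Q ≠ ⊥ := by
    rintro rfl
    exact hp.ne_zero (by exact_mod_cast (Ideal.mem_bot.mp hpQ))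
  have hcQ : (c : 𝓞 E) ∉ Q :=
    hMQ p hp hpM Q hQtop hpQ _ ⟨Or.inl rfl, by simpa using hc⟩
  have hdiff : ∀ g g' : E ≃ₐ[ℚ] E, g • ι θ - g' • ι θ ∈ Q → g • ι θ = g' • ι θ := by
    intro g g' h
    by_contra hne
    exact hMQ p hp hpM Q hQtop hpQ _ ⟨Or.inr ⟨(g, g'), rfl⟩, by simpa [sub_eq_zero] using hne⟩ h
  have hInt : ∀ n : ℤ, (p : ℤ) ∣ n → ∀ (R : Type _) [CommRing R] (I : Ideal R), (p : R) ∈ I →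
      (n : R) ∈ I := by
    rintro n ⟨m, rfl⟩ R _ I hI
    push_cast
    exact I.mul_mem_right _ hI
  -- The correspondence attaches to `g` the ideal `I g`, the contraction of `Q` along `g`.
  let ψ : (E ≃ₐ[ℚ] E) → (𝓞 F →+* 𝓞 E) := fun g => (MulSemiringAction.toRingHom _ (𝓞 E) g).comp ι
  have hψ : ∀ g x, ψ g x = g • ι x := fun g x => rfl
  let I : (E ≃ₐ[ℚ] E) → Ideal (𝓞 F) := fun g => Q.comap (ψ g)
  have hI : ∀ g x, x ∈ I g ↔ g • ι x ∈ Q := fun g x => Iff.rfl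
  have hItop : ∀ g, I g ≠ ⊤ := fun g => Ideal.comap_ne_top _ hQtop
  have hpI : ∀ g, (p : 𝓞 F) ∈ I g := by
    intro g
    show ψ g (p : 𝓞 F) ∈ Q
    rw [map_natCast]; exact hpQ
  have hIint : ∀ g (x : 𝓞 F) (n : ℤ), x - n ∈ I g ↔ g • ι x - n ∈ Q := by
    intro g x n
    show ψ g (x - n) ∈ Q ↔ _
    rw [map_sub, map_intCast, hψ]
  have hnorm : ∀ g, g⁻¹ * φ * g ∈ H → Ideal.absNorm (I g) = p := by
    intro g hg
    refine absNorm_eq_prime hp (hItop g) (hpI g) fun x => ?_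
    have h1 : φ • g • ι x = g • ι x := by
      have := hfix _ hg x
      rw [mul_smul, mul_smul, inv_smul_eq_iff] at this
      exact this
    have h2 : g • ι x - (g • ι x) ^ p ∈ Q := by
      have := hφ (g • ι x); rwa [h1] at this
    obtain ⟨n, hn⟩ := exists_int_of_pow_sub_mem hp (hQ.isMaximal hQbot) hpQ h2
    exact ⟨n, (hIint g x n).mpr hn⟩
  have hsurj : ∀ P : Ideal (𝓞 F), Ideal.absNorm P = p → ∃ g, g⁻¹ * φ * g ∈ H ∧ I g = P := by
    intro P hP
    have hpP : (p : 𝓞 F) ∈ P := hP ▸ Ideal.absNorm_mem P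
    have hPprime : P.IsPrime := Ideal.isPrime_of_irreducible_absNorm (hP ▸ hp)
    have hP0 : P ≠ ⊥ := by rintro rfl; rw [Ideal.absNorm_bot] at hP; exact hp.ne_zero hP.symm
    have hPmax : P.IsMaximal := hPprime.isMaximal hP0
    have hevalI : ∀ (R : Type _) [CommRing R] (J : Ideal R) (q : ℤ[X]) (y : R) (t : ℤ), y - t ∈ J →
        aeval y q - ((q.eval t : ℤ) : R) ∈ J := by
      intro R _ J q y t hy
      have h1 : ((q.eval t : ℤ) : R) = aeval (t : R) q := by
        rw [show (t : R) = algebraMap ℤ R t from rfl, aeval_algebraMap_apply]; simp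
      rw [h1, aeval_def, aeval_def, ← eval_map, ← eval_map]
      exact Ideal.mem_of_dvd J (sub_dvd_eval_sub _ _ _) hy
    obtain ⟨t, ht⟩ := exists_int_of_absNorm_prime hp hP θ
    -- some conjugate of `θ` is congruent to `t` modulo `Q`
    obtain ⟨g, hg⟩ : ∃ g : E ≃ₐ[ℚ] E, g • ι θ - t ∈ Q := by
      obtain ⟨P0, hP0⟩ := (Polynomial.mem_lifts _).mp
        (Algebra.IsInvariant.charpoly_mem_lifts ℤ (𝓞 E) (E ≃ₐ[ℚ] E) (ι θ))
      have h1 : aeval (ι θ) P0 = 0 := by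
        rw [aeval_def, ← eval_map, hP0, MulSemiringAction.charpoly, eval_prod]
        exact Finset.prod_eq_zero (Finset.mem_univ 1) (by simp)
      have h2 : aeval θ P0 = 0 := by
        have : ι (aeval θ P0) = 0 := by
          rw [← h1]; exact (aeval_algebraMap_apply (𝓞 E) θ P0).symm
        exact (map_eq_zero_iff _ (FaithfulSMul.algebraMap_injective (𝓞 F) (𝓞 E))).mp this
      have h3 := hevalI _ P P0 θ t ht
      rw [h2, zero_sub, neg_mem_iff] at h3
      have h4 := hInt _ (int_dvd_of_mem hp hPprime.ne_top hpP h3) (𝓞 E) Q hpQ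
      have h5 : ((P0.eval t : ℤ) : 𝓞 E) = ∏ g : E ≃ₐ[ℚ] E, ((t : 𝓞 E) - g • ι θ) := by
        have : ((P0.eval t : ℤ) : 𝓞 E) = (P0.map (algebraMap ℤ (𝓞 E))).eval (t : 𝓞 E) := by
          rw [show (t : 𝓞 E) = algebraMap ℤ _ t from rfl, eval_map_algebraMap,
            aeval_algebraMap_apply]; simp
        rw [this, hP0, MulSemiringAction.charpoly, eval_prod]
        simp
      rw [h5] at h4
      obtain ⟨g, -, hg⟩ := (hQ.prod_mem_iff).mp h4
      exact ⟨g, by rw [← neg_sub, neg_mem_iff]; exact hg⟩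
    have hgP : P ≤ I g := by
      intro x hx
      obtain ⟨q, hq⟩ := hθ x
      have h1 := hevalI _ P q θ t ht
      rw [← hq] at h1
      have h2 : ((q.eval t : ℤ) : 𝓞 F) ∈ P := by
        have := P.sub_mem (P.mul_mem_left (c : 𝓞 F) hx) h1
        simpa using this
      have h3 := hInt _ (int_dvd_of_mem hp hPprime.ne_top hpP h2) (𝓞 F) (I g) (hpI g)
      have h4 := hevalI _ (I g) q θ t ((hIint g θ t).mpr hg)
      have h5 := (I g).add_mem h4 h3
      rw [sub_add_cancel, ← hq] at h5
      have h6 : ψ g ((c : 𝓞 F) * x) ∈ Q := h5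
      rw [map_mul, map_intCast] at h6
      exact (hQ.mem_or_mem h6).resolve_left hcQ
    refine ⟨g, ?_, (hPmax.eq_of_le (hItop g) hgP).symm⟩
    apply hmem
    rw [mul_smul, mul_smul, inv_smul_eq_iff, ← mul_smul]
    apply hdiff
    have h1 := hφ (g • ι θ)
    have h2 : (g • ι θ) ^ p - (t : 𝓞 E) ^ p ∈ Q := Ideal.mem_of_dvd Q (sub_dvd_pow_sub_pow _ _ p) hg
    have h3 : (t : 𝓞 E) ^ p - t ∈ Q := by
      have h4 : (p : ℤ) ∣ t ^ p - t := by
        have := Fact.mk hp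
        rw [← ZMod.intCast_zmod_eq_zero_iff_dvd]
        simp
      have := hInt _ h4 (𝓞 E) Q hpQ
      push_cast at this
      exact this
    have := Q.sub_mem (Q.add_mem (Q.add_mem h1 h2) h3) hg
    rw [mul_smul]
    convert this using 1
    ring
  have hfib : ∀ g g' : E ≃ₐ[ℚ] E, g⁻¹ * φ * g ∈ H → I g = I g' → g⁻¹ * g' ∈ H := by
    intro g g' hg h
    obtain ⟨t, ht⟩ := exists_int_of_absNorm_prime hp (hnorm g hg) θ
    have h1 := (hIint g θ t).mp ht
    have h2 := (hIint g' θ t).mp (h ▸ ht)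
    apply hmem
    rw [mul_smul, inv_smul_eq_iff]
    apply hdiff
    have := Q.sub_mem h2 h1
    simpa using this
  have hcoset : ∀ g h : E ≃ₐ[ℚ] E, h ∈ H → I (g * h) = I g := by
    intro g h hh
    ext x
    rw [hI, hI, mul_smul, hfix h hh]
  choose s hs1 hs2 using hsurj
  have hcs : ∀ g h : E ≃ₐ[ℚ] E, g⁻¹ * φ * g ∈ H → h ∈ H → (g * h)⁻¹ * φ * (g * h) ∈ H := by
    intro g h hg hh
    have := H.mul_mem (H.mul_mem (H.inv_mem hh) hg) hh
    convert this using 1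
    group
  rw [idealCount, ← Nat.card_prod]
  symm
  refine Nat.card_congr (Equiv.ofBijective (fun x : H × {J : Ideal (𝓞 F) // Ideal.absNorm J = p} =>
    (⟨s x.2.1 x.2.2 * x.1.1, hcs _ _ (hs1 _ _) x.1.2⟩ : {g : E ≃ₐ[ℚ] E // g⁻¹ * φ * g ∈ H})) ⟨?_, ?_⟩)
  · rintro ⟨⟨h, hh⟩, ⟨J, hJ⟩⟩ ⟨⟨h', hh'⟩, ⟨J', hJ'⟩⟩ heq
    have heq1 : s J hJ * h = s J' hJ' * h' := congrArg Subtype.val heq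
    have hJJ : J = J' := by
      rw [← hs2 J hJ, ← hs2 J' hJ', ← hcoset _ h hh, heq1, hcoset _ h' hh']
    subst hJJ
    have := mul_left_cancel heq1
    subst this
    rfl
  · rintro ⟨g, hg⟩
    have hJ := hnorm g hg
    refine ⟨⟨⟨(s (I g) hJ)⁻¹ * g, hfib _ _ (hs1 _ _) (hs2 _ _)⟩, ⟨I g, hJ⟩⟩, ?_⟩
    apply Subtype.ext
    simp

end Counting

/-! ### Weighted sums over primes, and generators of a cyclic group -/

section Density

open Filter Topology

/-- If each series `∑ a(d, p) p⁻ˢ` grows like `log (1 / (s - 1))` as `s → 1⁺` and the weights have positive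
sum, then the weighted series diverges at `1`, so infinitely many of its coefficients are nonzero. -/
lemma exists_prime_weighted_ne_zero {ι : Type*} (D : Finset ι) (w : ι → ℝ) (a : ι → ℕ → ℝ)
    (hsum : ∀ d ∈ D, ∀ s : ℝ, 1 < s → Summable fun p : Nat.Primes => a d p * ((p : ℕ) : ℝ) ^ (-s))
    (hasym : ∀ d ∈ D, ∃ C, ∀ᶠ s : ℝ in 𝓝[>] 1,
      |∑' p : Nat.Primes, a d p * ((p : ℕ) : ℝ) ^ (-s) + Real.log (s - 1)| ≤ C)
    (hw : 0 < ∑ d ∈ D, w d) {M : ℕ} (hM : M ≠ 0) :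
    ∃ p : ℕ, p.Prime ∧ ¬ p ∣ M ∧ ∑ d ∈ D, w d * a d p ≠ 0 := by
  by_contra! hcon
  choose! C hC using hasym
  set b : ℕ → ℝ := fun p => ∑ d ∈ D, w d * a d p with hb
  let T : Finset Nat.Primes := M.primeFactors.subtype Nat.Prime
  have hT : ∀ p : Nat.Primes, p ∉ T → b p = 0 := by
    intro p hp
    refine hcon p p.2 fun hdvd => hp ?_
    refine Finset.mem_subtype.mpr ?_
    exact Nat.mem_primeFactors.mpr ⟨p.2, hdvd, hM⟩
  have hC' : ∀ᶠ s : ℝ in 𝓝[>] 1, ∀ d ∈ D,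
      |∑' p : Nat.Primes, a d p * ((p : ℕ) : ℝ) ^ (-s) + Real.log (s - 1)| ≤ C d := by
    rw [Filter.eventually_all_finset]
    exact hC
  have hlog : Tendsto (fun s : ℝ => Real.log (s - 1)) (𝓝[>] 1) atBot := by
    refine Real.tendsto_log_nhdsGT_zero.comp ?_
    refine tendsto_nhdsWithin_of_tendsto_nhds_of_eventually_within _ ?_ ?_
    · have : Tendsto (fun s : ℝ => s - 1) (𝓝 1) (𝓝 (1 - 1)) := tendsto_id.sub_const 1
      rw [sub_self] at this
      exact this.mono_left nhdsWithin_le_nhds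
    · filter_upwards [self_mem_nhdsWithin] with s hs
      exact sub_pos.mpr (show (1 : ℝ) < s from hs)
  set W := ∑ d ∈ D, w d with hW
  set B := ∑ p ∈ T, |b p| with hB
  have hlarge : ∀ᶠ s : ℝ in 𝓝[>] 1,
      Real.log (s - 1) < -((B + ∑ d ∈ D, |w d| * C d + 1) / W) := hlog.eventually_lt_atBot _
  obtain ⟨s, hs1, hs2, hs⟩ := (hC'.and (hlarge.and self_mem_nhdsWithin)).exists
  have hs : (1 : ℝ) < s := hs
  have h1 : ∑ d ∈ D, w d * ∑' p : Nat.Primes, a d p * ((p : ℕ) : ℝ) ^ (-s) =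
      ∑ p ∈ T, b p * ((p : ℕ) : ℝ) ^ (-s) := by
    have h0 : ∑' p : Nat.Primes, b p * ((p : ℕ) : ℝ) ^ (-s) =
        ∑ p ∈ T, b p * ((p : ℕ) : ℝ) ^ (-s) :=
      tsum_eq_sum fun p hp => by rw [hT p hp, zero_mul]
    rw [← h0]
    simp_rw [← tsum_mul_left]
    rw [← Summable.tsum_finsetSum (fun d hd => (hsum d hd s hs).mul_left _)]
    refine tsum_congr fun p => ?_
    rw [hb, Finset.sum_mul]
    exact Finset.sum_congr rfl fun d _ => by ring
  have h2 : |∑ p ∈ T, b p * ((p : ℕ) : ℝ) ^ (-s)| ≤ B := by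
    refine (Finset.abs_sum_le_sum_abs _ _).trans (Finset.sum_le_sum fun p _ => ?_)
    rw [abs_mul]
    refine mul_le_of_le_one_right (abs_nonneg _) ?_
    rw [abs_of_nonneg (by positivity)]
    exact Real.rpow_le_one_of_one_le_of_nonpos (by exact_mod_cast p.2.one_lt.le) (by linarith)
  have h3 : |∑ d ∈ D, w d * ((∑' p : Nat.Primes, a d p * ((p : ℕ) : ℝ) ^ (-s)) +
      Real.log (s - 1))| ≤ ∑ d ∈ D, |w d| * C d := by
    refine (Finset.abs_sum_le_sum_abs _ _).trans (Finset.sum_le_sum fun d hd => ?_)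
    rw [abs_mul]
    exact mul_le_mul_of_nonneg_left (hs1 d hd) (abs_nonneg _)
  simp_rw [mul_add] at h3
  rw [Finset.sum_add_distrib, h1, ← Finset.sum_mul] at h3
  have h4 := (abs_le.mp h2).1
  have h4' := (abs_le.mp h2).2
  have h5 := (abs_le.mp h3).1
  have h6 : W * Real.log (s - 1) < -(B + ∑ d ∈ D, |w d| * C d + 1) := by
    have := mul_lt_mul_of_pos_left hs2 hw
    rwa [mul_neg, mul_div_cancel₀ _ hw.ne'] at this
  linarith

variable {G : Type*} [Group G] [Finite G]

open Classical in
/-- Möbius inversion over the divisors of `orderOf τ` detects the exponents prime to `orderOf τ`. -/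
lemma moebius_zpowers_pow (τ : G) (j : ℕ) :
    ∑ d ∈ (orderOf τ).divisors, ArithmeticFunction.moebius d *
      (if τ ^ j ∈ Subgroup.zpowers (τ ^ d) then (1 : ℤ) else 0) =
        if (orderOf τ).gcd j = 1 then 1 else 0 := by
  have hn : orderOf τ ≠ 0 := (orderOf_pos τ).ne'
  have key : ∀ d ∈ (orderOf τ).divisors, τ ^ j ∈ Subgroup.zpowers (τ ^ d) ↔ d ∣ j := by
    intro d hd
    constructor
    · intro hm
      obtain ⟨k, hk⟩ := (isOfFinOrder_of_finite (τ ^ d)).mem_powers_iff_mem_zpowers.mpr hm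
      dsimp only at hk
      rw [← pow_mul, pow_eq_pow_iff_modEq] at hk
      have := hk.of_dvd (Nat.dvd_of_mem_divisors hd)
      exact (this.dvd_iff (dvd_refl d)).mp (dvd_mul_right d k)
    · rintro ⟨k, rfl⟩
      rw [pow_mul]
      exact Subgroup.pow_mem _ (Subgroup.mem_zpowers _) _
  rw [← ArithmeticFunction.one_apply (R := ℤ), ← ArithmeticFunction.moebius_mul_coe_zeta,
    ArithmeticFunction.coe_mul_zeta_apply]
  have h2 : ((orderOf τ).gcd j).divisors = (orderOf τ).divisors.filter (· ∣ j) := by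
    ext d
    simp only [Nat.mem_divisors, Finset.mem_filter, Nat.dvd_gcd_iff]
    have : (orderOf τ).gcd j ≠ 0 := Nat.gcd_ne_zero_left hn
    tauto
  rw [h2, Finset.sum_filter]
  refine Finset.sum_congr rfl fun d hd => ?_
  simp only [key d hd]
  split_ifs <;> simp

open Classical in
/-- Möbius inversion on the subgroups of `⟨τ⟩`: the indicator of the generators of `⟨τ⟩`. -/
noncomputable def generatorIndicator (τ h : G) : ℤ :=
  ∑ d ∈ (orderOf τ).divisors, ArithmeticFunction.moebius d *
      (if h ∈ Subgroup.zpowers (τ ^ d) then (1 : ℤ) else 0)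

lemma generatorIndicator_self (τ : G) : generatorIndicator τ τ = 1 := by
  have := moebius_zpowers_pow τ 1
  rw [pow_one] at this
  rw [generatorIndicator, this]
  simp

lemma generatorIndicator_eq (τ h : G) : generatorIndicator τ h = 0 ∨
    (generatorIndicator τ h = 1 ∧ ∃ i : ℕ, τ = h ^ i) := by
  by_cases hh : h ∈ Subgroup.zpowers τ
  · obtain ⟨j, rfl⟩ := (isOfFinOrder_of_finite τ).mem_powers_iff_mem_zpowers.mpr hh
    dsimp only at *
    rw [generatorIndicator, moebius_zpowers_pow]
    split_ifs with hg
    · right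
      refine ⟨rfl, ?_⟩
      obtain ⟨i, hi⟩ := exists_pow_eq_self_of_coprime (x := τ) (n := j) (Nat.Coprime.symm hg)
      exact ⟨i, hi.symm⟩
    · left; rfl
  · left
    refine Finset.sum_eq_zero fun d _ => ?_
    rw [if_neg, mul_zero]
    intro hm
    exact hh (Subgroup.zpowers_le.mpr (Subgroup.pow_mem _ (Subgroup.mem_zpowers τ) d) hm)

lemma sum_generatorIndicator {ι : Type*} [Fintype ι] (τ : G) (h : ι → G) :
    ∑ i, generatorIndicator τ (h i) = ∑ d ∈ (orderOf τ).divisors, ArithmeticFunction.moebius d *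
      (Nat.card {i // h i ∈ Subgroup.zpowers (τ ^ d)} : ℤ) := by
  classical
  simp only [generatorIndicator]
  rw [Finset.sum_comm]
  refine Finset.sum_congr rfl fun d _ => ?_
  rw [← Finset.mul_sum, Finset.sum_boole, Nat.card_eq_fintype_card, Fintype.card_subtype]

end Density

/-! ### The density theorem of Frobenius, in existence form -/

section FrobeniusExistence

open Filter Topology

variable {E : Type*} [Field E] [NumberField E]

lemma exists_prime_above (p : ℕ) (hp : p.Prime) :
    ∃ Q : Ideal (𝓞 E), Q.IsPrime ∧ (p : 𝓞 E) ∈ Q ∧ Q ≠ ⊥ ∧ Nat.card (ℤ ⧸ Q.under ℤ) = p := by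
  have hmax : (Ideal.span {(p : ℤ)}).IsMaximal :=
    PrincipalIdealRing.isMaximal_of_irreducible (Nat.prime_iff_prime_int.mp hp).irreducible
  obtain ⟨Q, hQ, hQ'⟩ := Ideal.exists_maximal_ideal_liesOver_of_isIntegral (S := 𝓞 E) (Ideal.span {(p : ℤ)})
  have hu : Q.under ℤ = Ideal.span {(p : ℤ)} := hQ'.over.symm
  have hpQ : (p : 𝓞 E) ∈ Q := by
    have : (p : ℤ) ∈ Q.under ℤ := hu ▸ Ideal.mem_span_singleton_self _
    simpa [Ideal.mem_comap] using this
  refine ⟨Q, hQ.isPrime, hpQ, ?_, ?_⟩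
  · rintro rfl
    exact hp.ne_zero (by exact_mod_cast (Ideal.mem_bot.mp hpQ))
  · rw [hu, Nat.card_congr (Int.quotientSpanNatEquivZMod p).toEquiv, Nat.card_zmod]

variable [IsGalois ℚ E]

lemma exists_frobenius_ideal {Q : Ideal (𝓞 E)} (hQ : Q.IsPrime) (hQ0 : Q ≠ ⊥) :
    ∃ φ : E ≃ₐ[ℚ] E, ∀ x : 𝓞 E, φ • x - x ^ Nat.card (ℤ ⧸ Q.under ℤ) ∈ Q := by
  have := Ideal.finiteQuotientOfFreeOfNeBot Q hQ0
  obtain ⟨φ, hφ⟩ := IsArithFrobAt.exists_of_isInvariant ℤ (E ≃ₐ[ℚ] E) Q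
  exact ⟨φ, hφ⟩

/-- A weak form of Chebotarev's theorem, due to Frobenius: outside any finite set of places there
is a place whose Frobenius generates a group containing a given automorphism `τ`. -/
theorem exists_frobenius_generator (τ : E ≃ₐ[ℚ] E) {P : HeightOneSpectrum (𝓞 E) → Prop}
    (hP : ∀ᶠ v in cofinite, P v) :
    ∃ v, P v ∧ ∃ (φ : E ≃ₐ[ℚ] E) (p : ℕ), p.Prime ∧ v.valuation E (p : E) < 1 ∧ FrobAt v φ p ∧
      ∃ i : ℕ, τ = φ ^ i := by
  classical
  choose M hM hMp using fun d : ℕ => card_conj_mem_eq (Subgroup.zpowers (τ ^ d))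
  have hfin : {v | ¬ P v}.Finite := Filter.eventually_cofinite.mp hP
  set M0 : ℕ := ∏ v ∈ hfin.toFinset, Ideal.absNorm v.asIdeal with hM0
  have hM00 : M0 ≠ 0 := by
    rw [hM0, Finset.prod_ne_zero_iff]
    intro v _
    rw [Ne, Ideal.absNorm_eq_zero_iff]
    exact v.ne_bot
  set D := (orderOf τ).divisors
  let w : ℕ → ℝ := fun d => ArithmeticFunction.moebius d * Nat.card (Subgroup.zpowers (τ ^ d))
  have hw : 0 < ∑ d ∈ D, w d := by
    have h1 := sum_generatorIndicator τ (fun h : E ≃ₐ[ℚ] E => h)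
    have h2 : 0 < ∑ h : E ≃ₐ[ℚ] E, generatorIndicator τ h := by
      refine Finset.sum_pos' (fun h _ => ?_) ⟨τ, Finset.mem_univ _, ?_⟩
      · rcases generatorIndicator_eq τ h with h | h
        · rw [h]
        · rw [h.1]; exact zero_le_one
      · rw [generatorIndicator_self]; exact one_pos
    rw [h1] at h2
    have h3 : (0 : ℝ) < ((∑ d ∈ D, ArithmeticFunction.moebius d *
      (Nat.card (Subgroup.zpowers (τ ^ d)) : ℤ) : ℤ) : ℝ) := by exact_mod_cast h2
    simpa [w] using h3
  obtain ⟨p, hp, hpM, hne⟩ := exists_prime_weighted_ne_zero D w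
    (fun d p => (idealCount (IntermediateField.fixedField (Subgroup.zpowers (τ ^ d))) p : ℝ))
    (fun d _ s hs => summable_idealCount_primes _ s hs)
    (fun d _ => prime_ideal_sum_asymptotic _) hw
    (M := M0 * ∏ d ∈ D, M d)
    (mul_ne_zero hM00 (Finset.prod_ne_zero_iff.mpr fun d _ => hM d))
  obtain ⟨Q, hQ, hpQ, hQ0, hcard⟩ := exists_prime_above (E := E) p hp
  obtain ⟨φ, hφ⟩ := exists_frobenius_ideal hQ hQ0
  rw [hcard] at hφ
  have hsum : ∑ g : E ≃ₐ[ℚ] E, generatorIndicator τ (g⁻¹ * φ * g) ≠ 0 := by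
    rw [sum_generatorIndicator]
    intro h0
    apply hne
    have h3 : ((∑ d ∈ D, ArithmeticFunction.moebius d *
      (Nat.card {g : E ≃ₐ[ℚ] E // g⁻¹ * φ * g ∈ Subgroup.zpowers (τ ^ d)} : ℤ) : ℤ) : ℝ) = 0 := by
      exact_mod_cast h0
    rw [← h3, Int.cast_sum]
    refine Finset.sum_congr rfl fun d hd => ?_
    have hd : ¬ p ∣ M d := fun h =>
      hpM ((h.trans (Finset.dvd_prod_of_mem M hd)).mul_left _)
    rw [hMp d p hp hd Q hQ hpQ φ hφ]
    simp only [w]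
    push_cast
    ring
  obtain ⟨g, -, hg⟩ := Finset.exists_ne_zero_of_sum_ne_zero hsum
  obtain ⟨-, i, hi⟩ := (generatorIndicator_eq τ (g⁻¹ * φ * g)).resolve_left hg
  -- conjugate the place so that the Frobenius becomes `g⁻¹ φ g`
  set Q' : Ideal (𝓞 E) := Q.comap (MulSemiringAction.toRingHom _ (𝓞 E) g) with hQ'
  have hmem : ∀ x, x ∈ Q' ↔ g • x ∈ Q := fun x => Iff.rfl
  have hpQ' : (p : 𝓞 E) ∈ Q' := by
    rw [hQ', Ideal.mem_comap, map_natCast]; exact hpQ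
  have hQ'p : Q'.IsPrime := Ideal.comap_isPrime _ _
  have hQ'0 : Q' ≠ ⊥ := by
    intro h
    rw [h] at hpQ'
    exact hp.ne_zero (by exact_mod_cast (Ideal.mem_bot.mp hpQ'))
  let v : HeightOneSpectrum (𝓞 E) := ⟨Q', hQ'p, hQ'0⟩
  have hv : ∀ x : 𝓞 E, v.valuation E (x : E) < 1 ↔ x ∈ Q' := fun x => by
    rw [HeightOneSpectrum.valuation_lt_one_iff_mem]
  refine ⟨v, ?_, g⁻¹ * φ * g, p, hp, ?_, ?_, i, hi⟩
  · by_contra hPv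
    apply hpM
    refine dvd_mul_of_dvd_left ?_ _
    refine dvd_trans ?_ (Finset.dvd_prod_of_mem _ (hfin.mem_toFinset.mpr hPv))
    have := int_dvd_of_mem hp hQ'p.ne_top hpQ' (n := (Ideal.absNorm Q' : ℕ))
      (by simpa using Ideal.absNorm_mem Q')
    exact_mod_cast this
  · have := (hv (p : 𝓞 E)).mpr hpQ'
    simpa using this
  · refine FrobAt.of_integers hp.pos fun x => ?_
    have h1 : (g⁻¹ * φ * g) • x - x ^ p ∈ Q' := by
      rw [hmem, smul_sub, smul_pow', ← mul_smul]
      have := hφ (g • x)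
      rwa [← mul_smul, show φ * g = g * (g⁻¹ * φ * g) by group] at this
    have h2 := (hv _).mpr h1
    exact h2

/-- Every place of a Galois number field has a Frobenius. -/
lemma exists_frobAt (v : HeightOneSpectrum (𝓞 E)) {p : ℕ} (hp : p.Prime)
    (hpv : v.valuation E (p : E) < 1) : ∃ φ : E ≃ₐ[ℚ] E, FrobAt v φ p := by
  obtain ⟨φ, hφ⟩ := exists_frobenius_ideal v.isPrime v.ne_bot
  refine ⟨φ, FrobAt.of_integers hp.pos fun x => ?_⟩
  have hpv' : (p : 𝓞 E) ∈ v.asIdeal := by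
    rw [← HeightOneSpectrum.valuation_lt_one_iff_mem (K := E)]
    simpa using hpv
  have hu : v.asIdeal.under ℤ = Ideal.span {(p : ℤ)} := by
    ext n
    rw [Ideal.mem_span_singleton, Ideal.mem_comap]
    constructor
    · intro h
      exact int_dvd_of_mem hp v.isPrime.ne_top hpv' (by simpa using h)
    · rintro ⟨m, rfl⟩
      rw [map_mul]
      exact Ideal.mul_mem_right _ _ (by simpa using hpv')
  have hc : Nat.card (ℤ ⧸ v.asIdeal.under ℤ) = p := by
    rw [hu, Nat.card_congr (Int.quotientSpanNatEquivZMod p).toEquiv, Nat.card_zmod]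
  rw [hc] at hφ
  have h2 := (HeightOneSpectrum.valuation_lt_one_iff_mem (K := E) v _).mpr (hφ x)
  exact h2

end FrobeniusExistence

/-! ### Splitting fields and extensions of places -/

section Extensions

open Filter

universe u

/-- Every polynomial over a number field splits in an extension that is Galois over `ℚ`. -/
lemma exists_galois_splitting (N : Type u) [Field N] [NumberField N] (h : N[X]) :
    ∃ (E : Type u) (_ : Field E) (_ : NumberField E) (_ : IsGalois ℚ E) (_ : Algebra N E),
      (h.map (algebraMap N E)).Splits := by
  let F := h.SplittingField
  have : NumberField F := NumberField.of_module_finite N F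
  let A := AlgebraicClosure F
  have hAlg : Algebra.IsAlgebraic ℚ A := Algebra.IsAlgebraic.trans ℚ F A
  have : IsAlgClosure ℚ A := ⟨inferInstance, hAlg⟩
  have hN : Normal ℚ A := IsAlgClosure.normal ℚ A
  let E := IntermediateField.normalClosure ℚ F A
  have : FiniteDimensional ℚ E := inferInstance
  have : NumberField E := ⟨⟩
  have : Normal ℚ E := normalClosure.normal ℚ F A
  have : IsGalois ℚ E := ⟨⟩
  let i : Algebra F E := inferInstance
  let j : Algebra N E := ((algebraMap F E).comp (algebraMap N F)).toAlgebra
  refine ⟨E, inferInstance, inferInstance, inferInstance, j, ?_⟩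
  have h1 : (h.map (algebraMap N F)).Splits := SplittingField.splits h
  have := h1.map (algebraMap F E)
  rwa [Polynomial.map_map] at this

variable {N E : Type*} [Field N] [NumberField N] [Field E] [NumberField E] [Algebra N E]

/-- The place `V` of `E` restricts to the place `v` of `N`. -/
def PlaceAbove (V : HeightOneSpectrum (𝓞 E)) (v : HeightOneSpectrum (𝓞 N)) : Prop :=
  ∀ x : N, V.valuation E (algebraMap N E x) ≤ 1 ↔ v.valuation N x ≤ 1

variable {V : HeightOneSpectrum (𝓞 E)} {v : HeightOneSpectrum (𝓞 N)}

lemma PlaceAbove.lt_one_iff (h : PlaceAbove V v) (x : N) :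
    V.valuation E (algebraMap N E x) < 1 ↔ v.valuation N x < 1 := by
  by_cases hx : x = 0
  · simp [hx]
  have h1 := h x⁻¹
  rw [map_inv₀, map_inv₀, map_inv₀, inv_le_one₀ (zero_lt_iff.mpr (by simpa using hx)),
    inv_le_one₀ (zero_lt_iff.mpr (by simpa using hx))] at h1
  rw [← not_le, ← not_le, h1]

lemma PlaceAbove.eq_one_iff (h : PlaceAbove V v) (x : N) :
    V.valuation E (algebraMap N E x) = 1 ↔ v.valuation N x = 1 := by
  have h1 := h x
  have h2 := h.lt_one_iff x
  rw [eq_iff_le_not_lt, eq_iff_le_not_lt, h1, h2]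

lemma exists_placeAbove (E : Type*) [Field E] [NumberField E] [Algebra N E]
    (v : HeightOneSpectrum (𝓞 N)) :
    ∃ V : HeightOneSpectrum (𝓞 E), PlaceAbove V v := by
  have hmax : v.asIdeal.IsMaximal := v.isMaximal
  obtain ⟨Q, hQ, hQ'⟩ := Ideal.exists_maximal_ideal_liesOver_of_isIntegral (S := 𝓞 E) v.asIdeal
  have hmem : ∀ x : 𝓞 N, algebraMap (𝓞 N) (𝓞 E) x ∈ Q ↔ x ∈ v.asIdeal := by
    intro x
    rw [hQ'.over]; rfl
  have hQ0 : Q ≠ ⊥ := by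
    rintro rfl
    apply v.ne_bot
    rw [eq_bot_iff]
    intro x hx
    have := (hmem x).mpr hx
    rw [Ideal.mem_bot] at this ⊢
    exact (map_eq_zero_iff _ (FaithfulSMul.algebraMap_injective (𝓞 N) (𝓞 E))).mp this
  let V : HeightOneSpectrum (𝓞 E) := ⟨Q, hQ.isPrime, hQ0⟩
  have hcoe : ∀ x : 𝓞 N, algebraMap N E (x : N) = ((algebraMap (𝓞 N) (𝓞 E) x : 𝓞 E) : E) := by
    intro x
    rfl
  have hInt : ∀ x : 𝓞 N, V.valuation E (algebraMap N E (x : N)) ≤ 1 := by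
    intro x; rw [hcoe]; exact V.valuation_le_one _
  have hone : ∀ d : 𝓞 N, d ∉ v.asIdeal → V.valuation E (algebraMap N E (d : N)) = 1 := by
    intro d hd
    rw [hcoe]
    exact V.valuation_eq_one_iff_notMem.mpr fun h => hd ((hmem d).mp h)
  have key : ∀ x : N, v.valuation N x ≤ 1 → ∃ n d : 𝓞 N, d ∉ v.asIdeal ∧ x * d = n := by
    intro x hx
    obtain ⟨n, ⟨d, hd⟩, hnd⟩ := v.exists_primeCompl_mul_eq_of_integer (K := N) x hx
    exact ⟨n, d, hd, hnd⟩
  have hle : ∀ x : N, v.valuation N x ≤ 1 → V.valuation E (algebraMap N E x) ≤ 1 := by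
    intro x hx
    obtain ⟨n, d, hd, hnd⟩ := key x hx
    have := hInt n
    rwa [← hnd, map_mul, map_mul, hone d hd, mul_one] at this
  have hlt : ∀ x : N, v.valuation N x < 1 → V.valuation E (algebraMap N E x) < 1 := by
    intro x hx
    obtain ⟨n, d, hd, hnd⟩ := key x hx.le
    have h1 : v.valuation N (n : N) < 1 := by
      rw [← hnd, map_mul, v.valuation_eq_one_iff_notMem.mpr hd, mul_one]; exact hx
    have h2 : V.valuation E (algebraMap N E (n : N)) < 1 := by
      rw [hcoe, HeightOneSpectrum.valuation_lt_one_iff_mem]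
      exact (hmem n).mpr (by rwa [HeightOneSpectrum.valuation_lt_one_iff_mem] at h1)
    rwa [← hnd, map_mul, map_mul, hone d hd, mul_one] at h2
  refine ⟨V, fun x => ⟨fun h => ?_, hle x⟩⟩
  by_contra! hcon
  have h1 := hlt x⁻¹ (by rw [map_inv₀]; exact inv_lt_one_of_one_lt₀ hcon)
  have hx0 : x ≠ 0 := by rintro rfl; simp at hcon
  rw [map_inv₀, map_inv₀, inv_lt_one₀ (zero_lt_iff.mpr (by simpa using hx0))] at h1
  exact absurd h (not_le.mpr h1)

lemma PlaceAbove.frobAt_restrict [IsGalois ℚ N] (h : PlaceAbove V v) {τ : E ≃ₐ[ℚ] E} {p : ℕ}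
    (hτ : FrobAt V τ p) : FrobAt v (τ.restrictNormal N) p := by
  refine ⟨hτ.1, fun x hx => ?_⟩
  have := hτ.2 (algebraMap N E x) ((h x).mpr hx)
  rw [← AlgEquiv.restrictNormal_commutes, ← map_pow, ← map_sub] at this
  exact (h.lt_one_iff _).mp this

lemma restrictNormal_pow [IsGalois ℚ N] (τ : E ≃ₐ[ℚ] E) (i : ℕ) (x : N) :
    (τ ^ i) (algebraMap N E x) = algebraMap N E (((τ.restrictNormal N) ^ i) x) := by
  induction i generalizing x with
  | zero => rfl
  | succ i ih =>
    rw [pow_succ, pow_succ, AlgEquiv.mul_apply, AlgEquiv.mul_apply,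
      ← AlgEquiv.restrictNormal_commutes, ih]

/-- Almost all places have at most one Frobenius. -/
lemma eventually_frobAt_unique : ∀ᶠ v : HeightOneSpectrum (𝓞 N) in cofinite,
    ∀ (φ φ' : N ≃ₐ[ℚ] N) (p : ℕ), FrobAt v φ p → FrobAt v φ' p → φ = φ' := by
  have : ∀ᶠ v : HeightOneSpectrum (𝓞 N) in cofinite,
    ∀ (φφ : (N ≃ₐ[ℚ] N) × (N ≃ₐ[ℚ] N)), φφ.1 ≠ φφ.2 → ∀ p : ℕ, FrobAt v φφ.1 p → ¬ FrobAt v φφ.2 p := by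
    rw [eventually_all]
    rintro ⟨φ, φ'⟩
    rw [eventually_imp_distrib_left]
    intro hne
    obtain ⟨x, hx⟩ : ∃ x, φ x ≠ φ' x := by
      by_contra! hcon
      exact hne (AlgEquiv.ext hcon)
    filter_upwards [eventually_le_one x, eventually_eq_one (sub_ne_zero.mpr hx)] with v h1 h2 p h3 h4
    have := (v.valuation N).map_sub_lt (h3.2 x h1) (h4.2 x h1)
    rw [sub_sub_sub_cancel_right, h2] at this
    exact lt_irrefl _ this
  filter_upwards [this] with v hv φ φ' p h1 h2
  by_contra hne
  exact hv (φ, φ') hne p h1 h2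

/-- Pull back integrality along a polynomial with unit leading coefficient. -/
lemma IntegralAt.of_eval {f : N[X]} (hf : IntegralAt v f) (hdeg : 1 ≤ f.natDegree)
    (hlead : v.valuation N f.leadingCoeff = 1) {z : N} (hz : v.valuation N (f.eval z) ≤ 1) :
    v.valuation N z ≤ 1 := by
  by_contra! hcon
  have hpow : ∀ i < f.natDegree, v.valuation N z ^ i < v.valuation N z ^ f.natDegree :=
    fun i hi => pow_lt_pow_right₀ hcon hi
  have h1 : v.valuation N (∑ i ∈ Finset.range f.natDegree, f.coeff i * z ^ i) <
      v.valuation N z ^ f.natDegree := by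
    refine (v.valuation N).map_sum_lt ?_ fun i hi => ?_
    · exact (pow_pos (zero_lt_one.trans hcon) _).ne'
    · rw [map_mul, map_pow]
      exact (mul_le_of_le_one_left' (hf i)).trans_lt (hpow i (Finset.mem_range.mp hi))
  have h2 : v.valuation N (f.coeff f.natDegree * z ^ f.natDegree) = v.valuation N z ^ f.natDegree := by
    rw [map_mul, map_pow, coeff_natDegree, hlead, one_mul]
  rw [eval_eq_sum_range, Finset.sum_range_succ] at hz
  rw [(v.valuation N).map_add_eq_of_lt_right (by rw [h2]; exact h1), h2] at hz
  exact absurd hz (not_le.mpr (one_lt_pow₀ hcon (by omega)))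

lemma IntegralAt.of_iterate {f : N[X]} (hf : IntegralAt v f) (hdeg : 1 ≤ f.natDegree)
    (hlead : v.valuation N f.leadingCoeff = 1) (k : ℕ) {z : N}
    (hz : v.valuation N ((fun b => f.eval b)^[k] z) ≤ 1) : v.valuation N z ≤ 1 := by
  induction k generalizing z with
  | zero => exact hz
  | succ k ih =>
    rw [Function.iterate_succ_apply] at hz
    exact hf.of_eval hdeg hlead (ih hz)

/-- Among `q + 1` elements with `y ^ q ≡ y`, two are congruent. -/
lemma exists_congr_of_pow {q : ℕ} (hq : 1 < q) (y : ℕ → N) (hy : ∀ i, v.valuation N (y i) ≤ 1)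
    (hyq : ∀ i, v.valuation N (y i ^ q - y i) < 1) :
    ∃ a b, a < b ∧ b ≤ q ∧ v.valuation N (y a - y b) < 1 := by
  classical
  let k := IsLocalRing.ResidueField (LocRing v)
  let r : LocRing v →+* k := IsLocalRing.residue (LocRing v)
  have hr : ∀ x : LocRing v, r x = 0 ↔ v.valuation N (x : N) < 1 := by
    intro x
    rw [IsLocalRing.residue_eq_zero_iff, IsLocalRing.mem_maximalIdeal, mem_nonunits_iff,
      LocRing.isUnit_iff]
    exact ⟨fun h => lt_of_le_of_ne x.2 h, fun h => h.ne⟩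
  let Y : ℕ → LocRing v := fun i => ⟨y i, hy i⟩
  have hroot : ∀ i, r (Y i) ∈ ((X : k[X]) ^ q - X).roots.toFinset := by
    intro i
    have h0 : (X : k[X]) ^ q - X ≠ 0 := FiniteField.X_pow_card_sub_X_ne_zero k hq
    rw [Multiset.mem_toFinset, mem_roots h0, IsRoot, eval_sub, eval_pow, eval_X, ← map_pow,
      ← map_sub, hr]
    exact hyq i
  obtain ⟨a, ha, b, hb, hne, hab⟩ := Finset.exists_ne_map_eq_of_card_lt_of_maps_to
    (s := Finset.range (q + 1)) (t := ((X : k[X]) ^ q - X).roots.toFinset) (f := fun i => r (Y i))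
    (by
      rw [Finset.card_range]
      refine Nat.lt_succ_of_le ((Multiset.toFinset_card_le _).trans ((card_roots' _).trans ?_))
      rw [FiniteField.X_pow_card_sub_X_natDegree_eq k hq])
    (fun i _ => hroot i)
  rw [Finset.mem_range] at ha hb
  have hab' : v.valuation N (y a - y b) < 1 := by
    rw [← sub_eq_zero, ← map_sub, hr] at hab
    exact hab
  rcases lt_or_gt_of_ne hne with h | h
  · exact ⟨a, b, h, by omega, hab'⟩
  · exact ⟨b, a, h, by omega, by rwa [(v.valuation N).map_sub_swap] at hab'⟩

end Extensions

/-! ### Avoiding a forward-invariant set modulo a place -/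

section Avoid

open Filter

variable {E : Type*} [Field E] [NumberField E]

lemma IntegralAt.iterate {v : HeightOneSpectrum (𝓞 E)} {f : E[X]} (hf : IntegralAt v f) (k : ℕ)
    {a : E} (ha : v.valuation E a ≤ 1) : v.valuation E ((fun t => f.eval t)^[k] a) ≤ 1 := by
  induction k generalizing a with
  | zero => exact ha
  | succ k ih => exact ih (hf.eval ha)

lemma IntegralAt.sub_iterate_lt {v : HeightOneSpectrum (𝓞 E)} {f : E[X]} (hf : IntegralAt v f)
    (k : ℕ) {a b : E} (ha : v.valuation E a ≤ 1) (hb : v.valuation E b ≤ 1)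
    (hab : v.valuation E (a - b) < 1) :
    v.valuation E ((fun t => f.eval t)^[k] a - (fun t => f.eval t)^[k] b) < 1 := by
  induction k generalizing a b with
  | zero => exact hab
  | succ k ih => exact ih (hf.eval ha) (hf.eval hb) (hf.sub_eval_lt ha hb hab)

/-- If a split polynomial has unit leading coefficient and a small value at `u`, then `u` is
congruent to one of its roots. -/
lemma exists_root_congr {v : HeightOneSpectrum (𝓞 E)} {H : E[X]} (hs : H.Splits)
    (hl : v.valuation E H.leadingCoeff = 1) {u : E} (hu : v.valuation E (H.eval u) < 1) :
    ∃ z, H.eval z = 0 ∧ v.valuation E (u - z) < 1 := by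
  have hH : H ≠ 0 := by rintro rfl; simp at hl
  by_contra! hcon
  have h1 : H.eval u = H.leadingCoeff * (H.roots.map fun z => u - z).prod := by
    conv_lhs => rw [hs.eq_prod_roots]
    rw [eval_mul, eval_C, eval_multiset_prod, Multiset.map_map]
    simp
  rw [h1, map_mul, hl, one_mul, map_multiset_prod, Multiset.map_map] at hu
  refine absurd hu (not_lt.mpr (Multiset.one_le_prod ?_))
  intro y hy
  obtain ⟨z, hz, rfl⟩ := Multiset.mem_map.mp hy
  exact hcon z (by simpa using isRoot_of_mem_roots hz)

/-- The orbit `x` never meets the forward-invariant set `C` modulo the place `P`. If it did, a first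
encounter would, by lifting `q + 1` steps back, yield a `θ`-fixed point `z` whose `q`-th iterate `w` is not
in `C` although `f w` is. At a second place `Q`, where `θ` is the `q`-power Frobenius, the first `q + 1`
points of the orbit of `z` reduce to a set of at most `q` elements; hence `w` is periodic modulo `Q`,
and so congruent to a point of `C`, which `hB` excludes. -/
lemma avoid_of_frobenius (f : E[X]) (hdeg : 1 ≤ f.natDegree) (x : ℕ → E)
    (hx : ∀ n, x (n + 1) = f.eval (x n)) (C : Finset E) (hC : ∀ c ∈ C, f.eval c ∈ C)
    (θ : E ≃ₐ[ℚ] E) (hθf : f.map (θ : E →+* E) = f) (hθx : ∀ n, θ (x n) = x n)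
    {q : ℕ} (hq : 1 < q) {P Q : HeightOneSpectrum (𝓞 E)}
    (hsplit : ∀ c ∈ C, ((f.comp^[q + 1] X) - Polynomial.C c).Splits)
    (hθQ : FrobAt Q θ q) (hfQ : IntegralAt Q f) (hlQ : Q.valuation E f.leadingCoeff = 1)
    (hCQ : ∀ c ∈ C, Q.valuation E c ≤ 1)
    (hB : ∀ w, f.eval w ∈ C → w ∉ C → ∀ c ∈ C, ¬ Q.valuation E (w - c) < 1)
    (hθP : StabilizesPlace P θ.toRingEquiv) (hfP : IntegralAt P f)
    (hlP : ∀ c ∈ C, P.valuation E ((f.comp^[q + 1] X) - Polynomial.C c).leadingCoeff = 1)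
    (hx0 : P.valuation E (x 0) ≤ 1)
    (hsmall : ∀ n ≤ q + 1, ∀ c ∈ C, ¬ P.valuation E (x n - c) < 1)
    (hfix : ∀ z, (fun t => f.eval t)^[q + 1] z ∈ C → θ z ≠ z → ¬ P.valuation E (θ z - z) < 1) :
    ∀ n, ∀ c ∈ C, ¬ P.valuation E (x n - c) < 1 := by
  have hxi : ∀ n, P.valuation E (x n) ≤ 1 := fun n => hfP.orbit hx hx0 n
  have hxk : ∀ n k, x (n + k) = (fun t => f.eval t)^[k] (x n) := by
    intro n k
    induction k with
    | zero => rfl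
    | succ k ih => rw [← add_assoc, hx, ih, Function.iterate_succ_apply']
  have hCk : ∀ k, ∀ c ∈ C, (fun t => f.eval t)^[k] c ∈ C := by
    intro k
    induction k with
    | zero => exact fun c hc => hc
    | succ k ih => exact fun c hc => by rw [Function.iterate_succ_apply]; exact ih _ (hC c hc)
  intro n
  induction n using Nat.strong_induction_on with
  | _ n ih =>
  intro c hc hlt
  by_cases hn : n ≤ q + 1
  · exact hsmall n hn c hc hlt
  obtain ⟨m, rfl⟩ : ∃ m, n = m + (q + 1) := ⟨n - (q + 1), by omega⟩
  obtain ⟨z, hz, huz⟩ := exists_root_congr (v := P) (u := x m) (hsplit c hc) (hlP c hc) (by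
    rw [eval_sub, eval_C, iterate_comp_X_eval, ← hxk]; exact hlt)
  rw [eval_sub, eval_C, iterate_comp_X_eval, sub_eq_zero] at hz
  have hzP : P.valuation E z ≤ 1 := by
    have := (P.valuation E).map_sub_le (hxi m) huz.le
    rwa [sub_sub_cancel] at this
  set w := (fun t => f.eval t)^[q] z with hw
  have hfw : f.eval w = c := by rw [← hz, Function.iterate_succ_apply']
  have hwC : w ∉ C := by
    intro hwC
    refine ih (m + q) (by omega) w hwC ?_
    rw [hxk]
    exact hfP.sub_iterate_lt q (hxi m) hzP huz
  have hθz : θ z = z := by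
    by_contra hne
    refine hfix z (by rw [hz]; exact hc) hne ?_
    have h1 : P.valuation E (θ (x m - z)) < 1 := (hθP.lt_one_iff _).mpr huz
    rw [map_sub, hθx] at h1
    have h2 := (P.valuation E).map_sub_lt huz h1
    rwa [sub_sub_sub_cancel_left] at h2
  have hzQ : Q.valuation E z ≤ 1 :=
    hfQ.of_iterate hdeg hlQ (q + 1) (by rw [hz]; exact hCQ c hc)
  have hθy : ∀ i, θ ((fun t => f.eval t)^[i] z) = (fun t => f.eval t)^[i] z := by
    intro i
    induction i with
    | zero => exact hθz
    | succ i ih' =>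
      rw [Function.iterate_succ_apply']
      have := Polynomial.eval_map_apply (f := (θ : E →+* E)) (p := f) ((fun t => f.eval t)^[i] z)
      rw [hθf] at this
      change θ (f.eval _) = _
      have h3 : (θ : E →+* E) ((fun t => f.eval t)^[i] z) = (fun t => f.eval t)^[i] z := ih'
      rw [h3] at this
      exact this.symm
  obtain ⟨a, b, hab, hbq, hcong⟩ := exists_congr_of_pow (v := Q) hq
    (fun i => (fun t => f.eval t)^[i] z) (fun i => hfQ.iterate i hzQ) (fun i => by
      have := hθQ.2 _ (hfQ.iterate i hzQ)
      rw [hθy, (Q.valuation E).map_sub_swap] at this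
      exact this)
  have h4 := hfQ.sub_iterate_lt (q - a) (hfQ.iterate a hzQ) (hfQ.iterate b hzQ) hcong
  rw [← Function.iterate_add_apply, ← Function.iterate_add_apply,
    show q - a + a = q by omega, show q - a + b = (b - a - 1) + (q + 1) by omega,
    Function.iterate_add_apply (m := b - a - 1), hz] at h4
  exact hB w (by rw [hfw]; exact hc) hwC _ (hCk _ c hc) h4

end Avoid

/-! ### Existence of an avoiding place -/

section Tree

open Filter

universe u

lemma iterate_comp_sub_C_ne_zero {E : Type*} [Field E] {f : E[X]} (hdeg : 1 ≤ f.natDegree) (k : ℕ)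
    (c : E) : (f.comp^[k] X) - C c ≠ 0 := by
  intro h
  have h1 := congrArg natDegree h
  rw [natDegree_sub_C, natDegree_iterate_comp, natDegree_X, mul_one, natDegree_zero] at h1
  exact absurd h1 (pow_pos (by omega) k).ne'

lemma finite_iterate_preimage {E : Type*} [Field E] {f : E[X]} (hdeg : 1 ≤ f.natDegree) (k : ℕ)
    (S : Finset E) : {z | (fun t => f.eval t)^[k] z ∈ S}.Finite := by
  have : {z | (fun t => f.eval t)^[k] z ∈ S} ⊆
      ⋃ c ∈ S, {z | IsRoot ((f.comp^[k] X) - C c) z} := by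
    intro z hz
    simp only [Set.mem_iUnion]
    refine ⟨_, hz, ?_⟩
    simp
  refine Set.Finite.subset (Set.Finite.biUnion S.finite_toSet fun c _ => ?_) this
  exact finite_setOfPred_isRoot (iterate_comp_sub_C_ne_zero hdeg k c)

/-- Let `S` be a finite forward-invariant set, disjoint from the orbit `x`, all of whose preimages
under `f` lie in `N`. In some extension there is a place, stabilized by an extension of `σ`, modulo
which the orbit `x` never meets `S`. The place can moreover be chosen to make any finite set `T`
integral. -/
lemma exists_avoiding_place {N : Type u} [Field N] [NumberField N] [IsGalois ℚ N] (f : N[X])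
    (hdeg : 1 ≤ f.natDegree) (x : ℕ → N) (hx : ∀ n, x (n + 1) = f.eval (x n))
    (S : Finset N) (hS : ∀ c ∈ S, f.eval c ∈ S) (hxS : ∀ n, x n ∉ S)
    (hsplit : ∀ c ∈ S, (f - C c).Splits) (σ : N ≃ₐ[ℚ] N) (T : Finset N) :
    ∃ (E : Type u) (_ : Field E) (_ : NumberField E) (_ : Algebra N E)
      (P : HeightOneSpectrum (𝓞 E)) (σ' : E ≃ₐ[ℚ] E),
      (∀ y, σ' (algebraMap N E y) = algebraMap N E (σ y)) ∧
      StabilizesPlace P σ'.toRingEquiv ∧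
      IntegralAt P (f.map (algebraMap N E)) ∧
      (∀ t ∈ T, P.valuation E (algebraMap N E t) ≤ 1) ∧
      ∀ n, ∀ c ∈ S, ¬ P.valuation E (algebraMap N E (x n) - algebraMap N E c) < 1 := by
  classical
  have hf0 : f ≠ 0 := by rintro rfl; simp at hdeg
  have hBfin : {w : N | f.eval w ∈ S ∧ w ∉ S}.Finite :=
    (finite_iterate_preimage hdeg 1 S).subset fun w hw => hw.1
  have hev : ∀ᶠ v : HeightOneSpectrum (𝓞 N) in cofinite,
      IntegralAt v f ∧ v.valuation N f.leadingCoeff = 1 ∧ (∀ c ∈ S, v.valuation N c ≤ 1) ∧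
      (∀ w ∈ {w : N | f.eval w ∈ S ∧ w ∉ S}, ∀ c ∈ S, v.valuation N (w - c) = 1) ∧
      ∀ (φ φ' : N ≃ₐ[ℚ] N) (p : ℕ), FrobAt v φ p → FrobAt v φ' p → φ = φ' := by
    refine (eventually_integralAt f).and ((eventually_eq_one (by simpa using hf0)).and
      (Eventually.and ?_ (Eventually.and ?_ eventually_frobAt_unique)))
    · rw [eventually_all_finset]
      exact fun c _ => eventually_le_one c
    · rw [eventually_all_finite hBfin]
      intro w hw
      rw [eventually_all_finset]
      intro c hc
      refine eventually_eq_one (sub_ne_zero.mpr ?_)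
      rintro rfl
      exact hw.2 hc
  obtain ⟨v, ⟨hfv, hlv, hSv, hBv, huniq⟩, φ, p, hp, hpv, hφ, i, rfl⟩ :=
    exists_frobenius_generator σ hev
  set j := orderOf φ with hj
  have hj0 : 0 < j := orderOf_pos φ
  set q := p ^ j with hqdef
  have hq : 1 < q := Nat.one_lt_pow hj0.ne' hp.one_lt
  obtain ⟨E, iF, iN, iG, iA, hE⟩ := exists_galois_splitting N
    (∏ c ∈ S, ((f.comp^[q + 1] X) - C c))
  obtain ⟨Q, hQ⟩ := exists_placeAbove E v
  have hpQ : Q.valuation E (p : E) < 1 := by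
    have := (hQ.lt_one_iff (p : N)).mpr hpv
    rwa [map_natCast] at this
  obtain ⟨τ, hτ⟩ := exists_frobAt Q hp hpQ
  have hτφ : τ.restrictNormal N = φ := huniq _ _ _ (hQ.frobAt_restrict hτ) hφ
  have hτk : ∀ k y, (τ ^ k) (algebraMap N E y) = algebraMap N E ((φ ^ k) y) := by
    intro k y
    rw [restrictNormal_pow, hτφ]
  have hθN : ∀ y, (τ ^ j) (algebraMap N E y) = algebraMap N E y := by
    intro y
    rw [hτk, hj, pow_orderOf_eq_one]; rfl
  have hinjE : Function.Injective (algebraMap N E) := (algebraMap N E).injective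
  set F := f.map (algebraMap N E) with hF
  have hFdeg : 1 ≤ F.natDegree := by rwa [hF, natDegree_map]
  set S' := S.image (algebraMap N E) with hS'
  have hmemS' : ∀ y, algebraMap N E y ∈ S' ↔ y ∈ S := fun y => by
    rw [hS', hinjE.mem_finset_image]
  have hFev : ∀ y, F.eval (algebraMap N E y) = algebraMap N E (f.eval y) := fun y =>
    eval_map_apply _ _
  have hsplitE : ∀ c ∈ S', ((F.comp^[q + 1] X) - C c).Splits := by
    intro c hc
    obtain ⟨c, hc', rfl⟩ := Finset.mem_image.mp hc
    have h1 : (F.comp^[q + 1] X) - C (algebraMap N E c) =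
        ((f.comp^[q + 1] X) - C c).map (algebraMap N E) := by
      rw [Polynomial.map_sub, map_iterate_comp_X, map_C]
    rw [h1]
    refine hE.of_dvd ?_ (Polynomial.map_dvd _ (Finset.dvd_prod_of_mem _ hc'))
    rw [Polynomial.map_ne_zero_iff hinjE, Finset.prod_ne_zero_iff]
    exact fun c _ => iterate_comp_sub_C_ne_zero hdeg _ _
  have hpre : {z | (fun t => F.eval t)^[q + 1] z ∈ S'}.Finite := finite_iterate_preimage hFdeg _ S'
  have hevE : ∀ᶠ P : HeightOneSpectrum (𝓞 E) in cofinite,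
      IntegralAt P F ∧
      (∀ c ∈ S', P.valuation E ((F.comp^[q + 1] X) - C c).leadingCoeff = 1) ∧
      P.valuation E (algebraMap N E (x 0)) ≤ 1 ∧
      (∀ n ∈ Finset.range (q + 2), ∀ c ∈ S', P.valuation E (algebraMap N E (x n) - c) = 1) ∧
      (∀ z ∈ {z | (fun t => F.eval t)^[q + 1] z ∈ S'}, (τ ^ j) z ≠ z →
        P.valuation E ((τ ^ j) z - z) = 1) ∧
      (∀ t ∈ T, P.valuation E (algebraMap N E t) ≤ 1) := by
    refine (eventually_integralAt F).and (Eventually.and ?_ ((eventually_le_one _).and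
      (Eventually.and ?_ (Eventually.and ?_ ?_))))
    · rw [eventually_all_finset]
      intro c _
      exact eventually_eq_one (leadingCoeff_ne_zero.mpr (iterate_comp_sub_C_ne_zero hFdeg _ _))
    · rw [eventually_all_finset]
      intro n _
      rw [eventually_all_finset]
      intro c hc
      refine eventually_eq_one (sub_ne_zero.mpr ?_)
      rintro rfl
      exact hxS n ((hmemS' _).mp hc)
    · rw [eventually_all_finite hpre]
      intro z _
      rw [eventually_imp_distrib_left]
      exact fun hz => eventually_eq_one (sub_ne_zero.mpr hz)
    · rw [eventually_all_finset]
      exact fun t _ => eventually_le_one _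
  obtain ⟨P, ⟨hFP, hlP, hx0P, hsmall, hfix, hTP⟩, ψ, p', -, -, hψ, i', hτψ⟩ :=
    exists_frobenius_generator τ hevE
  have hstab : StabilizesPlace P τ.toRingEquiv := by
    rw [hτψ]; exact hψ.stabilizes.pow i'
  refine ⟨E, iF, iN, iA, P, τ ^ i, hτk i, hstab.pow i, hFP, hTP, ?_⟩
  have key := avoid_of_frobenius F hFdeg (fun n => algebraMap N E (x n))
    (fun n => by rw [hFev, hx]) S'
    (fun c hc => by
      obtain ⟨c, hc', rfl⟩ := Finset.mem_image.mp hc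
      rw [hFev, hmemS']; exact hS c hc')
    (τ ^ j)
    (by
      rw [hF, Polynomial.map_map]
      congr 1
      exact RingHom.ext hθN)
    (fun n => hθN _) hq (P := P) (Q := Q) hsplitE (hτ.pow j)
    (fun k => by rw [hF, coeff_map, hQ]; exact hfv k)
    (by rw [hF, leadingCoeff_map, hQ.eq_one_iff]; exact hlv)
    (fun c hc => by
      obtain ⟨c, hc', rfl⟩ := Finset.mem_image.mp hc
      rw [hQ]; exact hSv c hc')
    (fun w hw hwS c hc => by
      obtain ⟨c, hc', rfl⟩ := Finset.mem_image.mp hc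
      obtain ⟨d, hd, hdw⟩ := Finset.mem_image.mp hw
      have hfd : f - C d ≠ 0 := by
        simpa using iterate_comp_sub_C_ne_zero hdeg 1 d
      obtain ⟨w, rfl⟩ := (hsplit d hd).mem_range_of_isRoot hfd (i := algebraMap N E) (x := w) (by
        rw [IsRoot, Polynomial.map_sub, map_C, eval_sub, eval_C, hdw, sub_self])
      rw [hFev, hmemS'] at hw
      rw [hmemS'] at hwS
      rw [← map_sub, (hQ.eq_one_iff _).mpr (hBv w ⟨hw, hwS⟩ c hc')]
      exact lt_irrefl _)
    (hstab.pow j) hFP hlP hx0P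
    (fun n hn c hc => by
      rw [hsmall n (Finset.mem_range.mpr (by omega)) c hc]; exact lt_irrefl _)
    (fun z hz hne => by rw [hfix z hz hne]; exact lt_irrefl _)
  exact fun n c hc => key n _ ((hmemS' c).mpr hc)

end Tree

/-! ### Recurrence of agreement in degree at least two -/

section Recurrence

open Filter

universe u

/-- If some common iterate of `f` and of its conjugate has a common fixed point with nonzero
multipliers, then agreement of an orbit with its conjugate recurs. -/
lemma recurrence_of_common_fixed {E : Type*} [Field E] [NumberField E] (f : E[X])
    (hdeg : 2 ≤ f.natDegree) (x : ℕ → E) (hx : ∀ n, x (n + 1) = f.eval (x n))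
    (hinj : Function.Injective x) (σ : E ≃+* E) (hS : {n | x n = σ (x n)}.Infinite)
    {r : ℕ} (hr : 0 < r) {z : AlgebraicClosure E} (h1 : (f.comp^[r] X).aeval z = z)
    (h2 : ((f.map (σ : E →+* E)).comp^[r] X).aeval z = z)
    (h3 : (derivative (f.comp^[r] X)).aeval z ≠ 0)
    (h4 : (derivative ((f.map (σ : E →+* E)).comp^[r] X)).aeval z ≠ 0) :
    ∃ k > 0, {n | x n = σ (x n) ∧ x (n + k) = σ (x (n + k))}.Infinite := by
  have hzint : IsIntegral E z := (Algebra.IsAlgebraic.isAlgebraic z).isIntegral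
  let M := IntermediateField.adjoin E {z}
  have : FiniteDimensional E M := IntermediateField.adjoin.finiteDimensional hzint
  have : NumberField M := NumberField.of_module_finite E M
  let z' : M := IntermediateField.AdjoinSimple.gen E z
  have hev : ∀ g : E[X], (((g.map (algebraMap E M)).eval z' : M) : AlgebraicClosure E) = g.aeval z := by
    intro g
    rw [eval_map_algebraMap]
    have := aeval_algebraMap_apply (AlgebraicClosure E) z' g
    exact this.symm
  have hy : ∀ n, σ (x (n + 1)) = (f.map (σ : E →+* E)).eval (σ (x n)) := by
    intro n
    rw [hx]
    exact (eval_map_apply (f := (σ : E →+* E)) (p := f) (x n)).symm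
  obtain ⟨m, -, hm⟩ := exists_infinite_class hS r hr 0
  have hi : Function.Injective (algebraMap E M) := (algebraMap E M).injective
  obtain ⟨k, hk, hinf⟩ := common_fixed_case ((f.comp^[r] X).map (algebraMap E M))
    (((f.map (σ : E →+* E)).comp^[r] X).map (algebraMap E M))
    (by
      rw [natDegree_map, natDegree_iterate_comp, natDegree_X, mul_one]
      exact hdeg.trans (Nat.le_self_pow hr.ne' _))
    z' (Subtype.ext (by rw [hev, h1]; rfl)) (Subtype.ext (by rw [hev, h2]; rfl))
    (fun h => h3 (by rw [← hev, ← derivative_map, h]; rfl))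
    (fun h => h4 (by rw [← hev, ← derivative_map, h]; rfl))
    (fun j => algebraMap E M (x (m + r * j))) (fun j => algebraMap E M (σ (x (m + r * j))))
    (fun j => by
      rw [eval_map_apply, (iterate_comp_orbit f x hx r _).1, mul_add, mul_one, add_assoc])
    (fun j => by
      rw [eval_map_apply, (iterate_comp_orbit _ (fun n => σ (x n)) hy r _).1, mul_add, mul_one, add_assoc])
    (fun a b hab => by
      have := hinj (hi hab)
      exact Nat.eq_of_mul_eq_mul_left hr (by omega))
    (hm.mono fun j hj => congrArg (algebraMap E M) hj)
  refine ⟨r * k, Nat.mul_pos hr hk, ?_⟩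
  have hinj' : Function.Injective fun j => m + r * j := fun a b hab =>
    Nat.eq_of_mul_eq_mul_left hr (by simpa using hab)
  refine (hinf.image hinj'.injOn).mono ?_
  rintro _ ⟨j, ⟨hj1, hj2⟩, rfl⟩
  refine ⟨hi hj1, ?_⟩
  have := hi hj2
  rwa [mul_add, ← add_assoc] at this

/-- The union of the cycles through the periodic critical points in `E` is finite and invariant. -/
lemma exists_critical_cycles {E : Type*} [Field E] (f : E[X]) :
    ∃ S : Finset E, (∀ c ∈ S, f.eval c ∈ S) ∧
      (∀ c ∈ S, ∃ k > 0, (fun t => f.eval t)^[k] c = c) ∧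
      ∀ c ∈ (derivative f).roots, (∃ k > 0, (fun t => f.eval t)^[k] c = c) → c ∈ S := by
  classical
  let A : Set E := {c | c ∈ (derivative f).roots ∧ ∃ k > 0, (fun t => f.eval t)^[k] c = c}
  have hA : A.Finite := ((derivative f).roots.toFinset.finite_toSet).subset fun c hc => by
    simpa using hc.1
  let B : Set E := ⋃ c ∈ A, Set.range fun m => (fun t => f.eval t)^[m] c
  have hB : B.Finite := by
    refine hA.biUnion ?_
    rintro c ⟨-, k, hk, hkc⟩
    refine ((Finset.range k).finite_toSet.image fun m => (fun t => f.eval t)^[m] c).subset ?_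
    rintro _ ⟨m, rfl⟩
    exact ⟨m % k, by simpa using Nat.mod_lt _ hk,
      (Function.IsPeriodicPt.iterate_mod_apply (f := fun t => f.eval t) hkc m)⟩
  refine ⟨hB.toFinset, ?_, ?_, ?_⟩
  · intro c hc
    rw [Set.Finite.mem_toFinset] at hc ⊢
    simp only [B, Set.mem_iUnion] at hc ⊢
    obtain ⟨c₀, hc₀, m, rfl⟩ := hc
    exact ⟨c₀, hc₀, m + 1, Function.iterate_succ_apply' _ _ _⟩
  · intro c hc
    rw [Set.Finite.mem_toFinset] at hc
    simp only [B, Set.mem_iUnion] at hc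
    obtain ⟨c₀, ⟨-, k, hk, hkc⟩, m, rfl⟩ := hc
    refine ⟨k, hk, ?_⟩
    beta_reduce
    rw [← Function.iterate_add_apply, add_comm, Function.iterate_add_apply, hkc]
  · intro c hc hper
    rw [Set.Finite.mem_toFinset]
    simp only [B, Set.mem_iUnion]
    exact ⟨c, ⟨hc, hper⟩, 0, rfl⟩

/-- Recurrence of agreement, when the critical points and the preimages of the critical cycles
are rational. -/
lemma recurrence_of_splits {N : Type u} [Field N] [NumberField N] [IsGalois ℚ N] (f : N[X])
    (hdeg : 2 ≤ f.natDegree) (x : ℕ → N) (hx : ∀ n, x (n + 1) = f.eval (x n))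
    (hinj : Function.Injective x) (σ : N ≃ₐ[ℚ] N) (hinf : {n | x n = σ (x n)}.Infinite)
    (hf' : (derivative f).Splits)
    (S : Finset N) (hS : ∀ c ∈ S, f.eval c ∈ S)
    (hSper : ∀ c ∈ S, ∃ k > 0, (fun t => f.eval t)^[k] c = c)
    (hScrit : ∀ c ∈ (derivative f).roots, (∃ k > 0, (fun t => f.eval t)^[k] c = c) → c ∈ S)
    (hsplit : ∀ c ∈ S, (f - C c).Splits) :
    ∃ k > 0, {n | x n = σ (x n) ∧ x (n + k) = σ (x (n + k))}.Infinite := by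
  classical
  have hxk : ∀ n k, x (n + k) = (fun t => f.eval t)^[k] (x n) := by
    intro n k
    induction k with
    | zero => rfl
    | succ k ih => rw [← add_assoc, hx, ih, Function.iterate_succ_apply']
  have hxS : ∀ n, x n ∉ S := by
    intro n hn
    obtain ⟨k, hk, hkn⟩ := hSper _ hn
    rw [← hxk] at hkn
    have := hinj hkn
    omega
  obtain ⟨E, iF, iN, iA, P, σ', hσ', hstab, hfP, hT, havoid⟩ :=
    exists_avoiding_place f (by omega) x hx S hS hxS hsplit σ
      (insert (x 0) (derivative f).roots.toFinset)
  have hi : Function.Injective (algebraMap N E) := (algebraMap N E).injective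
  have hiff : ∀ n, algebraMap N E (x n) = σ' (algebraMap N E (x n)) ↔ x n = σ (x n) := by
    intro n
    rw [hσ', hi.eq_iff]
  have hcr : ∀ c ∈ (derivative (f.map (algebraMap N E))).roots,
      ∃ d ∈ (derivative f).roots, algebraMap N E d = c := by
    intro c hc
    rw [derivative_map, hf'.roots_map, Multiset.mem_map] at hc
    exact hc
  have hit : ∀ k y, (fun t => (f.map (algebraMap N E)).eval t)^[k] (algebraMap N E y) =
      algebraMap N E ((fun t => f.eval t)^[k] y) := by
    intro k y
    rw [← iterate_comp_X_eval, ← iterate_comp_X_eval, ← map_iterate_comp_X, eval_map_apply]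
  have hdeg' : 2 ≤ (f.map (algebraMap N E)).natDegree := by rwa [natDegree_map]
  have hx' : ∀ n, algebraMap N E (x (n + 1)) =
      (f.map (algebraMap N E)).eval (algebraMap N E (x n)) := fun n => by
    rw [eval_map_apply, hx]
  have hinf' : {n | algebraMap N E (x n) = σ'.toRingEquiv (algebraMap N E (x n))}.Infinite :=
    hinf.mono fun n hn => (hiff n).mpr hn
  have key : ∃ k > 0, {n | algebraMap N E (x n) = σ'.toRingEquiv (algebraMap N E (x n)) ∧
      algebraMap N E (x (n + k)) = σ'.toRingEquiv (algebraMap N E (x (n + k)))}.Infinite := by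
    rcases local_dichotomy_field P (f.map (algebraMap N E)) hdeg'
      (fun n => algebraMap N E (x n)) hx' hfP (hT _ (Finset.mem_insert_self _ _))
      σ'.toRingEquiv hstab hinf'
      (by rw [derivative_map]; exact hf'.map _)
      (fun c hc => by
        obtain ⟨d, hd, rfl⟩ := hcr c hc
        exact hT d (Finset.mem_insert_of_mem (by simpa using hd)))
      (fun c hc hper n => by
        obtain ⟨d, hd, rfl⟩ := hcr c hc
        obtain ⟨k, hk, hkd⟩ := hper
        rw [hit] at hkd
        exact havoid n d (hScrit d hd ⟨k, hk, hi hkd⟩)) with h | ⟨r, hr, z, h1, h2, h3, h4⟩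
    · exact h
    · exact recurrence_of_common_fixed (f.map (algebraMap N E)) hdeg'
        (fun n => algebraMap N E (x n)) hx' (hi.comp hinj) σ'.toRingEquiv hinf' hr h1 h2 h3 h4
  obtain ⟨k, hk, h⟩ := key
  exact ⟨k, hk, h.mono fun n hn => ⟨(hiff n).mp hn.1, (hiff _).mp hn.2⟩⟩

/-- Recurrence of agreement between an infinite orbit and its conjugate, in degree at least two. -/
lemma recurrence_of_two_le {N : Type u} [Field N] [NumberField N] [IsGalois ℚ N] (f : N[X])
    (hdeg : 2 ≤ f.natDegree) (x : ℕ → N) (hx : ∀ n, x (n + 1) = f.eval (x n))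
    (hinj : Function.Injective x) (σ : N ≃ₐ[ℚ] N) (hinf : {n | x n = σ (x n)}.Infinite) :
    ∃ k > 0, {n | x n = σ (x n) ∧ x (n + k) = σ (x (n + k))}.Infinite := by
  classical
  -- A first extension makes the critical points rational.
  obtain ⟨E, iF, iN, iG, iA, hE⟩ := exists_galois_splitting N (derivative f)
  set g := f.map (algebraMap N E) with hg
  have hgdeg : 2 ≤ g.natDegree := by rwa [hg, natDegree_map]
  obtain ⟨S, hS, hSper, hScrit⟩ := exists_critical_cycles g
  -- A second one makes the preimages of the critical cycles rational.
  obtain ⟨E', iF', iN', iG', iA', hE'⟩ := exists_galois_splitting E (∏ c ∈ S, (g - C c))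
  let j : E →+* E' := algebraMap E E'
  have hj : Function.Injective j := j.injective
  let i : N →+* E' := j.comp (algebraMap N E)
  have hi : Function.Injective i := i.injective
  let σ₁ : E ≃ₐ[ℚ] E := σ.liftNormal E
  let σ₂ : E' ≃ₐ[ℚ] E' := σ₁.liftNormal E'
  have hσ : ∀ y, σ₂ (i y) = i (σ y) := by
    intro y
    have h1 : σ₂ (algebraMap E E' (algebraMap N E y)) = algebraMap E E' (σ₁ (algebraMap N E y)) :=
      σ₁.liftNormal_commutes E' _
    have h2 : σ₁ (algebraMap N E y) = algebraMap N E (σ y) := σ.liftNormal_commutes E y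
    rw [h2] at h1
    exact h1
  have hiff : ∀ n, i (x n) = σ₂ (i (x n)) ↔ x n = σ (x n) := by
    intro n
    rw [hσ, hi.eq_iff]
  have hgs : (derivative g).Splits := by rw [hg, derivative_map]; exact hE
  have hit : ∀ k y, (fun t => (g.map j).eval t)^[k] (j y) = j ((fun t => g.eval t)^[k] y) := by
    intro k y
    rw [← iterate_comp_X_eval, ← iterate_comp_X_eval, ← map_iterate_comp_X, eval_map_apply]
  obtain ⟨k, hk, h⟩ := recurrence_of_splits (g.map j) (by rwa [natDegree_map])
    (fun n => i (x n))
    (fun n => by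
      change j (algebraMap N E (x (n + 1))) = (g.map j).eval (j (algebraMap N E (x n)))
      rw [eval_map_apply, hg, eval_map_apply, hx])
    (hi.comp hinj) σ₂ (hinf.mono fun n hn => (hiff n).mpr hn)
    (by rw [derivative_map]; exact hgs.map j)
    (S.image j)
    (fun c hc => by
      obtain ⟨d, hd, rfl⟩ := Finset.mem_image.mp hc
      rw [eval_map_apply]
      exact Finset.mem_image_of_mem _ (hS d hd))
    (fun c hc => by
      obtain ⟨d, hd, rfl⟩ := Finset.mem_image.mp hc
      obtain ⟨k, hk, hkd⟩ := hSper d hd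
      exact ⟨k, hk, by rw [hit, hkd]⟩)
    (fun c hc hper => by
      rw [derivative_map, hgs.roots_map, Multiset.mem_map] at hc
      obtain ⟨d, hd, rfl⟩ := hc
      obtain ⟨k, hk, hkd⟩ := hper
      rw [hit] at hkd
      exact Finset.mem_image_of_mem _ (hScrit d hd ⟨k, hk, hj hkd⟩))
    (fun c hc => by
      obtain ⟨d, hd, rfl⟩ := Finset.mem_image.mp hc
      have h1 : g.map j - C (j d) = (g - C d).map j := by rw [Polynomial.map_sub, map_C]
      rw [h1]
      refine hE'.of_dvd ?_ (Polynomial.map_dvd _ (Finset.dvd_prod_of_mem _ hd))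
      rw [Polynomial.map_ne_zero_iff hj, Finset.prod_ne_zero_iff]
      intro c _
      have := iterate_comp_sub_C_ne_zero (f := g) (by omega) 1 c
      simpa using this)
  exact ⟨k, hk, h.mono fun n hn => ⟨(hiff n).mp hn.1, (hiff _).mp hn.2⟩⟩

end Recurrence

/-! ### Eventual periodicity of the fixed times -/

section Assembly

open Filter

universe u

/-- A property inherited by `n + k` from `n` stabilizes on each residue class modulo `k`. -/
lemma eventually_periodic_of_imp (p : ℕ → Prop) {k : ℕ} (hk : 0 < k) (hp : ∀ n, p n → p (n + k)) :
    ∃ M, ∀ n > M, (p (n + k) ↔ p n) := by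
  classical
  have hp' : ∀ n t, p n → p (n + k * t) := by
    intro n t h
    induction t with
    | zero => exact h
    | succ t ih => rw [mul_add, mul_one, ← add_assoc]; exact hp _ ih
  have h1 : ∀ i : ℕ, ∃ M, (∃ m, m % k = i ∧ p m) → M % k = i ∧ p M := by
    intro i
    by_cases h : ∃ m, m % k = i ∧ p m
    · exact ⟨h.choose, fun _ => h.choose_spec⟩
    · exact ⟨0, fun h' => absurd h' h⟩
  choose M hM using h1
  refine ⟨(Finset.range k).sup M, fun n hn => ⟨fun h => ?_, hp n⟩⟩
  obtain ⟨h2, h3⟩ := hM (n % k) ⟨n + k, Nat.add_mod_right n k, h⟩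
  have h4 : M (n % k) ≤ (Finset.range k).sup M :=
    Finset.le_sup (f := M) (Finset.mem_range.mpr (Nat.mod_lt _ hk))
  have h5 : M (n % k) + k * ((n - M (n % k)) / k) = n := by
    have : k ∣ n - M (n % k) := (Nat.modEq_iff_dvd' (by omega)).mp h2
    rw [Nat.mul_div_cancel' this]; omega
  rw [← h5]
  exact hp' _ _ h3

/-- A polynomial of degree one is étale at almost all places. -/
lemma recurrence_of_natDegree_one {N : Type*} [Field N] [NumberField N] [IsGalois ℚ N] (f : N[X])
    (hdeg : f.natDegree = 1) (x : ℕ → N) (hx : ∀ n, x (n + 1) = f.eval (x n))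
    (σ : N ≃ₐ[ℚ] N) (hinf : {n | x n = σ (x n)}.Infinite) :
    ∃ k > 0, {n | x n = σ (x n) ∧ x (n + k) = σ (x (n + k))}.Infinite := by
  set g := f.map (σ : N →+* N) with hg
  have hgdeg : g.natDegree = 1 := by rw [hg, natDegree_map, hdeg]
  have hder : ∀ h : N[X], h.natDegree = 1 → ∀ t, (derivative h).eval t = h.leadingCoeff := by
    intro h hh t
    have h1 : h = C (h.coeff 1) * X + C (h.coeff 0) := eq_X_add_C_of_natDegree_le_one hh.le
    have h2 : (derivative h).eval t = h.coeff 1 := by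
      conv_lhs => rw [h1]
      simp
    rw [h2, leadingCoeff, hh]
  have hlead : ∀ h : N[X], h.natDegree = 1 → h.leadingCoeff ≠ 0 := by
    intro h hh
    rw [leadingCoeff_ne_zero]
    rintro rfl
    simp at hh
  have hev : ∀ᶠ v : HeightOneSpectrum (𝓞 N) in cofinite,
      (IntegralAt v f ∧ IntegralAt v g) ∧ (v.valuation N (x 0) ≤ 1 ∧ v.valuation N (σ (x 0)) ≤ 1) ∧
      v.valuation N f.leadingCoeff = 1 ∧ v.valuation N g.leadingCoeff = 1 :=
    ((eventually_integralAt f).and (eventually_integralAt g)).and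
      (((eventually_le_one _).and (eventually_le_one _)).and
        ((eventually_eq_one (hlead f hdeg)).and (eventually_eq_one (hlead g hgdeg))))
  obtain ⟨v, ⟨⟨hf1, hg1⟩, ⟨hx0, hy0⟩, hlf, hlg⟩, -⟩ := exists_frobenius_generator 1 hev
  exact etale_case_field v f g x (fun n => σ (x n)) hx
    (fun n => by
      change (σ : N →+* N) (x (n + 1)) = g.eval ((σ : N →+* N) (x n))
      rw [hg, eval_map_apply, hx])
    hf1 hg1 hx0 hy0 0 (fun n _ => by rw [hder f hdeg, hlf]) (fun n _ => by rw [hder g hgdeg, hlg])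
    hinf

/-- The set of times at which an infinite orbit is fixed by `σ` is eventually periodic: a single
recurrence at infinitely many times forces an iterate of `f` to equal its conjugate. -/
lemma fixed_times_eventually_periodic {N : Type u} [Field N] [NumberField N] [IsGalois ℚ N]
    (f : N[X]) (x : ℕ → N) (hx : ∀ n, x (n + 1) = f.eval (x n)) (hinj : Function.Injective x)
    (σ : N ≃ₐ[ℚ] N) :
    ∃ M k, 0 < k ∧ ∀ n > M, (x (n + k) = σ (x (n + k)) ↔ x n = σ (x n)) := by
  by_cases hinf : {n | x n = σ (x n)}.Infinite
  · have key : ∃ k > 0, {n | x n = σ (x n) ∧ x (n + k) = σ (x (n + k))}.Infinite := by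
      rcases Nat.lt_or_ge 1 f.natDegree with h | h
      · exact recurrence_of_two_le f h x hx hinj σ hinf
      rcases h.lt_or_eq with h | h
      · exfalso
        have h1 : f = C (f.coeff 0) := eq_C_of_natDegree_eq_zero (by omega)
        have h2 : x (0 + 1) = x (1 + 1) := by rw [hx, hx, h1, eval_C, eval_C]
        exact absurd (hinj h2) (by norm_num)
      · exact recurrence_of_natDegree_one f h x hx σ hinf
    obtain ⟨k, hk, hkinf⟩ := key
    have hy : ∀ n, σ (x (n + 1)) = (f.map (σ : N →+* N)).eval (σ (x n)) := by
      intro n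
      change (σ : N →+* N) (x (n + 1)) = _
      rw [hx]
      exact (eval_map_apply (f := (σ : N →+* N)) (p := f) (x n)).symm
    have hF : ∀ n, (f.comp^[k] X).eval (x n) = x (n + k) := fun n =>
      (iterate_comp_orbit f x hx k n).1
    have hG : ∀ n, ((f.map (σ : N →+* N)).comp^[k] X).eval (σ (x n)) = σ (x (n + k)) := fun n =>
      (iterate_comp_orbit _ (fun n => σ (x n)) hy k n).1
    have hFG : f.comp^[k] X = (f.map (σ : N →+* N)).comp^[k] X := by
      refine Polynomial.eq_of_infinite_eval_eq _ _ ((hkinf.image hinj.injOn).mono ?_)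
      rintro _ ⟨n, ⟨h1, h2⟩, rfl⟩
      have h3 := hG n
      rw [← h1, ← h2] at h3
      exact (hF n).trans h3.symm
    obtain ⟨M, hM⟩ := eventually_periodic_of_imp (fun n => x n = σ (x n)) hk (fun n hn => by
      have h3 := hG n
      rw [← hn, ← hFG, hF] at h3
      exact h3)
    exact ⟨M, k, hk, hM⟩
  · rw [Set.not_infinite] at hinf
    obtain ⟨M, hM⟩ := hinf.bddAbove
    refine ⟨M, 1, one_pos, fun n hn => ⟨fun h => ?_, fun h => ?_⟩⟩
    · exact absurd (hM h) (by omega)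
    · exact absurd (hM h) (by omega)

/-- By Galois theory `K(b)` is determined by the automorphisms fixing `b`. -/
lemma mem_adjoin_of_fixed {K N : Type*} [Field K] [Field N] [Algebra K N] [FiniteDimensional K N]
    [IsGalois K N] {b c : N} (h : ∀ σ : N ≃ₐ[K] N, b = σ b → c = σ c) :
    c ∈ IntermediateField.adjoin K {b} := by
  rw [← IsGalois.fixedField_fixingSubgroup (IntermediateField.adjoin K {b}),
    IntermediateField.mem_fixedField_iff]
  intro σ hσ
  rw [IntermediateField.mem_fixingSubgroup_iff] at hσ
  exact (h σ (hσ b (IntermediateField.mem_adjoin_simple_self K b)).symm).symm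

end Assembly

/-- For number fields `K ⊆ L` with `L/K` finite, a polynomial `f ∈ L[x]` and
`a ∈ L`, the degree sequence `[K(f⁽ⁿ⁾(a)) : K]` of the iterates of `f` at `a`
is virtually periodic. -/
theorem iterate_degree_seq_virtually_periodic {K L : Type*} [Field K] [Field L]
    [NumberField K] [NumberField L] [Algebra K L] [FiniteDimensional K L]
    (f : Polynomial L) (a : L) :
    ∃ N r : ℕ, 0 < r ∧ ∀ n > N,
      Module.finrank K
          ↥(IntermediateField.adjoin K {(fun b => f.eval b)^[n + r] a}) =
        Module.finrank K
          ↥(IntermediateField.adjoin K {(fun b => f.eval b)^[n] a}) := by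
  classical
  set x : ℕ → L := fun n => (fun b => f.eval b)^[n] a with hxdef
  have hx : ∀ n, x (n + 1) = f.eval (x n) := fun n => Function.iterate_succ_apply' _ _ _
  change ∃ N r : ℕ, 0 < r ∧ ∀ n > N,
    Module.finrank K ↥(IntermediateField.adjoin K {x (n + r)}) =
      Module.finrank K ↥(IntermediateField.adjoin K {x n})
  by_cases hinj : Function.Injective x
  · obtain ⟨N, iF, iN, iG, iA, -⟩ := exists_galois_splitting L (1 : L[X])
    let i : Algebra K N := ((algebraMap L N).comp (algebraMap K L)).toAlgebra
    have hst : IsScalarTower K L N := IsScalarTower.of_algebraMap_eq fun _ => rfl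
    have hfin : FiniteDimensional K N := FiniteDimensional.right ℚ K N
    have hgal : IsGalois K N := IsGalois.tower_top_of_isGalois ℚ K N
    let y : ℕ → N := fun n => algebraMap L N (x n)
    have hiN : Function.Injective (algebraMap L N) := (algebraMap L N).injective
    have hdeg : ∀ n, Module.finrank K ↥(IntermediateField.adjoin K {x n}) =
        Module.finrank K ↥(IntermediateField.adjoin K {y n}) := by
      intro n
      rw [IntermediateField.adjoin.finrank (IsIntegral.of_finite K (x n)),
        IntermediateField.adjoin.finrank (IsIntegral.of_finite K (y n)),
        minpoly.algebraMap_eq hiN]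
    have hper : ∀ σ : N ≃ₐ[K] N, ∃ M k, 0 < k ∧
        ∀ n > M, (y (n + k) = σ (y (n + k)) ↔ y n = σ (y n)) := fun σ =>
      fixed_times_eventually_periodic (f.map (algebraMap L N)) y
        (fun n => by
          change algebraMap L N (x (n + 1)) = (f.map (algebraMap L N)).eval (algebraMap L N (x n))
          rw [eval_map_apply, hx])
        (hiN.comp hinj) (AlgEquiv.restrictScalars ℚ σ)
    choose M k hk hMk using hper
    have hmul : ∀ σ t, ∀ n > M σ, (y (n + k σ * t) = σ (y (n + k σ * t)) ↔ y n = σ (y n)) := by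
      intro σ t n hn
      induction t with
      | zero => rfl
      | succ t ih =>
        rw [mul_add, mul_one, ← add_assoc, hMk σ _ (by omega), ih]
    refine ⟨Finset.univ.sup M, ∏ σ, k σ, Finset.prod_pos fun σ _ => hk σ, fun n hn => ?_⟩
    have hiff : ∀ σ : N ≃ₐ[K] N,
        y (n + ∏ σ, k σ) = σ (y (n + ∏ σ, k σ)) ↔ y n = σ (y n) := by
      intro σ
      obtain ⟨t, ht⟩ := Finset.dvd_prod_of_mem k (Finset.mem_univ σ)
      rw [ht]
      exact hmul σ t n ((Finset.le_sup (Finset.mem_univ σ)).trans_lt hn)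
    rw [hdeg, hdeg]
    have h1 : IntermediateField.adjoin K {y (n + ∏ σ, k σ)} = IntermediateField.adjoin K {y n} := by
      apply le_antisymm
      · rw [IntermediateField.adjoin_simple_le_iff]
        exact mem_adjoin_of_fixed fun σ => (hiff σ).mpr
      · rw [IntermediateField.adjoin_simple_le_iff]
        exact mem_adjoin_of_fixed fun σ => (hiff σ).mp
    rw [h1]
  · obtain ⟨b, c, hbc, hne⟩ := Function.not_injective_iff.mp hinj
    wlog hlt : b < c generalizing b c
    · exact this c b hbc.symm hne.symm (by omega)
    refine ⟨b, c - b, by omega, fun n hn => ?_⟩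
    have hadd : ∀ m, x (c + m) = x (b + m) := by
      intro m
      induction m with
      | zero => exact hbc.symm
      | succ m ih => rw [← add_assoc, ← add_assoc, hx, hx, ih]
    have := hadd (n - b)
    rw [show c + (n - b) = n + (c - b) by omega, show b + (n - b) = n by omega] at this
    rw [this]
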